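/- arXiv:2408.06020 — 3 statements merged into one kernel-verified Lean document; each statement's English description precedes it below -/
import Mathlib

section
/- g_r(k) > f(k) holds in each of the following six cases, and in each case the maximum defining g_r(k) is attained by the indicated vector: (1) r = 2, k = 3, attained by a = (1,1); (2) r = 2, k = 4, attained by a = (1,2); (3) r = 2, k = 5, attained by a = (0,4); (4) r = 3, k = 3, attained by a = (0,0,2); (5) r = 3, k = 4, attained by a = (0,0,3); (6) r = 4, k = 3, attained by a = (0,0,0,2). -/
open Finset

def HyperUniform {V : Type*} (k : ℕ) (H : Finset (Finset V)) : Prop := ∀ e ∈ H, e.card = k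

def IsPM {V : Type*} [Fintype V] (H M : Finset (Finset V)) : Prop :=
  M ⊆ H ∧ (∀ e ∈ M, ∀ f ∈ M, e ≠ f → Disjoint e f) ∧ ∀ v : V, ∃ e ∈ M, v ∈ e

def hdeg {V : Type*} [DecidableEq V] (H : Finset (Finset V)) (v : V) : ℕ :=
  (H.filter (fun e => v ∈ e)).card

def IsVec (k r : ℕ) (a : ℕ → ℕ) : Prop :=
  (∀ i j : ℕ, i ≤ j → j < r → a i ≤ a j) ∧ (∑ i ∈ Finset.range r, a i) = k - 1

noncomputable def gfun (k r : ℕ) (a : ℕ → ℕ) : ℝ :=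
  (((k - 1).factorial : ℝ) / (∏ i ∈ Finset.range r, ((a i).factorial : ℝ))) *
    (∏ i ∈ Finset.range r, (((r * a i + 1 : ℕ) : ℝ) / ((r * k : ℕ) : ℝ)) ^ (a i)) *
    (1 + ((a 0 : ℝ) / ((r * a 0 + 1 : ℕ) : ℝ)) *
      ∑ i ∈ Finset.Ico 1 r, ((r * a i + 1 : ℕ) : ℝ) / ((a i + 1 : ℕ) : ℝ))

noncomputable def gThr (k r : ℕ) : ℝ :=
  sSup {x : ℝ | ∃ a : ℕ → ℕ, IsVec k r a ∧ x = gfun k r a}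

noncomputable def mThr (k n : ℕ) : ℕ :=
  sInf {m : ℕ | ∀ H : Finset (Finset (Fin n)), HyperUniform k H →
    (∀ v : Fin n, m ≤ hdeg H v) → ∃ M, IsPM H M}

noncomputable def fThr (k : ℕ) : ℝ :=
  Filter.limsup (fun n : ℕ => (mThr k n : ℝ) / ((n - 1).choose (k - 1) : ℝ))
    (Filter.atTop ⊓ Filter.principal {n : ℕ | k ∣ n})

/-!
The values of `gThr` are maxima over finitely many vectors, so everything rests on the upper bounds
`fThr 3 ≤ 5/9`, `fThr 4 ≤ 37/64` and `fThr 5 ≤ 16/25`, where `37/64 = 1 - (3/4)^3` and where `16/25`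
is cruder than the true value `1 - (4/5)^4` but suffices.

Let `H` be `(r + 1)`-uniform on `n` vertices with degrees above `c * n ^ r / r!`, where `c > 1/2`.
Any two vertices then have many common neighbouring `r`-tuples, so a greedy choice gives a small
family of disjoint absorbers which can swallow any small leftover set. It remains to show that a
maximum matching leaves few vertices of large degree uncovered. Otherwise blow up: consider the
tuples, in positions of a random bounded set of blocks, which are common neighbours of many
uncovered vertices. By linear programming duality, either fewer edges can be exchanged for more
edges through uncovered vertices, against maximality, or all these tuples have weight at least `1`
under some weight function of small total. The number of such tuples is then at most the
probability that a sum of `r` independent nonnegative variables with small mean reaches `1`, and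
Samuels-type bounds for this probability contradict the degree assumption.
-/

/-! ### Tail probabilities of sums of two-point variables -/

/-- A centred random variable with at most two values, `e ≥ 0` with probability `p` and `-c ≤ 0`
with probability `1 - p`, bounded below by `-1`. These are the extreme points of the set of
centred variables that are at least `-1`. -/
structure CenteredTwoPoint where
  p : ℝ
  c : ℝ
  e : ℝ
  p_nonneg : 0 ≤ p
  p_le_one : p ≤ 1
  c_nonneg : 0 ≤ c
  c_le_one : c ≤ 1
  e_nonneg : 0 ≤ e
  mean_zero : p * e = (1 - p) * c

namespace CenteredTwoPoint

/-- The expectation of `h` applied to a two-point variable. -/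
def expect (A : CenteredTwoPoint) (h : ℝ → ℝ) : ℝ := A.p * h A.e + (1 - A.p) * h (-A.c)

/-- The probability that the sum of three independent two-point variables is at least `1`. -/
noncomputable def tail (A B C : CenteredTwoPoint) : ℝ :=
  A.expect fun x => B.expect fun y => C.expect fun z => if 1 ≤ x + y + z then 1 else 0

variable (A B C : CenteredTwoPoint)

theorem expect_sum {ι : Type*} (s : Finset ι) (h : ι → ℝ → ℝ) :
    A.expect (fun x => ∑ i ∈ s, h i x) = ∑ i ∈ s, A.expect (h i) := by
  simp only [expect, mul_sum, sum_add_distrib]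

theorem expect_comm (h : ℝ → ℝ → ℝ) :
    A.expect (fun x => B.expect (h x)) = B.expect fun y => A.expect fun x => h x y := by
  simp only [expect]
  ring

theorem tail_swap_left : tail B A C = tail A B C := by
  simp only [tail, expect_comm B A, add_comm, add_left_comm]

theorem tail_swap_right : tail A C B = tail A B C := by
  simp only [tail, expect_comm C B, add_right_comm]

theorem tail_eq : tail A B C =
    A.p * B.p * C.p * (if 1 ≤ A.e + B.e + C.e then 1 else 0) +
    A.p * B.p * (1 - C.p) * (if 1 + C.c ≤ A.e + B.e then 1 else 0) +
    A.p * (1 - B.p) * C.p * (if 1 + B.c ≤ A.e + C.e then 1 else 0) +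
    (1 - A.p) * B.p * C.p * (if 1 + A.c ≤ B.e + C.e then 1 else 0) +
    A.p * (1 - B.p) * (1 - C.p) * (if 1 + B.c + C.c ≤ A.e then 1 else 0) +
    (1 - A.p) * B.p * (1 - C.p) * (if 1 + A.c + C.c ≤ B.e then 1 else 0) +
    (1 - A.p) * (1 - B.p) * C.p * (if 1 + A.c + B.c ≤ C.e then 1 else 0) := by
  have hnone : ¬ 1 ≤ -A.c + -B.c + -C.c := by
    linarith [A.c_nonneg, B.c_nonneg, C.c_nonneg]
  have h₁ : 1 ≤ A.e + -B.c + -C.c ↔ 1 + B.c + C.c ≤ A.e := by constructor <;> intro h <;> linarith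
  have h₂ : 1 ≤ -A.c + B.e + -C.c ↔ 1 + A.c + C.c ≤ B.e := by constructor <;> intro h <;> linarith
  have h₃ : 1 ≤ -A.c + -B.c + C.e ↔ 1 + A.c + B.c ≤ C.e := by constructor <;> intro h <;> linarith
  have h₁₂ : 1 ≤ A.e + B.e + -C.c ↔ 1 + C.c ≤ A.e + B.e := by constructor <;> intro h <;> linarith
  have h₁₃ : 1 ≤ A.e + -B.c + C.e ↔ 1 + B.c ≤ A.e + C.e := by constructor <;> intro h <;> linarith
  have h₂₃ : 1 ≤ -A.c + B.e + C.e ↔ 1 + A.c ≤ B.e + C.e := by constructor <;> intro h <;> linarith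
  simp only [tail, expect, hnone, h₁, h₂, h₃, h₁₂, h₁₃, h₂₃, if_false]
  ring

variable {A B C}

theorem p_mul_one_add_e_le : A.p * (1 + A.e) ≤ 1 := by
  nlinarith [A.mean_zero, mul_nonneg (sub_nonneg.2 A.p_le_one) (sub_nonneg.2 A.c_le_one)]

theorem p_mul_le_c {x : ℝ} (hx : x ≤ A.e) : A.p * (A.c + x) ≤ A.c := by
  nlinarith [A.mean_zero, mul_le_mul_of_nonneg_left hx A.p_nonneg]

theorem p_le_half (h : 1 ≤ A.e) : A.p ≤ 1 / 2 := by
  nlinarith [A.p_mul_one_add_e_le, A.p_nonneg]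

end CenteredTwoPoint

/-- The minimum is attained at `x = y = z = 1 / 4`. -/
theorem le_prod_one_sub {x y z : ℝ} (hx₀ : 0 ≤ x) (hy₀ : 0 ≤ y) (hz₀ : 0 ≤ z)
    (hx : 2 * x + y + z ≤ 1) (hy : x + 2 * y + z ≤ 1) (hz : x + y + 2 * z ≤ 1) :
    27 / 64 ≤ (1 - x) * (1 - y) * (1 - z) := by
  wlog hxy : y ≤ x generalizing x y
  · linarith [this hy₀ hx₀ (by linarith) (by linarith) (by linarith) (le_of_not_ge hxy)]
  wlog hxz : z ≤ x generalizing x z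
  · linarith [this hx₀ hz₀ (by linarith) (by linarith) (by linarith) (by linarith)
      (le_of_not_ge hxz)]
  rcases le_total x (1 / 4) with hx₄ | hx₄
  · calc (27 / 64 : ℝ) = (1 - 1 / 4) * ((1 - 1 / 4) * (1 - 1 / 4)) := by norm_num
      _ ≤ (1 - x) * ((1 - y) * (1 - z)) := by gcongr <;> linarith
      _ = (1 - x) * (1 - y) * (1 - z) := by ring
  rcases le_total x (1 / 3) with hx₃ | hx₃
  · have hyz : (1 - x) * (3 * x) ≤ (1 - y) * (1 - z) := by
      nlinarith [mul_nonneg (sub_nonneg.2 hxy) (sub_nonneg.2 hxz)]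
    have hcubic : 0 ≤ (x - 1 / 4) * (3 * x ^ 2 - 21 / 4 * x + 27 / 16) :=
      mul_nonneg (by linarith) (by nlinarith)
    nlinarith
  · have hyz : 2 * x ≤ (1 - y) * (1 - z) := by nlinarith
    nlinarith

/-- Equality holds at `y = z = 1 / (2 + d)`. -/
theorem add_sub_mul_le {d y z : ℝ} (hd₀ : 0 ≤ d) (hy₀ : 0 ≤ y) (hz₀ : 0 ≤ z)
    (hy : (1 + d) * y + z ≤ 1) (hz : y + (1 + d) * z ≤ 1) :
    y + z - d * (y * z) ≤ (4 + d) / (2 + d) ^ 2 := by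
  wlog hzy : z ≤ y generalizing y z
  · linarith [this hz₀ hy₀ (by linarith) (by linarith) (le_of_not_ge hzy)]
  obtain ⟨w, hw⟩ : ∃ w, (2 + d) * w = 1 := ⟨_, mul_inv_cancel₀ (by positivity)⟩
  have hval : (4 + d) / (2 + d) ^ 2 = w * (2 - d * w) := by
    rw [div_eq_iff (by positivity)]
    linear_combination (-2 * (2 + d) + d * (1 + (2 + d) * w)) * hw
  rw [hval]
  rcases le_total y w with hyw | hyw
  · have : 0 ≤ (w - y) * (2 - d * (w + y)) := mul_nonneg (by linarith) (by nlinarith)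
    nlinarith [mul_nonneg hd₀ hy₀]
  · have hslack : 0 ≤ (1 - (1 + d) * y) * ((2 + d) * y - 1) :=
      mul_nonneg (by linarith) (by nlinarith)
    have hz' : y + z - d * (y * z) ≤ 1 - 2 * d * y + d * (1 + d) * y ^ 2 := by
      nlinarith [mul_nonneg hd₀ hy₀]
    have hlin : (2 + d) * (1 - 2 * d * y + d * (1 + d) * y ^ 2) ≤ 2 - d * y := by nlinarith
    nlinarith

theorem majority_le {e x y z : ℝ} (he₀ : 0 ≤ e) (he₁ : e ≤ 1) (hy₀ : 0 ≤ y)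
    (hz₀ : 0 ≤ z) (hx : x * (1 + e) ≤ 1) (hy : (2 - e) * y + z ≤ 1) (hz : y + (2 - e) * z ≤ 1) :
    x * y + x * z + y * z - 2 * (x * y * z) ≤ 5 / 9 := by
  have h : y + z - (1 - e) * (y * z) ≤ 5 / 9 * (1 + e) := by
    refine (add_sub_mul_le (by linarith) hy₀ hz₀ (by linarith) (by linarith)).trans ?_
    rw [div_le_iff₀ (by nlinarith)]
    have : 0 ≤ e * (5 * (1 - e) ^ 2 + 15 * (1 - e) + 4) := by
      have := sub_nonneg.2 he₁
      positivity
    linarith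
  have hyz : 0 ≤ y + z - 2 * (y * z) := by nlinarith
  nlinarith [mul_le_mul_of_nonneg_right hx hyz]

theorem le_prod_one_sub_of_mul_le {x y z a b c : ℝ} (hx₀ : 0 ≤ x) (hy₀ : 0 ≤ y) (hz₀ : 0 ≤ z)
    (ha₀ : 0 ≤ a) (hb₀ : 0 ≤ b) (hc₀ : 0 ≤ c) (ha₁ : a ≤ 1) (hb₁ : b ≤ 1) (hc₁ : c ≤ 1)
    (hx : x * (1 + a + b + c) ≤ a) (hy : y * (1 + a + b + c) ≤ b)
    (hz : z * (1 + a + b + c) ≤ c) : 27 / 64 ≤ (1 - x) * (1 - y) * (1 - z) := by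
  have hs : 0 < 1 + a + b + c := by positivity
  refine le_prod_one_sub hx₀ hy₀ hz₀ ?_ ?_ ?_ <;>
  · refine le_of_mul_le_mul_right ?_ hs
    linarith

namespace CenteredTwoPoint

variable {A B C : CenteredTwoPoint}

theorem tail_eq_of_single (hA : 1 + B.c + C.c ≤ A.e) : tail A B C =
    1 - (1 - A.p) * (1 - B.p * C.p * (if 1 + A.c ≤ B.e + C.e then 1 else 0) -
      B.p * (1 - C.p) * (if 1 + A.c + C.c ≤ B.e then 1 else 0) -
      (1 - B.p) * C.p * (if 1 + A.c + B.c ≤ C.e then 1 else 0)) := by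
  have := B.c_nonneg
  have := C.c_nonneg
  have := B.e_nonneg
  have := C.e_nonneg
  rw [tail_eq, if_pos (by linarith : 1 ≤ A.e + B.e + C.e),
    if_pos (by linarith : 1 + C.c ≤ A.e + B.e), if_pos (by linarith : 1 + B.c ≤ A.e + C.e),
    if_pos hA]
  ring

theorem tail_le_of_two_singles (hA : 1 + B.c + C.c ≤ A.e) (hB : 1 + A.c + C.c ≤ B.e) :
    tail A B C ≤ 37 / 64 := by
  have hA' := A.p_mul_le_c hA
  have hB' := B.p_mul_le_c hB
  rw [tail_eq_of_single hA, if_pos hB, if_pos (by linarith [C.c_nonneg, C.e_nonneg])]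
  split_ifs with hC
  · have := le_prod_one_sub_of_mul_le A.p_nonneg B.p_nonneg C.p_nonneg A.c_nonneg B.c_nonneg
      C.c_nonneg A.c_le_one B.c_le_one C.c_le_one (by linarith) (by linarith)
      (by linarith [C.p_mul_le_c hC])
    linarith
  · have := le_prod_one_sub_of_mul_le A.p_nonneg B.p_nonneg le_rfl A.c_nonneg B.c_nonneg
      C.c_nonneg A.c_le_one B.c_le_one C.c_le_one (by linarith) (by linarith)
      (by linarith [C.c_nonneg])
    linarith

theorem p_mul_p_mul_le {x : ℝ} (h : x ≤ B.e + C.e) :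
    B.p * C.p * (x + max B.c C.c) ≤ max B.c C.c := by
  set m := max B.c C.c
  have hB : B.p * (m + B.e) ≤ m := by
    nlinarith [B.p_mul_le_c le_rfl, B.p_le_one, le_max_left B.c C.c]
  have hC : C.p * (m + C.e) ≤ m := by
    nlinarith [C.p_mul_le_c le_rfl, C.p_le_one, le_max_right B.c C.c]
  have hm : 0 ≤ m := le_max_of_le_left B.c_nonneg
  calc B.p * C.p * (x + m) ≤ B.p * C.p * ((B.e + C.e) + m) := by
        have := mul_nonneg B.p_nonneg C.p_nonneg
        gcongr
    _ = C.p * (B.p * (m + B.e)) + B.p * (C.p * (m + C.e) - C.p * m) := by ring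
    _ ≤ C.p * m + B.p * (m - C.p * m) := by
        have := B.p_nonneg
        have := C.p_nonneg
        gcongr
    _ ≤ m := by
        nlinarith [mul_nonneg (mul_nonneg (sub_nonneg.2 B.p_le_one) (sub_nonneg.2 C.p_le_one)) hm]

theorem tail_le_of_single (hA : 1 + B.c + C.c ≤ A.e) : tail A B C ≤ 37 / 64 := by
  by_cases hB : 1 + A.c + C.c ≤ B.e
  · exact tail_le_of_two_singles hA hB
  by_cases hC : 1 + A.c + B.c ≤ C.e
  · rw [← tail_swap_right]
    exact tail_le_of_two_singles (by linarith) hC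
  have := B.c_nonneg
  have := C.c_nonneg
  rw [tail_eq_of_single hA, if_neg hB, if_neg hC]
  split_ifs with hBC
  · have hm : max B.c C.c ≤ B.c + C.c := max_le (by linarith) (by linarith)
    have hA' : A.p * (A.c + (1 + max B.c C.c)) ≤ A.c := p_mul_le_c (by linarith)
    have := le_prod_one_sub_of_mul_le A.p_nonneg (mul_nonneg B.p_nonneg C.p_nonneg) le_rfl
      A.c_nonneg (le_max_of_le_left B.c_nonneg) le_rfl A.c_le_one (max_le B.c_le_one C.c_le_one)
      zero_le_one (by linarith) (by linarith [p_mul_p_mul_le hBC]) (by simp)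
    linarith
  · linarith [A.p_le_half (by linarith)]

theorem tail_eq_of_no_single (hA : ¬ 1 + B.c + C.c ≤ A.e) (hB : ¬ 1 + A.c + C.c ≤ B.e)
    (hC : ¬ 1 + A.c + B.c ≤ C.e) : tail A B C =
      A.p * B.p * C.p * (if 1 ≤ A.e + B.e + C.e then 1 else 0) +
      A.p * B.p * (1 - C.p) * (if 1 + C.c ≤ A.e + B.e then 1 else 0) +
      A.p * (1 - B.p) * C.p * (if 1 + B.c ≤ A.e + C.e then 1 else 0) +
      (1 - A.p) * B.p * C.p * (if 1 + A.c ≤ B.e + C.e then 1 else 0) := by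
  rw [tail_eq, if_neg hA, if_neg hB, if_neg hC]
  ring

theorem majority_le_of_two_pairs (hAB : 1 + C.c ≤ A.e + B.e) (hAC : 1 + B.c ≤ A.e + C.e)
    (hA : A.e < 1) :
    A.p * B.p + A.p * C.p + B.p * C.p - 2 * (A.p * B.p * C.p) ≤ 5 / 9 := by
  have hB : B.p * (B.c + (1 + C.c - A.e)) ≤ B.c := p_mul_le_c (by linarith)
  have hC : C.p * (C.c + (1 + B.c - A.e)) ≤ C.c := p_mul_le_c (by linarith)
  have hpos : 0 < B.c + C.c + (1 - A.e) := by linarith [B.c_nonneg, C.c_nonneg]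
  refine majority_le A.e_nonneg hA.le B.p_nonneg C.p_nonneg A.p_mul_one_add_e_le ?_ ?_ <;>
  · refine le_of_mul_le_mul_right ?_ hpos
    nlinarith [B.c_le_one, C.c_le_one]

theorem majority_le_of_three_pairs (hAB : 1 + C.c ≤ A.e + B.e) (hAC : 1 + B.c ≤ A.e + C.e)
    (hBC : 1 + A.c ≤ B.e + C.e) :
    A.p * B.p + A.p * C.p + B.p * C.p - 2 * (A.p * B.p * C.p) ≤ 5 / 9 := by
  rcases lt_or_ge A.e 1 with hA | hA
  · exact majority_le_of_two_pairs hAB hAC hA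
  rcases lt_or_ge B.e 1 with hB | hB
  · linarith [majority_le_of_two_pairs (A := B) (B := A) (C := C) (by linarith) hBC hB]
  rcases lt_or_ge C.e 1 with hC | hC
  · linarith [majority_le_of_two_pairs (A := C) (B := A) (C := B) (by linarith) (by linarith) hC]
  have hA' := A.p_le_half hA
  have hB' := B.p_le_half hB
  have hC' := C.p_le_half hC
  nlinarith [mul_nonneg (mul_nonneg (sub_nonneg.2 hA') (sub_nonneg.2 hB')) (sub_nonneg.2 hC'),
    A.p_nonneg, B.p_nonneg, C.p_nonneg, mul_nonneg (sub_nonneg.2 hA') (sub_nonneg.2 hB'),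
    mul_nonneg (sub_nonneg.2 hA') (sub_nonneg.2 hC'),
    mul_nonneg (sub_nonneg.2 hB') (sub_nonneg.2 hC')]

theorem tail_le_of_two_pairs (hA : ¬ 1 + B.c + C.c ≤ A.e) (hB : ¬ 1 + A.c + C.c ≤ B.e)
    (hC : ¬ 1 + A.c + B.c ≤ C.e) (hAB : 1 + C.c ≤ A.e + B.e) (hAC : 1 + B.c ≤ A.e + C.e) :
    tail A B C ≤ 37 / 64 := by
  rw [tail_eq_of_no_single hA hB hC, if_pos hAB, if_pos hAC,
    if_pos (by linarith [C.c_nonneg, C.e_nonneg])]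
  split_ifs with hBC
  · linarith [majority_le_of_three_pairs hAB hAC hBC]
  rcases lt_or_ge A.e 1 with hA | hA
  · have := mul_nonneg (mul_nonneg (sub_nonneg.2 A.p_le_one) B.p_nonneg) C.p_nonneg
    linarith [majority_le_of_two_pairs hAB hAC hA]
  · have := mul_nonneg (mul_nonneg A.p_nonneg (sub_nonneg.2 B.p_le_one))
      (sub_nonneg.2 C.p_le_one)
    linarith [A.p_le_half hA]

theorem tail_le_of_one_pair (hA : ¬ 1 + B.c + C.c ≤ A.e) (hB : ¬ 1 + A.c + C.c ≤ B.e)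
    (hC : ¬ 1 + A.c + B.c ≤ C.e) (hAB : 1 + C.c ≤ A.e + B.e) : tail A B C ≤ 37 / 64 := by
  by_cases hAC : 1 + B.c ≤ A.e + C.e
  · exact tail_le_of_two_pairs hA hB hC hAB hAC
  by_cases hBC : 1 + A.c ≤ B.e + C.e
  · rw [← tail_swap_left]
    exact tail_le_of_two_pairs hB hA (by linarith) (by linarith) hBC
  rw [tail_eq_of_no_single hA hB hC, if_pos hAB, if_neg hAC, if_neg hBC,
    if_pos (by linarith [C.c_nonneg, C.e_nonneg])]
  have hp : (A.p * (1 + A.e)) * (B.p * (1 + B.e)) ≤ 1 * 1 := mul_le_mul A.p_mul_one_add_e_le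
    B.p_mul_one_add_e_le (mul_nonneg B.p_nonneg (by linarith [B.e_nonneg])) zero_le_one
  have he : 2 ≤ (1 + A.e) * (1 + B.e) := by
    nlinarith [mul_nonneg A.e_nonneg B.e_nonneg, C.c_nonneg]
  nlinarith [mul_le_mul_of_nonneg_left he (mul_nonneg A.p_nonneg B.p_nonneg)]

theorem p_mul_p_mul_p_le_half (h : 1 ≤ A.e + B.e + C.e) : A.p * B.p * C.p ≤ 1 / 2 := by
  have hp : A.p * (1 + A.e) * (B.p * (1 + B.e)) * (C.p * (1 + C.e)) ≤ 1 := by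
    have := A.e_nonneg; have := B.e_nonneg; have := C.e_nonneg
    have := A.p_nonneg; have := B.p_nonneg; have := C.p_nonneg
    exact mul_le_one₀ (mul_le_one₀ A.p_mul_one_add_e_le (by positivity) B.p_mul_one_add_e_le)
      (by positivity) C.p_mul_one_add_e_le
  have he : 2 ≤ (1 + A.e) * (1 + B.e) * (1 + C.e) := by
    have h₁ := mul_nonneg A.e_nonneg B.e_nonneg
    have h₂ := mul_nonneg (add_nonneg A.e_nonneg B.e_nonneg) C.e_nonneg
    linarith [mul_nonneg h₁ C.e_nonneg]
  nlinarith [mul_le_mul_of_nonneg_left he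
    (mul_nonneg (mul_nonneg A.p_nonneg B.p_nonneg) C.p_nonneg)]

theorem tail_le (A B C : CenteredTwoPoint) : tail A B C ≤ 37 / 64 := by
  by_cases hA : 1 + B.c + C.c ≤ A.e
  · exact tail_le_of_single hA
  by_cases hB : 1 + A.c + C.c ≤ B.e
  · rw [← tail_swap_left]
    exact tail_le_of_single hB
  by_cases hC : 1 + A.c + B.c ≤ C.e
  · rw [← tail_swap_right, ← tail_swap_left]
    exact tail_le_of_single hC
  by_cases hAB : 1 + C.c ≤ A.e + B.e
  · exact tail_le_of_one_pair hA hB hC hAB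
  by_cases hAC : 1 + B.c ≤ A.e + C.e
  · rw [← tail_swap_right]
    exact tail_le_of_one_pair (by linarith) hC hB hAC
  by_cases hBC : 1 + A.c ≤ B.e + C.e
  · rw [← tail_swap_left, ← tail_swap_right]
    exact tail_le_of_one_pair (by linarith) (by linarith) (by linarith) hBC
  rw [tail_eq_of_no_single hA hB hC, if_neg hAB, if_neg hAC, if_neg hBC]
  split_ifs with h
  · linarith [p_mul_p_mul_p_le_half h]
  · norm_num

/-- The variable with the two values `-c` and `e`. -/
noncomputable def ofValues (c e : ℝ) (hc : 0 ≤ c) (hc₁ : c ≤ 1) (he : 0 < e) :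
    CenteredTwoPoint where
  p := c / (c + e)
  c := c
  e := e
  p_nonneg := by positivity
  p_le_one := div_le_one_of_le₀ (by linarith) (by positivity)
  c_nonneg := hc
  c_le_one := hc₁
  e_nonneg := he.le
  mean_zero := by field_simp; ring

theorem expect_ofValues {c e : ℝ} (hc : 0 ≤ c) (hc₁ : c ≤ 1) (he : 0 < e) (h : ℝ → ℝ) :
    (ofValues c e hc hc₁ he).expect h = (c * h e + e * h (-c)) / (c + e) := by
  simp only [expect, ofValues]
  field_simp
  ring

/-- The zero variable. -/
def zero : CenteredTwoPoint where
  p := 1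
  c := 0
  e := 0
  p_nonneg := zero_le_one
  p_le_one := le_rfl
  c_nonneg := le_rfl
  c_le_one := zero_le_one
  e_nonneg := le_rfl
  mean_zero := by simp

variable {X : Type*} [Fintype X] {f : X → ℝ}

theorem exists_pair_of_sum_eq_zero {w : X → ℝ} (hf : ∑ x, f x = 0) (hw : ∑ x, w x = 0)
    (hpos : ∃ x, 0 < f x) : ∃ x y, f x ≤ 0 ∧ 0 < f y ∧ 0 ≤ f y * w x - f x * w y := by
  obtain ⟨x₀, hx₀⟩ := hpos
  set P := univ.filter fun x => 0 < f x
  set N := univ.filter fun x => ¬ 0 < f x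
  have hfPN : ∑ x ∈ P, f x + ∑ x ∈ N, f x = 0 := by rw [sum_filter_add_sum_filter_not, hf]
  have hwPN : ∑ x ∈ P, w x + ∑ x ∈ N, w x = 0 := by rw [sum_filter_add_sum_filter_not, hw]
  have hN : N.Nonempty := by
    by_contra hN
    rw [not_nonempty_iff_eq_empty.1 hN, sum_empty, add_zero] at hfPN
    exact hfPN.not_gt (sum_pos (fun x hx => (mem_filter.1 hx).2) ⟨x₀, by simp [P, hx₀]⟩)
  have hsum : ∑ z ∈ N ×ˢ P, (f z.2 * w z.1 - f z.1 * w z.2) = 0 := by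
    simp only [sum_product, sum_sub_distrib, ← sum_mul, ← mul_sum]
    linear_combination (∑ x ∈ N, w x) * hfPN - (∑ x ∈ N, f x) * hwPN
  obtain ⟨⟨x, y⟩, hxy, hle⟩ : ∃ z ∈ N ×ˢ P, 0 ≤ f z.2 * w z.1 - f z.1 * w z.2 :=
    exists_le_of_sum_le (hN.product ⟨x₀, by simp [P, hx₀]⟩) (by rw [hsum, sum_const_zero])
  simp only [mem_product, P, N, mem_filter, mem_univ, true_and, not_lt] at hxy
  exact ⟨x, y, hxy.1, hxy.2, hle⟩

theorem exists_sum_le_expect (hf : ∑ x, f x = 0) (hf₁ : ∀ x, -1 ≤ f x) (h : ℝ → ℝ) :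
    ∃ A : CenteredTwoPoint, ∑ x, h (f x) ≤ Fintype.card X * A.expect h := by
  by_cases hpos : ∃ x, 0 < f x
  · have hcard : (0 : ℝ) < Fintype.card X :=
      Nat.cast_pos.2 (Fintype.card_pos_iff.2 ⟨hpos.choose⟩)
    obtain ⟨V, hV⟩ : ∃ V, Fintype.card X * V = ∑ x, h (f x) := ⟨_, mul_div_cancel₀ _ hcard.ne'⟩
    obtain ⟨x, y, hx, hy, hxy⟩ := exists_pair_of_sum_eq_zero (w := fun x => h (f x) - V) hf
      (by simp [sum_sub_distrib, ← hV]) hpos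
    refine ⟨ofValues (-f x) (f y) (by linarith) (by linarith [hf₁ x]) hy, ?_⟩
    rw [expect_ofValues, ← hV, neg_neg]
    gcongr
    rw [le_div_iff₀ (by linarith)]
    linarith
  · push Not at hpos
    have hzero : ∀ x, f x = 0 := fun x =>
      (sum_eq_zero_iff_of_nonpos fun x _ => hpos x).1 hf x (mem_univ x)
    exact ⟨zero, by simp [hzero, expect, zero]⟩

theorem sum_indicator_le (hf : ∑ x, f x = 0) (hf₁ : ∀ x, -1 ≤ f x) :
    ∑ x, ∑ y, ∑ z, (if 1 ≤ f x + f y + f z then 1 else 0 : ℝ) ≤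
      37 / 64 * (Fintype.card X : ℝ) ^ 3 := by
  set n := (Fintype.card X : ℝ)
  have : 0 ≤ n := Nat.cast_nonneg _
  set ι : ℝ → ℝ := fun s => if 1 ≤ s then 1 else 0
  obtain ⟨A, hA⟩ := exists_sum_le_expect hf hf₁ fun s => ∑ y, ∑ z, ι (s + f y + f z)
  obtain ⟨B, hB⟩ := exists_sum_le_expect hf hf₁ fun s => ∑ z, A.expect fun t => ι (t + s + f z)
  obtain ⟨C, hC⟩ := exists_sum_le_expect hf hf₁ fun s =>
    B.expect fun u => A.expect fun t => ι (t + u + s)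
  simp only [expect_sum] at hA hB
  calc ∑ x, ∑ y, ∑ z, ι (f x + f y + f z)
      ≤ n * ∑ y, ∑ z, A.expect fun t => ι (t + f y + f z) := hA
    _ ≤ n * (n * ∑ z, B.expect fun u => A.expect fun t => ι (t + u + f z)) := by gcongr
    _ ≤ n * (n * (n * C.expect fun s => B.expect fun u => A.expect fun t => ι (t + u + s))) := by
        gcongr
    _ = tail A B C * n ^ 3 := by
        simp only [tail, expect_comm C, expect_comm B A, ι]
        ring
    _ ≤ 37 / 64 * n ^ 3 := by
        gcongr
        exact tail_le A B C

end CenteredTwoPoint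

/-! ### Bounds for the number of heavy tuples -/

/-- The finite form of Samuels' tail problem: if nonnegative weights on `X` have total at most
`|X| / (r + 1)`, then at most the proportion `c` of all `r`-tuples in `X` have weight at least
`1`. -/
def TupleWeightBound (r : ℕ) (c : ℝ) : Prop :=
  ∀ (X : Type) [Fintype X] (φ : X → ℝ), (∀ x, 0 ≤ φ x) →
    ∑ x, φ x ≤ (Fintype.card X : ℝ) / (r + 1) →
    (#{g : Fin r → X | 1 ≤ ∑ i, φ (g i)} : ℝ) ≤ c * (Fintype.card X : ℝ) ^ r

theorem tupleWeightBound_three : TupleWeightBound 3 (37 / 64) := by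
  intro X _ φ hφ hsum
  obtain hX | hX := isEmpty_or_nonempty X
  · simp
  set n := (Fintype.card X : ℝ)
  have hn : 0 < n := Nat.cast_pos.2 Fintype.card_pos
  set S := ∑ x, φ x
  have hS : S / n ≤ 1 / 4 := by
    rw [div_le_iff₀ hn]
    norm_num at hsum
    linarith
  have hmean : ∑ x, 4 * (φ x - S / n) = 0 := by
    rw [← mul_sum, sum_sub_distrib, sum_const, card_univ, nsmul_eq_mul, mul_div_cancel₀ _ hn.ne',
      sub_self, mul_zero]
  have htriple : (#{g : Fin 3 → X | 1 ≤ ∑ i, φ (g i)} : ℝ) =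
      ∑ x, ∑ y, ∑ z, if 1 ≤ φ x + φ y + φ z then 1 else 0 := by
    simp only [card_filter, Nat.cast_sum, Nat.cast_ite, Nat.cast_one, Nat.cast_zero,
      Fin.sum_univ_three]
    rw [← (Fin.consEquiv fun _ => X).sum_comp, Fintype.sum_prod_type]
    refine sum_congr rfl fun x _ => ?_
    rw [← (finTwoArrowEquiv X).symm.sum_comp, Fintype.sum_prod_type]
    rfl
  rw [htriple]
  refine le_trans ?_ (CenteredTwoPoint.sum_indicator_le hmean fun x => by linarith [hφ x])
  gcongr with x _ y _ z _
  split_ifs <;> linarith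

theorem exists_threshold {X : Type*} [Fintype X] (φ : X → ℝ) (hφ : ∀ x, 0 ≤ φ x) :
    ∃ θ ≤ (1 / 2 : ℝ), (#{x | θ ≤ φ x} + #{x | 1 - θ < φ x} : ℝ) ≤ 2 * ∑ x, φ x := by
  let μ := MeasureTheory.volume.restrict (Set.Ioc (0 : ℝ) (1 / 2))
  let G : X → ℝ → ℝ := fun x => (Set.Iic (φ x)).indicator 1 + (Set.Ioi (1 - φ x)).indicator 1
  have hintegrable : ∀ s : Set ℝ, MeasurableSet s →
      MeasureTheory.Integrable (s.indicator (1 : ℝ → ℝ)) μ :=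
    fun s hs => (MeasureTheory.integrable_const 1).indicator hs
  have hG : ∀ x ∈ univ, MeasureTheory.Integrable (G x) μ := fun x _ =>
    (hintegrable _ measurableSet_Iic).add (hintegrable _ measurableSet_Ioi)
  have hle : ∫ θ, ∑ x, G x θ ∂μ ≤ ∑ x, φ x := by
    rw [MeasureTheory.integral_finsetSum _ hG]
    refine sum_le_sum fun x _ => ?_
    rw [MeasureTheory.integral_add' (hintegrable _ measurableSet_Iic)
        (hintegrable _ measurableSet_Ioi),
      MeasureTheory.integral_indicator_one measurableSet_Iic,
      MeasureTheory.integral_indicator_one measurableSet_Ioi,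
      MeasureTheory.measureReal_restrict_apply measurableSet_Iic,
      MeasureTheory.measureReal_restrict_apply measurableSet_Ioi, Set.inter_comm,
      Set.Ioc_inter_Iic, Set.inter_comm, Set.Ioc_inter_Ioi, Real.volume_real_Ioc,
      Real.volume_real_Ioc]
    grind
  obtain ⟨θ, hθ, hGθ⟩ := MeasureTheory.exists_le_setAverage (by simp) (by simp)
    (MeasureTheory.integrable_finsetSum _ hG)
  refine ⟨θ, hθ.2, ?_⟩
  calc (#{x | θ ≤ φ x} + #{x | 1 - θ < φ x} : ℝ) = ∑ x, G x θ := by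
        simp [G, sum_add_distrib, Set.indicator_apply, sub_lt_comm]
    _ ≤ 2 * ∫ θ, ∑ x, G x θ ∂μ := by
        rw [MeasureTheory.setAverage_eq] at hGθ
        simpa [μ] using hGθ
    _ ≤ 2 * ∑ x, φ x := by gcongr

/- With `b ≤ min a (2 * t - a)`, the left-hand side is increasing in `a` up to `a = t` and convex in
`a` on `[t, 2 * t]`, so it is largest at `a = t` or `a = 2 * t`. -/
theorem sq_add_two_mul_le {a b n t K : ℝ} (hb : 0 ≤ b) (hba : b ≤ a) (hab : a + b ≤ 2 * t)
    (han : a ≤ n) (htn : t ≤ n) (h₁ : 4 * t ^ 2 ≤ K) (h₂ : 2 * (t * n) - t ^ 2 ≤ K) :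
    a ^ 2 + 2 * ((n - a) * b) ≤ K := by
  obtain hat | hta := le_total a t
  · have := mul_le_mul_of_nonneg_left hba (sub_nonneg.2 han)
    nlinarith [mul_nonneg (sub_nonneg.2 hat) (sub_nonneg.2 han),
      mul_nonneg (sub_nonneg.2 hat) (sub_nonneg.2 htn)]
  · have := mul_le_mul_of_nonneg_left (le_sub_iff_add_le'.2 hab) (sub_nonneg.2 han)
    have hat : a ≤ 2 * t := by linarith
    have := mul_nonneg (sub_nonneg.2 hta) (sub_nonneg.2 hat)
    obtain h | h := le_total 0 (5 * t - 2 * n)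
    · nlinarith [mul_nonneg h (sub_nonneg.2 hat)]
    · nlinarith [mul_nonneg_of_nonpos_of_nonpos h (sub_nonpos.2 hta)]

theorem card_heavy_pairs_le {X : Type*} [Fintype X] (φ : X → ℝ) (hφ : ∀ x, 0 ≤ φ x) {μ c : ℝ}
    (hμ : μ ≤ 1)
    (hsum : ∑ x, φ x ≤ μ * Fintype.card X) (h₁ : 4 * μ ^ 2 ≤ c) (h₂ : 2 * μ - μ ^ 2 ≤ c) :
    (#{z : X × X | 1 ≤ φ z.1 + φ z.2} : ℝ) ≤ c * (Fintype.card X : ℝ) ^ 2 := by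
  classical
  obtain ⟨θ, hθ, hθsum⟩ := exists_threshold φ hφ
  set A : Finset X := {x | θ ≤ φ x}
  set B : Finset X := {x | 1 - θ < φ x}
  have hcover : ({z | 1 ≤ φ z.1 + φ z.2} : Finset (X × X)) ⊆ A ×ˢ A ∪ (Aᶜ ×ˢ B ∪ B ×ˢ Aᶜ) := by
    intro z hz
    simp only [A, B, mem_filter, mem_univ, true_and, mem_union, mem_product, mem_compl] at hz ⊢
    grind
  have hBA : (#B : ℝ) ≤ #A := Nat.cast_le.2 <| card_le_card fun x hx => by
    simp only [A, B, mem_filter, mem_univ, true_and] at hx ⊢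
    linarith
  have hAX : (#A : ℝ) + #Aᶜ = Fintype.card X := by exact_mod_cast card_add_card_compl A
  have hpairs : (#{z : X × X | 1 ≤ φ z.1 + φ z.2} : ℝ) ≤
      #A * #A + (#Aᶜ * #B + #B * #Aᶜ) := by
    exact_mod_cast (card_le_card hcover).trans <| (card_union_le _ _).trans <| by
      grw [card_union_le, card_product, card_product, card_product]
  refine (hpairs.trans_eq ?_).trans (sq_add_two_mul_le (Nat.cast_nonneg #B) hBA
    (hθsum.trans <| mul_le_mul_of_nonneg_left hsum zero_le_two) (Nat.cast_le.2 (card_le_univ A))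
    (mul_le_of_le_one_left (Nat.cast_nonneg _) hμ) ?_ ?_)
  · rw [← hAX]
    ring
  · rw [mul_pow, ← mul_assoc]
    gcongr
  · calc _ = (2 * μ - μ ^ 2) * (Fintype.card X : ℝ) ^ 2 := by ring
      _ ≤ _ := by gcongr

theorem tupleWeightBound_two : TupleWeightBound 2 (5 / 9) := by
  intro X _ φ hφ hsum
  have h := card_heavy_pairs_le φ hφ (μ := 1 / 3) (c := 5 / 9) (by norm_num)
    (by norm_num at hsum; linarith) (by norm_num) (by norm_num)
  refine le_of_eq_of_le (congrArg _ (card_equiv (finTwoArrowEquiv X) fun g => ?_)) h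
  simp [Fin.sum_univ_two]

theorem tupleWeightBound_four : TupleWeightBound 4 (16 / 25) := by
  intro X _ φ hφ hsum
  have h := card_heavy_pairs_le (fun z : X × X => φ z.1 + φ z.2)
    (fun z => add_nonneg (hφ _) (hφ _)) (μ := 2 / 5) (c := 16 / 25) (by norm_num) (by
      simp only [Fintype.sum_prod_type, sum_add_distrib, sum_const, card_univ, nsmul_eq_mul,
        ← mul_sum, Fintype.card_prod, Nat.cast_mul]
      norm_num at hsum
      nlinarith [Nat.cast_nonneg (α := ℝ) (Fintype.card X)])
    (by norm_num) (by norm_num)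
  have hpairs := card_equiv (s := {g : Fin 4 → X | 1 ≤ ∑ i, φ (g i)})
    (t := {z : (X × X) × X × X | 1 ≤ φ z.1.1 + φ z.1.2 + (φ z.2.1 + φ z.2.2)})
    (((Fin.appendEquiv 2 2).symm).trans ((finTwoArrowEquiv X).prodCongr (finTwoArrowEquiv X)))
    (by simp [Fin.sum_univ_four, Fin.appendEquiv, add_assoc])
  simpa [hpairs, ← pow_mul, ← sq] using h

/-! ### Fractional covers and families of disjoint tuples -/

theorem exists_weights_lt_or_exists_cover {ι X : Type*} [Fintype ι] [Fintype X] (v : ι → X → ℝ) :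
    (∃ w ∈ stdSimplex ℝ ι, ∀ x, ∑ i, w i * v i x < 1) ∨
      ∃ φ : X → ℝ, (∀ x, 0 ≤ φ x) ∧ ∑ x, φ x ≤ 1 ∧ ∀ i, 1 ≤ ∑ x, v i x * φ x := by
  classical
  set O : Set (X → ℝ) := Set.univ.pi fun _ => Set.Iio 1 with hO
  have hOopen : IsOpen O := isOpen_set_pi Set.finite_univ fun _ _ => isOpen_Iio
  have hOconvex : Convex ℝ O := convex_pi fun _ _ => convex_Iio 1
  by_cases hdisj : Disjoint O (Fintype.linearCombination ℝ v '' stdSimplex ℝ ι)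
  · obtain ⟨f, u, hfO, hfC⟩ := geometric_hahn_banach_open hOconvex hOopen
      ((convex_stdSimplex ℝ ι).linear_image _) hdisj
    have hu : 0 < u := by simpa using hfO 0 (by simp [hO])
    have hscale : ∀ a : X → ℝ, f a ≠ 0 → (u / f a) • a ∉ O := fun a ha hmem => by
      simpa [ha] using hfO _ hmem
    have hf_single : ∀ x, 0 ≤ f (Pi.single x 1) := by
      intro x
      by_contra! hneg
      refine hscale _ hneg.ne fun z _ => ?_
      have : u / f (Pi.single x 1) ≤ 0 := div_nonpos_of_nonneg_of_nonpos hu.le hneg.le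
      obtain rfl | hz := eq_or_ne z x
      · simpa using this.trans_lt one_pos
      · simp [hz]
    have hf_one : f 1 ≤ u := by
      by_contra! hlt
      refine hscale _ (hu.trans hlt).ne' fun z _ => ?_
      simpa using (div_lt_one (hu.trans hlt)).2 hlt
    refine .inr ⟨fun x => f (Pi.single x 1) / u, fun x => div_nonneg (hf_single x) hu.le, ?_, ?_⟩
    · rw [← sum_div, div_le_one hu, ← map_sum, univ_sum_single]
      exact hf_one
    · intro i
      have hi := hfC (v i) ⟨Pi.single i 1, single_mem_stdSimplex ℝ i, by simp⟩
      rw [pi_eq_sum_univ' (v i), map_sum] at hi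
      simp only [mul_div_assoc', ← sum_div]
      rw [one_le_div hu]
      simpa using hi
  · obtain ⟨_, hO, w, hw, rfl⟩ := Set.not_disjoint_iff.1 hdisj
    exact .inl ⟨w, hw, fun x => by simpa [Fintype.linearCombination_apply] using hO x⟩

theorem exists_nat_weights {ι X : Type*} [Fintype ι] [Finite X] {w : ι → ℝ}
    (hw : w ∈ stdSimplex ℝ ι) {v : ι → X → ℝ} (hv : ∀ x, ∑ i, w i * v i x < 1) :
    ∃ m : ι → ℕ, ∀ x, ∑ i, m i * v i x < ∑ i, (m i : ℝ) := by
  have hfloor : ∀ i, Filter.Tendsto (fun N : ℕ => (⌊w i * N⌋₊ : ℝ) / N) Filter.atTop (nhds (w i)) :=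
    fun i => (tendsto_nat_floor_mul_div_atTop (hw.1 i)).comp tendsto_natCast_atTop_atTop
  have hlt : ∀ᶠ N : ℕ in Filter.atTop, ∀ x,
      ∑ i, (⌊w i * N⌋₊ : ℝ) / N * v i x < ∑ i, (⌊w i * N⌋₊ : ℝ) / N :=
    Filter.eventually_all.2 fun x =>
      (tendsto_finsetSum _ fun i _ => (hfloor i).mul_const (v i x)).eventually_lt
        (tendsto_finsetSum _ fun i _ => hfloor i) (by rw [hw.2]; exact hv x)
  obtain ⟨N, hN, hNpos⟩ := (hlt.and (Filter.eventually_gt_atTop 0)).exists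
  refine ⟨fun i => ⌊w i * N⌋₊, fun x => ?_⟩
  have := hN x
  simp only [div_mul_eq_mul_div, ← sum_div] at this
  exact (div_lt_div_iff_of_pos_right (Nat.cast_pos.2 hNpos)).1 this

theorem exists_injective_prod_fin {S X : Type*} [Fintype S] [DecidableEq X] (F : S → X) {D : ℕ}
    (hF : ∀ x, #{s | F s = x} ≤ D) : ∃ c : S → Fin D, Function.Injective fun s => (F s, c s) := by
  have hemb : ∀ x, Nonempty ({s // F s = x} ↪ Fin D) := fun x =>
    Function.Embedding.nonempty_of_card_le <| by
      rw [Fintype.card_subtype, Fintype.card_fin]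
      exact hF x
  let e := fun x => (hemb x).some
  have hmap : Function.Injective
      (Sigma.map id fun x => e x : (Σ x, {s // F s = x}) → Σ _ : X, Fin D) :=
    Function.injective_id.sigma_map fun x => (e x).injective
  exact ⟨fun s => e (F s) ⟨s, rfl⟩, (Equiv.sigmaEquivProd X (Fin D)).injective.comp <|
    hmap.comp (Equiv.sigmaFiberEquiv F).symm.injective⟩

theorem exists_injective_tuples {ι X : Type*} [Fintype ι] [DecidableEq X] {r D n : ℕ}
    (g : ι → Fin r → X) (m : ι → ℕ) (hload : ∀ x, ∑ i, m i * #{s | g i s = x} ≤ D)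
    (hn : n ≤ ∑ i, m i) :
    ∃ G : Fin n → Fin r → X × Fin D, Function.Injective (Function.uncurry G) ∧
      ∀ z, (fun s => (G z s).1) ∈ Set.range g := by
  obtain ⟨e⟩ := Function.Embedding.nonempty_of_card_le (α := Fin n) (β := Σ i, Fin (m i))
    (by simpa using hn)
  obtain ⟨c, hc⟩ := exists_injective_prod_fin (S := (Σ i, Fin (m i)) × Fin r)
    (fun s => g s.1.1 s.2) (D := D) fun x => by
      refine le_of_eq_of_le ?_ (hload x)
      rw [card_filter, Fintype.sum_prod_type]
      simp only [← card_filter, Fintype.sum_sigma, sum_const, card_univ, Fintype.card_fin,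
        smul_eq_mul]
  exact ⟨fun z s => (g (e z).1 s, c (e z, s)),
    hc.comp (e.injective.prodMap Function.injective_id), fun z => ⟨(e z).1, rfl⟩⟩

theorem exists_cover_or_exists_injective_tuples {X : Type*} [Fintype X] [Nonempty X]
    {r T : ℕ} (L : Finset (Fin r → X)) :
    (∃ φ : X → ℝ, (∀ x, 0 ≤ φ x) ∧ ∑ x, φ x ≤ T ∧ ∀ g ∈ L, 1 ≤ ∑ i, φ (g i)) ∨
      ∃ (D : ℕ) (G : Fin (T * D + 1) → Fin r → X × Fin D),
        Function.Injective (Function.uncurry G) ∧ ∀ z, (fun i => (G z i).1) ∈ L := by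
  classical
  obtain ⟨w, hw, hwx⟩ | ⟨φ, hφ, hsum, hcover⟩ :=
    exists_weights_lt_or_exists_cover fun (g : L) (x : X) => (T * #{s | g.1 s = x} : ℝ)
  · obtain ⟨m, hm⟩ := exists_nat_weights hw hwx
    obtain ⟨x₀, hx₀⟩ := Finite.exists_max fun x => ∑ g, m g * #{s | g.1 s = x}
    obtain ⟨G, hG, hGL⟩ := exists_injective_tuples (fun g : L => g.1) m hx₀
      (n := T * _ + 1) (by
        have := hm x₀
        simp only [mul_left_comm, ← mul_sum] at this
        exact_mod_cast this)
    exact .inr ⟨_, G, hG, fun z => by simpa using hGL z⟩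
  · refine .inl ⟨fun x => T * φ x, fun x => by have := hφ x; positivity, ?_, fun g hg => ?_⟩
    · rw [← mul_sum]
      exact mul_le_of_le_one_right (Nat.cast_nonneg T) hsum
    · refine (hcover ⟨g, hg⟩).trans_eq ?_
      rw [← sum_fiberwise univ g]
      refine sum_congr rfl fun x _ => ?_
      rw [sum_congr rfl fun i hi => by rw [(mem_filter.1 hi).2], sum_const, nsmul_eq_mul]
      ring

/-! ### Counting maps -/

theorem card_filter_comp_mul {I J A : Type*} [Fintype I] [Fintype J] [Fintype A] [DecidableEq I]
    [DecidableEq J] {τ : I → J} (hτ : Function.Injective τ) (Q : (I → A) → Prop) [DecidablePred Q] :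
    #{b : J → A | Q (b ∘ τ)} * Fintype.card A ^ Fintype.card I =
      Fintype.card A ^ Fintype.card J * #{a : I → A | Q a} := by
  rw [← Fintype.card_fun, ← Fintype.card_fun, ← card_univ, ← card_univ, ← card_product,
    ← card_product]
  let swap : (J → A) × (I → A) → (J → A) × (I → A) := fun z =>
    (Function.extend τ z.2 z.1, z.1 ∘ τ)
  have hcomp : ∀ z, (swap z).1 ∘ τ = z.2 := fun z => funext fun i => hτ.extend_apply _ _ i
  have hswap : Function.Involutive swap := fun ⟨b, a⟩ => by
    refine Prod.ext (funext fun j => ?_) (hcomp _)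
    by_cases hj : ∃ i, τ i = j
    · obtain ⟨i, rfl⟩ := hj
      exact hτ.extend_apply _ _ i
    · exact (Function.extend_apply' _ _ _ hj).trans (Function.extend_apply' _ _ _ hj)
  refine card_equiv hswap.toPerm fun z => ?_
  simp [swap]

theorem card_filter_apply_eq_mul {J A : Type*} [Fintype J] [DecidableEq J] [Fintype A]
    [DecidableEq A] {j : J} {y : (J → A) → A} (hy : ∀ f a, y (Function.update f j a) = y f) :
    #{f | f j = y f} * Fintype.card A = Fintype.card A ^ Fintype.card J := by
  rw [← Fintype.card_fun, ← card_univ (α := A), ← card_product, ← card_univ]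
  refine card_nbij' (fun z => Function.update z.1 j z.2) (fun g => (Function.update g j (y g), g j))
    (by simp) (by simp [hy]) (fun z hz => ?_) (fun g _ => by simp)
  simp only [coe_product, coe_filter, mem_univ, true_and, Set.mem_prod, Set.mem_ofPred_eq] at hz
  simp [hy, ← hz.1]

theorem card_not_injective_mul_le {I A : Type*} [Fintype I] [Fintype A] [DecidableEq I]
    [DecidableEq A] :
    #{f : I → A | ¬ Function.Injective f} * Fintype.card A ≤
      Fintype.card I ^ 2 * Fintype.card A ^ Fintype.card I := by
  have hsub : ({f | ¬ Function.Injective f} : Finset (I → A)) ⊆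
      ({p | p.1 ≠ p.2} : Finset (I × I)).biUnion fun p => {f | f p.1 = f p.2} := by
    intro f hf
    simp only [mem_filter, mem_univ, true_and, Function.Injective, not_forall] at hf
    obtain ⟨i, j, hf, hij⟩ := hf
    simpa using ⟨i, j, hij, hf⟩
  calc _ ≤ (∑ p : I × I with p.1 ≠ p.2, #{f : I → A | f p.1 = f p.2}) * Fintype.card A := by
        gcongr
        exact (card_le_card hsub).trans card_biUnion_le
    _ = #{p : I × I | p.1 ≠ p.2} * Fintype.card A ^ Fintype.card I := by
        rw [sum_mul, sum_congr rfl fun p hp =>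
          card_filter_apply_eq_mul (y := fun f => f p.2) (by simp [(mem_filter.1 hp).2.symm]),
          sum_const, smul_eq_mul]
    _ ≤ _ := by
        gcongr
        exact (card_le_univ _).trans_eq (by rw [Fintype.card_prod, sq])

theorem card_exists_mem_mul_le {I A : Type*} [Fintype I] [Fintype A] [DecidableEq I]
    (W : Finset A) [DecidablePred fun f : I → A => ∃ i, f i ∈ W] :
    #{f : I → A | ∃ i, f i ∈ W} * Fintype.card A ≤
      Fintype.card I * #W * Fintype.card A ^ Fintype.card I := by
  classical
  have hsub : ({f | ∃ i, f i ∈ W} : Finset (I → A)) ⊆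
      ((univ : Finset I) ×ˢ W).biUnion fun p => {f | f p.1 = p.2} := by
    intro f
    simp
  calc _ ≤ (∑ p ∈ (univ : Finset I) ×ˢ W, #{f : I → A | f p.1 = p.2}) * Fintype.card A := by
        gcongr
        exact (card_le_card hsub).trans card_biUnion_le
    _ = _ := by
        rw [sum_mul, sum_congr rfl fun p _ =>
          card_filter_apply_eq_mul (y := fun _ => p.2) fun _ _ => rfl,
          sum_const, smul_eq_mul, card_product, card_univ]

theorem card_not_injective_and_notMem_mul_le {I A : Type*} [Fintype I] [Fintype A] [DecidableEq I]
    [DecidableEq A] (W : Finset A) :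
    #{f : I → A | ¬ (Function.Injective f ∧ ∀ i, f i ∉ W)} * Fintype.card A ≤
      (Fintype.card I ^ 2 + Fintype.card I * #W) * Fintype.card A ^ Fintype.card I := by
  calc _ ≤ (#{f : I → A | ¬ Function.Injective f} + #{f : I → A | ∃ i, f i ∈ W}) *
        Fintype.card A := by
        gcongr
        refine le_trans (card_le_card fun f => ?_) (card_union_le _ _)
        simp [or_iff_not_imp_left]
    _ ≤ _ := by
        rw [add_mul, add_mul]
        exact add_le_add card_not_injective_mul_le (card_exists_mem_mul_le W)

/-! ### Blow-ups -/

theorem pow_mul_card_le_sum_pow {S : Type*} [Fintype S] {f : S → ℝ} (hf : ∀ s, 0 ≤ f s) {ε : ℝ}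
    (hε : 0 ≤ ε) (h : ε * Fintype.card S ≤ ∑ s, f s) (D : ℕ) :
    ε ^ D * Fintype.card S ≤ ∑ s, f s ^ D := by
  obtain - | D := D
  · simp
  obtain hS | hS := isEmpty_or_nonempty S
  · simp
  refine le_trans ?_ (pow_sum_div_card_le_sum_pow (fun s _ => hf s) D)
  rw [card_univ, le_div_iff₀ (by positivity)]
  calc ε ^ (D + 1) * Fintype.card S * (Fintype.card S : ℝ) ^ D
      = (ε * Fintype.card S) ^ (D + 1) := by ring
    _ ≤ _ := by gcongr

@[to_additive]
theorem prod_fin_succ_fun {B M : Type*} [Fintype B] [CommMonoid M] {m : ℕ}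
    (F : (Fin (m + 1) → B) → M) : ∏ b, F b = ∏ a, ∏ b, F (Fin.cons a b) := by
  rw [← (Fin.consEquiv fun _ => B).prod_comp, Fintype.prod_prod_type]
  rfl

theorem pow_mul_card_pow_le_sum_prod {A : Type*} [Fintype A] [Nonempty A] (D : ℕ) :
    ∀ (T : ℕ) {W : (Fin T → A) → ℝ}, (∀ b, 0 ≤ W b) → ∀ {ε : ℝ}, 0 ≤ ε →
      ε * (Fintype.card A : ℝ) ^ T ≤ ∑ b, W b →
      ε ^ D ^ T * (Fintype.card A : ℝ) ^ (T * D) ≤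
        ∑ J : Fin T → Fin D → A, ∏ s : Fin T → Fin D, W fun j => J j (s j)
  | 0, W, _, ε, _, h => by
    simpa [Subsingleton.elim _ (default : Fin 0 → A)] using h
  | T + 1, W, hW, ε, hε, h => by
    set n := (Fintype.card A : ℝ)
    have hn : 0 < n := Nat.cast_pos.2 Fintype.card_pos
    let U : (Fin D → A) → (Fin T → A) → ℝ := fun J₀ b => ∏ d, W (Fin.cons (J₀ d) b)
    have hU : ∀ J₀ b, 0 ≤ U J₀ b := fun J₀ b => prod_nonneg fun d _ => hW _
    have hUsum : ε ^ D * n ^ D ≤ ∑ J₀, (∑ b, U J₀ b) / n ^ T := by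
      have := pow_mul_card_le_sum_pow (S := Fin T → A) (f := fun b => ∑ a, W (Fin.cons a b))
        (fun b => sum_nonneg fun a _ => hW _) (ε := ε * n) (by positivity) (by
          rw [sum_comm, ← sum_fin_succ_fun]
          simpa [pow_succ', mul_assoc] using h) D
      rw [← sum_div, sum_comm, le_div_iff₀ (by positivity)]
      simpa [U, sum_pow', mul_pow] using this
    have hpow := pow_mul_card_le_sum_pow (fun J₀ => div_nonneg (sum_nonneg fun b _ => hU J₀ b)
      (pow_nonneg hn.le T)) (pow_nonneg hε D) (by simpa using hUsum) (D ^ T)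
    have hIH : ∀ J₀, ((∑ b, U J₀ b) / n ^ T) ^ D ^ T * n ^ (T * D) ≤
        ∑ J : Fin T → Fin D → A, ∏ s : Fin T → Fin D, U J₀ fun j => J j (s j) := fun J₀ =>
      pow_mul_card_pow_le_sum_prod D T (hU J₀)
        (div_nonneg (sum_nonneg fun b _ => hU J₀ b) (pow_nonneg hn.le T))
        (div_mul_cancel₀ _ (pow_pos hn T).ne').le
    calc ε ^ D ^ (T + 1) * n ^ ((T + 1) * D)
        = (ε ^ D) ^ D ^ T * n ^ D * n ^ (T * D) := by ring
      _ ≤ (∑ J₀, ((∑ b, U J₀ b) / n ^ T) ^ D ^ T) * n ^ (T * D) := by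
          gcongr
          simpa using hpow
      _ ≤ ∑ J₀, ∑ J : Fin T → Fin D → A, ∏ s : Fin T → Fin D, U J₀ fun j => J j (s j) := by
          rw [sum_mul]
          exact sum_le_sum fun J₀ _ => hIH J₀
      _ = _ := by
          rw [sum_fin_succ_fun]
          refine sum_congr rfl fun J₀ _ => sum_congr rfl fun J _ => ?_
          rw [prod_fin_succ_fun, prod_comm]
          refine prod_congr rfl fun s _ => prod_congr rfl fun d _ => congrArg W (funext fun j => ?_)
          cases j using Fin.cases <;> rfl

theorem exists_blowup (T D : ℕ) {ε : ℝ} (hε : 0 < ε) :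
    ∃ N : ℕ, ∀ (A : Type*) [Fintype A], N ≤ Fintype.card A → ∀ P : Finset (Fin T → A),
      ε * (Fintype.card A : ℝ) ^ T ≤ #P →
      ∃ J : Fin T → Fin D → A, Function.Injective (Function.uncurry J) ∧
        ∀ s : Fin T → Fin D, (fun j => J j (s j)) ∈ P := by
  classical
  obtain ⟨N, hN⟩ := exists_nat_gt (((T * D : ℕ) : ℝ) ^ 2 / ε ^ D ^ T)
  refine ⟨N, fun A _ hA P hP => ?_⟩
  set n := (Fintype.card A : ℝ)
  have hNn : ((T * D : ℕ) : ℝ) ^ 2 / ε ^ D ^ T < n := hN.trans_le (Nat.cast_le.2 hA)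
  have hn : 0 < n := lt_of_le_of_lt (by positivity) hNn
  have : Nonempty A := Fintype.card_pos_iff.1 (Nat.cast_pos.1 hn)
  have hmany : ε ^ D ^ T * n ^ (T * D) ≤
      #{J : Fin T → Fin D → A | ∀ s : Fin T → Fin D, (fun j => J j (s j)) ∈ P} := by
    simpa [prod_ite_zero] using
      pow_mul_card_pow_le_sum_prod D T (W := fun b => if b ∈ P then 1 else 0)
      (fun b => by positivity) hε.le (by simpa using hP)
  by_contra! hnone
  have hfew : #{J : Fin T → Fin D → A | ∀ s : Fin T → Fin D, (fun j => J j (s j)) ∈ P} ≤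
      #{f : Fin T × Fin D → A | ¬ Function.Injective f} := by
    refine card_le_card_of_injOn Function.uncurry (fun J hJ => ?_)
      Function.uncurry_injective.injOn
    simp only [coe_filter, mem_univ, true_and, Set.mem_ofPred_eq] at hJ ⊢
    intro hinj
    obtain ⟨s, hs⟩ := hnone J hinj
    exact hs (hJ s)
  have hnoninj : (#{f : Fin T × Fin D → A | ¬ Function.Injective f} : ℝ) * n ≤
      ((T * D : ℕ) : ℝ) ^ 2 * n ^ (T * D) := by
    have := card_not_injective_mul_le (I := Fin T × Fin D) (A := A)
    rw [Fintype.card_prod, Fintype.card_fin, Fintype.card_fin] at this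
    simp only [n]
    exact_mod_cast this
  rw [div_lt_iff₀ (by positivity)] at hNn
  refine hnoninj.not_gt ?_
  calc ((T * D : ℕ) : ℝ) ^ 2 * n ^ (T * D) < n * ε ^ D ^ T * n ^ (T * D) := by gcongr
    _ = ε ^ D ^ T * n ^ (T * D) * n := by ring
    _ ≤ _ := by
        gcongr
        exact hmany.trans (Nat.cast_le.2 hfew)

/-! ### Maximum matchings leave few vertices of large degree uncovered -/

/-- `M` is a matching in the hypergraph with edge set `H`. -/
def IsMatching {V : Type*} (H M : Finset (Finset V)) : Prop :=
  M ⊆ H ∧ (M : Set (Finset V)).PairwiseDisjoint id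

/-- The degree of `u` counted with ordered tuples: the number of maps `f : Fin r → V` whose image
completes `u` to an edge. In an `(r + 1)`-uniform hypergraph this is `r!` times the degree. -/
def tupleDegree {V : Type*} [Fintype V] [DecidableEq V] (r : ℕ) (H : Finset (Finset V)) (u : V) :
    ℕ :=
  #{f : Fin r → V | insert u (univ.image f) ∈ H}

theorem IsMatching.exists_card_lt {V : Type*} [DecidableEq V] {H M N S : Finset (Finset V)}
    (hM : IsMatching H M) (hN : IsMatching H N) (hne : ∀ e ∈ N, e.Nonempty)
    (hdisj : ∀ e ∈ M \ S, ∀ f ∈ N, Disjoint e f) (hcard : #S < #N) :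
    ∃ M', IsMatching H M' ∧ #M < #M' := by
  refine ⟨M \ S ∪ N, ⟨union_subset (sdiff_subset.trans hM.1) hN.1, ?_⟩, ?_⟩
  · rw [coe_union, Set.pairwiseDisjoint_union]
    exact ⟨hM.2.subset (by simp), hN.2, fun e he f hf _ => hdisj e he f hf⟩
  · have hMN : Disjoint (M \ S) N := disjoint_left.2 fun e he he' =>
      (hne e he').ne_empty (disjoint_self.1 (hdisj e he e he'))
    have := le_card_sdiff S M
    rw [card_union_of_disjoint hMN]
    omega

theorem exists_block_equiv {V : Type*} [Fintype V] [DecidableEq V] {k : ℕ}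
    (hkV : k ∣ Fintype.card V) {M : Finset (Finset V)} (hMk : HyperUniform k M)
    (hM : (M : Set (Finset V)).PairwiseDisjoint id) :
    ∃ (m : ℕ) (ψ : Fin m × Fin k ≃ V), ∀ e ∈ M, ∃ a, univ.image (fun i => ψ (a, i)) = e := by
  classical
  let S : Set V := ⋃ e : M, (e.1 : Set V)
  have hdisj : Pairwise (Function.onFun Disjoint fun e : M => (e.1 : Set V)) := fun e e' hne =>
    disjoint_coe.2 (hM e.2 e'.2 (Subtype.coe_injective.ne hne))
  let eS : M × Fin k ≃ S := (Equiv.sigmaEquivProd M (Fin k)).symm.trans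
    ((Equiv.sigmaCongrRight fun e => (finCongr (hMk e.1 e.2).symm).trans e.1.equivFin.symm).trans
      (Set.unionEqSigmaOfDisjoint hdisj).symm)
  have heS : ∀ e i, (eS (e, i) : V) ∈ e.1 := fun e i =>
    (e.1.equivFin.symm (finCongr (hMk e.1 e.2).symm i)).2
  obtain ⟨q, hq⟩ : k ∣ Fintype.card (Sᶜ : Set V) := by
    rw [Fintype.card_compl_set, ← Fintype.card_congr eS, Fintype.card_prod, Fintype.card_fin]
    exact Nat.dvd_sub hkV (dvd_mul_left k _)
  let eR : Fin q × Fin k ≃ (Sᶜ : Set V) :=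
    Fintype.equivOfCardEq (by rw [hq, Fintype.card_prod, Fintype.card_fin, Fintype.card_fin,
      mul_comm])
  let ψ : (M ⊕ Fin q) × Fin k ≃ V := (Equiv.sumProdDistrib M (Fin q) (Fin k)).trans
    ((eS.sumCongr eR).trans (Equiv.Set.sumCompl S))
  let κ := Fintype.equivFin (M ⊕ Fin q)
  refine ⟨_, (κ.symm.prodCongr (Equiv.refl _)).trans ψ, fun e he => ⟨κ (Sum.inl ⟨e, he⟩), ?_⟩⟩
  refine eq_of_subset_of_card_le (fun v hv => ?_) ?_
  · obtain ⟨i, -, rfl⟩ := mem_image.1 hv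
    simpa [ψ] using heS ⟨e, he⟩ i
  · rw [hMk e he, card_image_of_injective _ fun i j h => by simpa using h, card_univ,
      Fintype.card_fin]

/-- For rows `b t` of the grid `ψ`, the tuples of grid positions in distinct rows whose vertices
complete `u` to an edge. They are recorded independently of `b`, so that links of different
vertices along different rows can be compared. -/
def linkTuples {V A : Type*} [DecidableEq V] (r : ℕ) {T k : ℕ} (ψ : A × Fin k → V)
    (H : Finset (Finset V)) (u : V) (b : Fin T → A) : Finset (Fin r → Fin T × Fin k) :=
  {g | Function.Injective (fun i => (g i).1) ∧
    insert u (univ.image fun i => ψ (b (g i).1, (g i).2)) ∈ H}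

section Links

variable {V A : Type*} [DecidableEq V] (r : ℕ) {T k : ℕ} (ψ : A × Fin k ≃ V)
  (H : Finset (Finset V)) (u : V)

theorem card_linkTuples (b : Fin T → A) :
    #(linkTuples r ψ H u b) = ∑ τ : Fin r → Fin T with Function.Injective τ,
      #{ι : Fin r → Fin k | insert u (univ.image fun i => ψ (b (τ i), ι i)) ∈ H} := by
  simp only [linkTuples, sum_filter, card_filter, ite_and, ite_sum_zero]
  rw [← Fintype.sum_prod_type']
  exact Fintype.sum_equiv (Equiv.arrowProdEquivProdArrow _ _ _) _ _ fun _ => rfl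

variable [Fintype V] [Fintype A]

theorem tupleDegree_eq_sum :
    tupleDegree r H u =
      ∑ ι : Fin r → Fin k, #{a : Fin r → A | insert u (univ.image fun i => ψ (a i, ι i)) ∈ H} := by
  simp only [tupleDegree, card_filter]
  rw [sum_comm, ← Fintype.sum_prod_type']
  exact (Fintype.sum_equiv ((Equiv.arrowProdEquivProdArrow (Fin r) (fun _ => A)
    (fun _ => Fin k)).symm.trans (Equiv.arrowCongr (Equiv.refl _) ψ)) _ _ fun _ => rfl).symm

theorem sum_card_linkTuples :
    (∑ b : Fin T → A, #(linkTuples r ψ H u b)) * Fintype.card A ^ r =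
      #{τ : Fin r → Fin T | Function.Injective τ} * Fintype.card A ^ T * tupleDegree r H u := by
  classical
  simp only [card_linkTuples, tupleDegree_eq_sum r ψ]
  rw [sum_comm, sum_mul, mul_assoc, card_eq_sum_ones, sum_mul]
  refine sum_congr rfl fun τ hτ => ?_
  simp only [card_filter]
  rw [sum_comm, sum_mul, one_mul, mul_sum]
  refine sum_congr rfl fun ι _ => ?_
  have := card_filter_comp_mul (A := A) (mem_filter.1 hτ).2
    fun a => insert u (univ.image fun i => ψ (a i, ι i)) ∈ H
  simpa only [card_filter, Fintype.card_fin, Function.comp_apply] using this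

end Links

section Switching

variable {V A : Type*} [DecidableEq V] {r T k D N : ℕ} {ψ : A × Fin k ≃ V} {i₀ : Fin k}
  {G : Fin N → Fin r → (Fin T × Fin k) × Fin D} {J : Fin (T + 1) → Fin N → A} {κ : Fin D ↪ Fin N}

/-- The `z`-th edge added by a switching: the vertex in column `i₀` of row `J 0 z`, together with
the tuple `G z`, in which `((t, i), d)` stands for column `i` of row `J (t + 1) (κ d)`. -/
def switchEdge (ψ : A × Fin k ≃ V) (i₀ : Fin k) (G : Fin N → Fin r → (Fin T × Fin k) × Fin D)
    (J : Fin (T + 1) → Fin N → A) (κ : Fin D ↪ Fin N) (z : Fin N) : Finset V :=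
  insert (ψ (J 0 z, i₀))
    (univ.image fun i => ψ (J (G z i).1.1.succ (κ (G z i).2), (G z i).1.2))

theorem disjoint_switchEdge (hG : Function.Injective (Function.uncurry G))
    (hJ : Function.Injective (Function.uncurry J)) {z z' : Fin N} (hz : z ≠ z') :
    Disjoint (switchEdge ψ i₀ G J κ z) (switchEdge ψ i₀ G J κ z') := by
  have hψJ {a b a' b' i i'} (h : ψ (J a b, i) = ψ (J a' b', i')) : a = a' ∧ b = b' ∧ i = i' := by
    have hrow := (Prod.ext_iff.1 (ψ.injective h)).1
    have := @hJ (a, b) (a', b') hrow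
    simp_all
  simp only [switchEdge, disjoint_left, mem_insert, mem_image, mem_univ, true_and]
  rintro v (rfl | ⟨i, rfl⟩) (h | ⟨i', h⟩)
  · exact hz (hψJ h).2.1
  · exact Fin.succ_ne_zero _ (hψJ h).1
  · exact Fin.succ_ne_zero _ (hψJ h).1
  · obtain ⟨hrow, hcopy, hcol⟩ := hψJ h
    have : G z' i' = G z i :=
      Prod.ext (Prod.ext (Fin.succ_injective _ hrow) hcol) (κ.injective hcopy)
    exact hz (Prod.ext_iff.1 (@hG (z', i') (z, i) this)).1.symm

theorem switchEdge_mem {H : Finset (Finset V)} {z : Fin N}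
    (hz : ∀ s : Fin (T + 1) → Fin N, (fun i => (G z i).1) ∈
      linkTuples r ψ H (ψ (J 0 (s 0), i₀)) (fun j => J j.succ (s j.succ))) :
    switchEdge ψ i₀ G J κ z ∈ H := by
  have hrows : Function.Injective fun i => (G z i).1.1 := (mem_filter.1 (hz fun _ => z)).2.1
  have := (mem_filter.1 (hz (Fin.cons z
    (Function.extend (fun i => (G z i).1.1) (fun i => κ (G z i).2) fun _ => z)))).2.2
  simpa only [switchEdge, Fin.cons_zero, Fin.cons_succ, hrows.extend_apply] using this

theorem IsMatching.exists_card_lt_of_switch {H M : Finset (Finset V)} (hM : IsMatching H M)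
    (hMψ : ∀ e ∈ M, ∃ a, univ.image (fun i => ψ (a, i)) = e) {L : Finset (Fin r → Fin T × Fin k)}
    (hG : Function.Injective (Function.uncurry G)) (hGL : ∀ z, (fun i => (G z i).1) ∈ L)
    (hJ : Function.Injective (Function.uncurry J)) (hD : D ≤ N) (hN : T * D < N)
    (hJL : ∀ s : Fin (T + 1) → Fin N, (∀ e ∈ M, ψ (J 0 (s 0), i₀) ∉ e) ∧
      linkTuples r ψ H (ψ (J 0 (s 0), i₀)) (fun j => J j.succ (s j.succ)) = L) :
    ∃ M', IsMatching H M' ∧ #M < #M' := by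
  classical
  let E := switchEdge ψ i₀ G J (Fin.castLEEmb hD)
  have hE_ne z : (E z).Nonempty := insert_nonempty _ _
  have hE_inj : Function.Injective E := fun z z' h => by
    by_contra hz
    have hdisj : Disjoint (E z) (E z') := disjoint_switchEdge hG hJ hz
    rw [h, disjoint_self] at hdisj
    exact (hE_ne z').ne_empty hdisj
  let S : Finset (Finset V) := univ.image fun x : Fin T × Fin D =>
    univ.image fun i => ψ (J x.1.succ (Fin.castLEEmb hD x.2), i)
  refine hM.exists_card_lt (N := univ.image E) (S := S) ⟨?_, ?_⟩ (by simpa using hE_ne) ?_ ?_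
  · rw [image_subset_iff]
    exact fun z _ => switchEdge_mem fun s => (hJL s).2 ▸ hGL z
  · rw [coe_image, coe_univ, hE_inj.injOn.pairwiseDisjoint_image]
    exact fun z _ z' _ hz => disjoint_switchEdge hG hJ hz
  · simp only [mem_sdiff, mem_image, mem_univ, true_and, disjoint_right, E, switchEdge]
    rintro e ⟨he, heS⟩ _ ⟨z, rfl⟩ v hv hve
    obtain rfl | ⟨i, -, rfl⟩ := by simpa only [mem_insert, mem_image] using hv
    · exact (hJL fun _ => z).1 e he hve
    · obtain ⟨a, rfl⟩ := hMψ e he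
      refine heS (mem_image.2 ⟨((G z i).1.1, (G z i).2), mem_univ _, ?_⟩)
      obtain ⟨i', -, hi'⟩ := mem_image.1 hve
      obtain rfl : a = _ := (Prod.ext_iff.1 (ψ.injective hi')).1
      rfl
  · rw [card_image_of_injective _ hE_inj, card_univ, Fintype.card_fin]
    exact (card_image_le.trans_eq (by simp)).trans_lt hN

end Switching

theorem exists_injective_tuples_of_card_gt {r T : ℕ} (hT : 0 < T) {c : ℝ}
    (hc : TupleWeightBound r c) {L : Finset (Fin r → Fin T × Fin (r + 1))}
    (hL : c * (T * (r + 1)) ^ r < #L) :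
    ∃ (D : ℕ) (G : Fin (T * D + 1) → Fin r → (Fin T × Fin (r + 1)) × Fin D),
      Function.Injective (Function.uncurry G) ∧ ∀ z, (fun i => (G z i).1) ∈ L := by
  have : NeZero T := ⟨hT.ne'⟩
  refine (exists_cover_or_exists_injective_tuples L).resolve_left ?_
  rintro ⟨φ, hφ, hsum, hcover⟩
  have hcard : (Fintype.card (Fin T × Fin (r + 1)) : ℝ) = T * (r + 1) := by simp
  have hheavy := hc _ φ hφ (by rwa [hcard, mul_div_cancel_right₀ _ (by positivity)])
  have hle : #L ≤ #{g : Fin r → Fin T × Fin (r + 1) | 1 ≤ ∑ i, φ (g i)} :=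
    card_le_card fun g hg => mem_filter.2 ⟨mem_univ _, hcover g hg⟩
  rw [hcard] at hheavy
  exact (hL.trans_le (Nat.cast_le.2 hle)).not_ge hheavy

theorem mul_card_le_card_filter_lt {X : Type*} [Fintype X] {f : X → ℝ} {c δ K : ℝ} (hc : 0 ≤ c)
    (hK : 0 < K) (hf : ∀ x, f x ≤ K) (hsum : (c + δ) * K * Fintype.card X ≤ ∑ x, f x) :
    δ * Fintype.card X ≤ #{x | c * K < f x} := by
  refine le_of_mul_le_mul_right ?_ hK
  have : ∑ x, f x ≤ ∑ x, (c * K + if c * K < f x then K else 0) := by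
    gcongr with x
    split_ifs with h
    · nlinarith [hf x]
    · simpa using h
  rw [sum_add_distrib, ← sum_filter, sum_const, sum_const, card_univ, nsmul_eq_mul,
    nsmul_eq_mul] at this
  linarith

theorem mul_pow_le_card_injective {r T : ℕ} (hT : 0 < T) :
    (1 - (r : ℝ) ^ 2 / T) * T ^ r ≤ #{τ : Fin r → Fin T | Function.Injective τ} := by
  have hbad := card_not_injective_mul_le (I := Fin r) (A := Fin T)
  have hsplit := card_filter_add_card_filter_not (s := univ)
    (fun τ : Fin r → Fin T => Function.Injective τ)
  simp only [Fintype.card_fin, card_univ, Fintype.card_fun] at hbad hsplit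
  have hbad' : (#{τ : Fin r → Fin T | ¬ Function.Injective τ} : ℝ) ≤ r ^ 2 * T ^ r / T := by
    rw [le_div_iff₀ (by positivity)]
    exact_mod_cast hbad
  have hsplit' : (#{τ : Fin r → Fin T | Function.Injective τ} : ℝ) +
      #{τ : Fin r → Fin T | ¬ Function.Injective τ} = T ^ r := by exact_mod_cast hsplit
  have : (1 - (r : ℝ) ^ 2 / T) * T ^ r = T ^ r - r ^ 2 * T ^ r / T := by ring
  linarith

theorem exists_common_fiber {V A Y : Type*} [DecidableEq V] [Fintype A] [Fintype Y]
    [DecidableEq Y] {T k : ℕ} (ψ : A × Fin k ≃ V) {U : Finset V} (F : V → (Fin T → A) → Y)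
    (P : Y → Prop) [DecidablePred P] {m : ℝ} (hU : ∀ u ∈ U, m ≤ #{b | P (F u b)})
    (hpos : 0 < #U * m) :
    ∃ i₀ y, P y ∧ #U * m / (k * Fintype.card Y) ≤
      #{b : Fin (T + 1) → A | ψ (b 0, i₀) ∈ U ∧ F (ψ (b 0, i₀)) (Fin.tail b) = y} := by
  classical
  let Ω : Finset (Σ _ : V, Fin T → A) := U.sigma fun u => {b | P (F u b)}
  let cl : (Σ _ : V, Fin T → A) → Fin k × Y := fun z => ((ψ.symm z.1).2, F z.1 z.2)
  have hΩ : #U * m ≤ #Ω := by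
    rw [card_sigma, Nat.cast_sum, ← nsmul_eq_mul]
    exact card_nsmul_le_sum _ _ _ hU
  obtain ⟨z₀, hz₀⟩ : Ω.Nonempty := card_pos.1 (Nat.cast_pos.1 (hpos.trans_le hΩ))
  have hcl z (hz : z ∈ Ω) : cl z ∈ univ ×ˢ ({y | P y} : Finset Y) := by
    simpa [cl, Ω] using (mem_sigma.1 hz).2
  have hcard : 0 < (Fintype.card (Fin k × Y) : ℝ) :=
    Nat.cast_pos.2 (Fintype.card_pos_iff.2 ⟨cl z₀⟩)
  have hk : (k * Fintype.card Y : ℝ) = Fintype.card (Fin k × Y) := by simp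
  obtain ⟨⟨i₀, y⟩, hy, hfib⟩ := exists_le_card_fiber_of_nsmul_le_card_of_maps_to hcl
    ⟨_, hcl z₀ hz₀⟩ (b := #U * m / (k * Fintype.card Y)) (by
      refine le_trans ?_ hΩ
      rw [nsmul_eq_mul, hk, mul_div_left_comm]
      exact mul_le_of_le_one_right hpos.le ((div_le_one hcard).2 (Nat.cast_le.2 (card_le_univ _))))
  refine ⟨i₀, y, by simpa using hy, hfib.trans (Nat.cast_le.2 ?_)⟩
  refine card_le_card_of_injOn (fun z => Fin.cons (ψ.symm z.1).1 z.2) ?_ ?_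
  · rintro ⟨u, b⟩ hz
    obtain ⟨hub, heq⟩ := mem_filter.1 hz
    obtain ⟨rfl, rfl⟩ := Prod.ext_iff.1 heq
    simpa [cl] using (mem_sigma.1 hub).1
  · rintro ⟨u, b⟩ hz ⟨u', b'⟩ hz' heq
    have hcol := Prod.ext_iff.1 ((mem_filter.1 hz).2.trans (mem_filter.1 hz').2.symm)
    obtain ⟨hrow, rfl⟩ := Fin.cons_injective2 heq
    obtain rfl : u = u' := ψ.symm.injective (Prod.ext hrow hcol.1)
    rfl

theorem mul_pow_le_card_large_links {V A : Type*} [Fintype V] [DecidableEq V] [Fintype A]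
    {r T k : ℕ} (hT : 0 < T) {c₀ c δ : ℝ} (hc₀ : 0 ≤ c₀) (hδ : 0 < δ) (hc : 0 ≤ c)
    (hcT : c₀ + δ ≤ c * (1 - (r : ℝ) ^ 2 / T)) (ψ : A × Fin k ≃ V) {H : Finset (Finset V)} {u : V}
    (hu : c * (Fintype.card V : ℝ) ^ r ≤ tupleDegree r H u) :
    δ * (Fintype.card A : ℝ) ^ T ≤
      #{b : Fin T → A | c₀ * (T * k : ℝ) ^ r < #(linkTuples r ψ H u b)} := by
  have : Nonempty A := ⟨(ψ.symm u).1⟩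
  have hk : 0 < k := (ψ.symm u).2.pos
  have ha : 0 < (Fintype.card A : ℝ) := Nat.cast_pos.2 Fintype.card_pos
  have hcard : (Fintype.card V : ℝ) = Fintype.card A * k := by
    simp [← Fintype.card_congr ψ]
  have hfac : 0 ≤ 1 - (r : ℝ) ^ 2 / T := by
    by_contra! h
    linarith [mul_nonpos_of_nonneg_of_nonpos hc h.le]
  have hsum : (∑ b : Fin T → A, (#(linkTuples r ψ H u b) : ℝ)) * Fintype.card A ^ r =
      #{τ : Fin r → Fin T | Function.Injective τ} * Fintype.card A ^ T * tupleDegree r H u :=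
    mod_cast sum_card_linkTuples r ψ H u
  have hlink (b : Fin T → A) : (#(linkTuples r ψ H u b) : ℝ) ≤ (T * k : ℝ) ^ r := by
    have := card_le_univ (linkTuples r ψ H u b)
    simp only [Fintype.card_fun, Fintype.card_prod, Fintype.card_fin] at this
    exact_mod_cast this
  have := mul_card_le_card_filter_lt (δ := δ) hc₀ (by positivity) hlink ?_
  · simpa using this
  refine le_of_mul_le_mul_right ?_ (pow_pos ha r)
  rw [hsum]
  calc (c₀ + δ) * (T * k : ℝ) ^ r * Fintype.card (Fin T → A) * Fintype.card A ^ r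
      ≤ c * (1 - (r : ℝ) ^ 2 / T) * (T * k : ℝ) ^ r * Fintype.card (Fin T → A) *
        Fintype.card A ^ r := by gcongr
    _ = (1 - (r : ℝ) ^ 2 / T) * T ^ r * Fintype.card A ^ T *
        (c * (Fintype.card V : ℝ) ^ r) := by
      simp only [hcard, mul_pow, Fintype.card_fun, Fintype.card_fin, Nat.cast_pow]
      ring
    _ ≤ _ := by
      gcongr
      exact mul_pow_le_card_injective hT

theorem exists_forall_blowup_of_card_gt {r T : ℕ} (hT : 0 < T) {c ε : ℝ}
    (hc : TupleWeightBound r c) (hε : 0 < ε) :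
    ∃ N₀, ∀ (A : Type) [Fintype A], N₀ ≤ Fintype.card A →
      ∀ P : Finset (Fin (T + 1) → A), ε * (Fintype.card A : ℝ) ^ (T + 1) ≤ #P →
      ∀ L : Finset (Fin r → Fin T × Fin (r + 1)), c * (T * (r + 1)) ^ r < #L →
      ∃ (D : ℕ) (G : Fin (T * D + 1) → Fin r → (Fin T × Fin (r + 1)) × Fin D)
        (J : Fin (T + 1) → Fin (T * D + 1) → A),
        Function.Injective (Function.uncurry G) ∧ (∀ z, (fun i => (G z i).1) ∈ L) ∧
        Function.Injective (Function.uncurry J) ∧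
        ∀ s : Fin (T + 1) → Fin (T * D + 1), (fun j => J j (s j)) ∈ P := by
  classical
  choose D G hG hGL using fun L : {L : Finset (Fin r → Fin T × Fin (r + 1)) //
    c * (T * (r + 1)) ^ r < #L} => exists_injective_tuples_of_card_gt hT hc L.2
  choose N₀ hN₀ using fun D => exists_blowup.{0} (T + 1) (T * D + 1) hε
  refine ⟨univ.sup fun L => N₀ (D L), fun A _ hA P hP L hL => ?_⟩
  have hle := le_sup (f := fun L => N₀ (D L)) (mem_univ (⟨L, hL⟩ : {L // _ < (#L : ℝ)}))
  obtain ⟨J, hJ, hJP⟩ := hN₀ (D ⟨L, hL⟩) A (hle.trans hA) P hP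
  exact ⟨_, _, J, hG ⟨L, hL⟩, hGL ⟨L, hL⟩, hJ, hJP⟩

theorem exists_le_mul_one_sub_div {a c : ℝ} (h : a < c) (s : ℝ) :
    ∃ T : ℕ, 0 < T ∧ a ≤ c * (1 - s / T) := by
  have hlim : Filter.Tendsto (fun T : ℕ => c * (1 - s / T)) .atTop (nhds c) := by
    simpa using ((tendsto_const_div_atTop_nhds_zero_nat s).const_sub 1).const_mul c
  exact ((Filter.eventually_gt_atTop 0).and (hlim.eventually_const_le h)).exists

theorem exists_card_uncovered_lt (r : ℕ) {c₀ c γ : ℝ} (hF : TupleWeightBound r c₀) (hc₀ : 0 ≤ c₀)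
    (hc : c₀ < c) (hγ : 0 < γ) :
    ∃ n₀, ∀ (V : Type*) [Fintype V] [DecidableEq V], n₀ ≤ Fintype.card V →
      r + 1 ∣ Fintype.card V → ∀ H : Finset (Finset V), HyperUniform (r + 1) H →
      ∀ M, IsMatching H M → (∀ M', IsMatching H M' → #M' ≤ #M) →
      (#{u | (∀ e ∈ M, u ∉ e) ∧ c * (Fintype.card V : ℝ) ^ r ≤ tupleDegree r H u} : ℝ) <
        γ * Fintype.card V := by
  obtain ⟨δ, hδ, hδc⟩ : ∃ δ, 0 < δ ∧ c₀ + δ < c := ⟨(c - c₀) / 2, by linarith, by linarith⟩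
  obtain ⟨T, hT, hcT⟩ := exists_le_mul_one_sub_div hδc ((r : ℝ) ^ 2)
  let q : ℝ := (r + 1 : ℕ) * Fintype.card (Finset (Fin r → Fin T × Fin (r + 1)))
  have hq : 0 < q := by positivity
  obtain ⟨N₀, hN₀⟩ := exists_forall_blowup_of_card_gt hT hF
    (ε := γ * (r + 1 : ℕ) * δ / q) (by positivity)
  refine ⟨N₀ * (r + 1) + 1, fun V _ _ hV hdvd H hH M hM hmax => ?_⟩
  by_contra! hmany
  set U : Finset V := {u | (∀ e ∈ M, u ∉ e) ∧ c * (Fintype.card V : ℝ) ^ r ≤ tupleDegree r H u}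
    with hU
  obtain ⟨m, ψ, hψ⟩ := exists_block_equiv hdvd (fun e he => hH e (hM.1 he)) hM.2
  have hcard : Fintype.card V = m * (r + 1) := by simp [← Fintype.card_congr ψ]
  have hm : 0 < m := Nat.pos_of_ne_zero fun h => by simp [hcard, h] at hV
  have hNm : N₀ ≤ m := by
    rw [hcard] at hV
    exact Nat.le_of_mul_le_mul_right (Nat.le_of_succ_le hV) r.succ_pos
  obtain ⟨i₀, L, hL, hfib⟩ := exists_common_fiber (U := U) ψ (linkTuples r ψ H (T := T))
    (fun L => c₀ * (T * (r + 1 : ℕ) : ℝ) ^ r < #L) (m := δ * (m : ℝ) ^ T) (fun u hu => by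
      simpa using mul_pow_le_card_large_links hT hc₀ hδ (hc₀.trans hc.le) hcT ψ
        (mem_filter.1 hu).2.2) (by
      have : 0 < γ * Fintype.card V := by rw [hcard]; positivity
      have := this.trans_le hmany
      positivity)
  obtain ⟨D, G, J, hG, hGL, hJ, hJP⟩ := hN₀ (Fin m) (by simpa using hNm) _ (by
    refine le_trans ?_ hfib
    calc _ = γ * Fintype.card V * (δ * m ^ T) / q := by
          rw [hcard, Fintype.card_fin]; push_cast; ring
      _ ≤ _ := by gcongr) L (by exact_mod_cast hL)
  obtain ⟨M', hM', hlt⟩ := hM.exists_card_lt_of_switch hψ hG hGL hJ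
    ((Nat.le_mul_of_pos_left D hT).trans (Nat.le_succ _)) (Nat.lt_succ_self _) fun s => by
      obtain ⟨hsU, hsL⟩ := (mem_filter.1 (hJP s)).2
      exact ⟨(mem_filter.1 hsU).2.1, hsL⟩
  exact hlt.not_ge (hmax M' hM')

/-! ### Absorption -/

/-- The vertices of `S` can be partitioned into edges of `H`. -/
def Matchable {V : Type*} [DecidableEq V] (H : Finset (Finset V)) (S : Finset V) : Prop :=
  ∃ M, IsMatching H M ∧ M.biUnion id = S

section Matchable

variable {V : Type*} [DecidableEq V] {H : Finset (Finset V)}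

theorem matchable_empty : Matchable H ∅ :=
  ⟨∅, ⟨empty_subset _, by simp⟩, by simp⟩

theorem matchable_of_mem {e : Finset V} (he : e ∈ H) : Matchable H e :=
  ⟨{e}, ⟨by simpa using he, by simp⟩, by simp⟩

theorem Matchable.union {S S' : Finset V} (hS : Matchable H S) (hS' : Matchable H S')
    (h : Disjoint S S') : Matchable H (S ∪ S') := by
  obtain ⟨M, hM, rfl⟩ := hS
  obtain ⟨M', hM', rfl⟩ := hS'
  refine ⟨M ∪ M', ⟨union_subset hM.1 hM'.1, ?_⟩, union_biUnion⟩
  rw [coe_union, Set.pairwiseDisjoint_union]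
  exact ⟨hM.2, hM'.2, fun e he e' he' _ =>
    h.mono (subset_biUnion_of_mem id he) (subset_biUnion_of_mem id he')⟩

theorem Matchable.biUnion {ι : Type*} {s : Finset ι} {f : ι → Finset V}
    (hf : ∀ i ∈ s, Matchable H (f i)) (hd : (s : Set ι).PairwiseDisjoint f) :
    Matchable H (s.biUnion f) := by
  classical
  induction s using Finset.induction_on with
  | empty => simpa using matchable_empty
  | insert i s hi ih =>
    rw [coe_insert, Set.pairwiseDisjoint_insert_of_notMem (by simpa using hi)] at hd
    rw [biUnion_insert]
    exact (hf i (mem_insert_self i s)).union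
      (ih (fun j hj => hf j (mem_insert_of_mem hj)) hd.1) ((disjoint_biUnion_right _ _ _).2 hd.2)

theorem Matchable.image_of_fibers {ι κ : Type*} [Fintype ι] [Finite κ] [DecidableEq κ]
    {φ : ι → V} (hφ : Function.Injective φ) (cls : ι → κ)
    (h : ∀ c, ({i | cls i = c} : Finset ι).image φ ∈ H) : Matchable H (univ.image φ) := by
  have := Fintype.ofFinite κ
  have hunion : univ.image φ = univ.biUnion fun c => ({i | cls i = c} : Finset ι).image φ := by
    ext v; simp
  rw [hunion]
  refine Matchable.biUnion (fun c _ => matchable_of_mem (h c)) fun c _ c' _ hcc => ?_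
  rw [Function.onFun, disjoint_image hφ, disjoint_filter]
  exact fun i _ hi hi' => hcc (hi.symm.trans hi')

theorem Matchable.dvd_card {k : ℕ} (hH : HyperUniform k H) {S : Finset V} (h : Matchable H S) :
    k ∣ #S := by
  obtain ⟨M, hM, rfl⟩ := h
  rw [card_biUnion fun e he e' he' hee => hM.2 he he' hee]
  exact dvd_sum fun e he => (hH e (hM.1 he)).symm.dvd

end Matchable

/-- The index set of an absorber: the contact vertices `u i` for `i : Fin r`, and the vertices
`w i j` for `i j : Fin r`. -/
abbrev AbsorberIndex (r : ℕ) := Fin r ⊕ Fin r × Fin r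

/-- The edges which an absorber consists of: the vertices `o` are distinct, and each contact vertex
`u i` forms an edge with `w i`. -/
def IsAbsorber {V : Type*} [DecidableEq V] {r : ℕ} (H : Finset (Finset V))
    (o : AbsorberIndex r → V) : Prop :=
  Function.Injective o ∧
    ∀ i, insert (o (.inl i)) (univ.image fun j => o (.inr (i, j))) ∈ H

/-- The absorber `o` absorbs the disjoint tuple `t`: the contact vertices form an edge with
`t none`, and each `w i` forms an edge with `t (some i)`. -/
def AbsorbsTuple {V : Type*} [DecidableEq V] {r : ℕ} (H : Finset (Finset V))
    (o : AbsorberIndex r → V) (t : Option (Fin r) → V) : Prop :=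
  (∀ p a, o p ≠ t a) ∧ insert (t none) (univ.image fun i => o (.inl i)) ∈ H ∧
    ∀ i, insert (t (some i)) (univ.image fun j => o (.inr (i, j))) ∈ H

section Absorbers

instance {V : Type*} [DecidableEq V] {r : ℕ} (H : Finset (Finset V)) :
    DecidableRel (AbsorbsTuple (r := r) H) :=
  fun o t => inferInstanceAs (Decidable ((∀ p a, o p ≠ t a) ∧ _ ∧ _))

instance {V : Type*} [DecidableEq V] {r : ℕ} (H : Finset (Finset V)) :
    DecidablePred (IsAbsorber (r := r) H) :=
  fun o => inferInstanceAs (Decidable (Function.Injective o ∧ _))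

variable {V : Type*} [DecidableEq V] {r : ℕ} {H : Finset (Finset V)} {o : AbsorberIndex r → V}

theorem IsAbsorber.matchable (ho : IsAbsorber H o) : Matchable H (univ.image o) := by
  refine Matchable.image_of_fibers ho.1 (Sum.elim id Prod.fst) fun i => ?_
  convert ho.2 i using 1
  ext v
  simp [eq_comm]

theorem AbsorbsTuple.matchable {t : Option (Fin r) → V} (h : AbsorbsTuple H o t)
    (ho : IsAbsorber H o) (ht : Function.Injective t) :
    Matchable H (univ.image o ∪ univ.image t) := by
  have himage : univ.image o ∪ univ.image t = univ.image (Sum.elim o t) := by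
    ext v; simp
  rw [himage]
  refine Matchable.image_of_fibers (ho.1.sumElim ht h.1)
    (Sum.elim (Sum.elim (fun _ => none) fun p => some p.1) id) fun c => ?_
  cases c with
  | none => convert h.2.1 using 1; ext v; simp [eq_comm, or_comm]
  | some i => convert h.2.2 i using 1; ext v; simp [eq_comm, or_comm]

theorem exists_injective_image_eq {ι : Type*} [Fintype ι] {T : Finset V}
    (hT : Fintype.card ι = #T) : ∃ t : ι → V, Function.Injective t ∧ univ.image t = T := by
  let e : ι ≃ T := Fintype.equivOfCardEq (by simpa using hT)
  refine ⟨fun a => e a, Subtype.val_injective.comp e.injective, ?_⟩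
  ext v
  simpa using ⟨fun ⟨a, ha⟩ => ha ▸ (e a).2, fun hv => ⟨e.symm ⟨v, hv⟩, by simp⟩⟩

theorem Matchable.biUnion_union_of_absorbsTuple {q : ℕ}
    {S : Finset (AbsorberIndex r → V)} (hS : ∀ o ∈ S, IsAbsorber H o)
    (hd : (S : Set (AbsorberIndex r → V)).PairwiseDisjoint fun o => univ.image o) {R : Finset V}
    (hR : Disjoint (S.biUnion fun o => univ.image o) R) (hcard : #R = (r + 1) * q)
    (hq : ∀ t, q ≤ #{o ∈ S | AbsorbsTuple H o t}) :
    Matchable H ((S.biUnion fun o => univ.image o) ∪ R) := by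
  induction q generalizing S R with
  | zero =>
    obtain rfl : R = ∅ := by simpa using hcard
    rw [union_empty]
    exact Matchable.biUnion (fun o ho => (hS o ho).matchable) hd
  | succ q ih =>
    obtain ⟨T, hTR, hT⟩ : ∃ T ⊆ R, #T = r + 1 := exists_subset_card_eq (by rw [hcard]; lia)
    obtain ⟨t, htinj, rfl⟩ : ∃ t : Option (Fin r) → V, Function.Injective t ∧ univ.image t = T :=
      exists_injective_image_eq (by simp [hT])
    obtain ⟨o, ho⟩ : ({o ∈ S | AbsorbsTuple H o t} : Finset _).Nonempty :=
      card_pos.1 (q.succ_pos.trans_le (hq t))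
    obtain ⟨hoS, hot⟩ := mem_filter.1 ho
    set T := univ.image t
    have hTo : Matchable H (univ.image o ∪ T) := hot.matchable (hS o hoS) htinj
    rw [← insert_erase hoS, biUnion_insert, disjoint_union_left] at hR
    rw [← insert_erase hoS, coe_insert,
      Set.pairwiseDisjoint_insert_of_notMem (by simp)] at hd
    have hrest : Matchable H (((S.erase o).biUnion fun o => univ.image o) ∪ R \ T) := by
      refine ih (fun o' ho' => hS o' (mem_of_mem_erase ho')) hd.1 (hR.2.mono_right sdiff_subset)
        ?_ fun t' => ?_
      · rw [card_sdiff_of_subset hTR, hcard, hT]; lia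
      · rw [filter_erase]
        exact (Nat.le_sub_one_of_lt (hq t')).trans pred_card_le_card_erase
    have hsplit : (S.biUnion fun o => univ.image o) ∪ R =
        (univ.image o ∪ T) ∪ (((S.erase o).biUnion fun o => univ.image o) ∪ R \ T) := by
      rw [union_union_union_comm, union_sdiff_of_subset hTR,
        ← biUnion_insert (t := fun o => univ.image o), insert_erase hoS]
    rw [hsplit]
    refine hTo.union hrest (disjoint_union_left.2 ⟨disjoint_union_right.2 ⟨?_, ?_⟩,
      disjoint_union_right.2 ⟨?_, disjoint_sdiff⟩⟩)
    · exact (disjoint_biUnion_right _ _ _).2 hd.2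
    · exact hR.1.mono_right sdiff_subset
    · exact (hR.2.mono_right hTR).symm

end Absorbers

section CountAbsorbers

theorem card_mul_pow_le_card_sum_prod {ι J V : Type*} [Fintype ι] [Fintype J] [Fintype V]
    [DecidableEq ι] [DecidableEq J] [DecidableEq V] (P : Finset (ι → V))
    (R : ι → V → Finset (J → V)) {m : ℝ} (hm : 0 ≤ m) (h : ∀ i u, m ≤ #(R i u)) :
    #P * m ^ Fintype.card ι ≤ #{o : ι ⊕ ι × J → V | (fun i => o (.inl i)) ∈ P ∧
      ∀ i, (fun j => o (.inr (i, j))) ∈ R i (o (.inl i))} := by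
  calc #P * m ^ Fintype.card ι = ∑ _u ∈ P, ∏ _i : ι, m := by simp
    _ ≤ ∑ u ∈ P, ∏ i, (#(R i (u i)) : ℝ) :=
        sum_le_sum fun u _ => prod_le_prod (fun _ _ => hm) fun i _ => h i (u i)
    _ = (#(P.sigma fun u => Fintype.piFinset fun i => R i (u i)) : ℝ) := by
        simp [card_sigma, Fintype.card_piFinset]
    _ ≤ _ := Nat.cast_le.2 <| card_le_card_of_injOn
        (fun x => Sum.elim x.1 fun p => x.2 p.1 p.2) (fun x hx => by simpa using hx) ?_
  rintro ⟨u, w⟩ - ⟨u', w'⟩ - hx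
  obtain rfl : u = u' := funext fun i => congrFun hx (.inl i)
  obtain rfl : w = w' := funext fun i => funext fun j => congrFun hx (.inr (i, j))
  rfl

variable {V : Type*} [Fintype V] [DecidableEq V] {r : ℕ} {H : Finset (Finset V)} {c : ℝ}

theorem mul_pow_le_card_common_link
    (hdeg : ∀ u, c * (Fintype.card V : ℝ) ^ r ≤ tupleDegree r H u) (u v : V) :
    (2 * c - 1) * (Fintype.card V : ℝ) ^ r ≤
      #{f : Fin r → V | insert v (univ.image f) ∈ H ∧ insert u (univ.image f) ∈ H} := by
  let link (w : V) : Finset (Fin r → V) := {f | insert w (univ.image f) ∈ H}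
  have hinter := card_union_add_card_inter (link v) (link u)
  have hunion := card_le_univ (link v ∪ link u)
  rw [← filter_and] at hinter
  rw [Fintype.card_fun, Fintype.card_fin] at hunion
  have hu := hdeg u
  have hv := hdeg v
  unfold tupleDegree at hu hv
  rify at hinter hunion
  linarith

theorem mul_pow_le_card_absorbing (hc : 1 / 2 ≤ c)
    (hdeg : ∀ u, c * (Fintype.card V : ℝ) ^ r ≤ tupleDegree r H u) (t : Option (Fin r) → V) :
    c * (2 * c - 1) ^ r * (Fintype.card V : ℝ) ^ Fintype.card (AbsorberIndex r) ≤
      #{o : AbsorberIndex r → V | insert (t none) (univ.image fun i => o (.inl i)) ∈ H ∧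
        ∀ i, insert (t (some i)) (univ.image fun j => o (.inr (i, j))) ∈ H ∧
          insert (o (.inl i)) (univ.image fun j => o (.inr (i, j))) ∈ H} := by
  have h2c : 0 ≤ 2 * c - 1 := by linarith
  have hcount := card_mul_pow_le_card_sum_prod
    ({u | insert (t none) (univ.image u) ∈ H} : Finset (Fin r → V))
    (fun i u => {f : Fin r → V | insert (t (some i)) (univ.image f) ∈ H ∧
      insert u (univ.image f) ∈ H})
    (by positivity) fun i u => mul_pow_le_card_common_link hdeg u (t (some i))
  simp only [mem_filter, mem_univ, true_and] at hcount
  refine le_trans ?_ hcount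
  calc c * (2 * c - 1) ^ r * (Fintype.card V : ℝ) ^ Fintype.card (AbsorberIndex r)
      = (c * Fintype.card V ^ r) * ((2 * c - 1) * Fintype.card V ^ r) ^ r := by
        simp only [AbsorberIndex, Fintype.card_sum, Fintype.card_prod, Fintype.card_fin]
        rw [mul_pow]
        ring
    _ ≤ _ := by
        rw [Fintype.card_fin]
        gcongr
        exact hdeg (t none)

theorem mul_pow_le_card_isAbsorber (hc : 1 / 2 ≤ c)
    (hdeg : ∀ u, c * (Fintype.card V : ℝ) ^ r ≤ tupleDegree r H u) {W : Finset V}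
    (hW : (Fintype.card (AbsorberIndex r) : ℝ) ^ 2 +
      Fintype.card (AbsorberIndex r) * (#W + (r + 1)) ≤
        c * (2 * c - 1) ^ r / 2 * Fintype.card V) (t : Option (Fin r) → V) :
    c * (2 * c - 1) ^ r / 2 * (Fintype.card V : ℝ) ^ Fintype.card (AbsorberIndex r) ≤
      #{o | (IsAbsorber H o ∧ AbsorbsTuple H o t) ∧ Disjoint (univ.image o) W} := by
  set k := Fintype.card (AbsorberIndex r)
  have : Nonempty V := ⟨t none⟩
  let W' := W ∪ univ.image t
  have hW' : (#W' : ℝ) ≤ #W + (r + 1) := by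
    have himage : #(univ.image t) ≤ r + 1 := card_image_le.trans_eq (by simp)
    exact_mod_cast (card_union_le W (univ.image t)).trans (by lia)
  let bad : Finset (AbsorberIndex r → V) := {o | ¬ (Function.Injective o ∧ ∀ p, o p ∉ W')}
  have hbad : (#bad : ℝ) ≤ c * (2 * c - 1) ^ r / 2 * Fintype.card V ^ k := by
    have hle := card_not_injective_and_notMem_mul_le (I := AbsorberIndex r) W'
    rify at hle
    refine le_of_mul_le_mul_right (a := (Fintype.card V : ℝ)) (hle.trans ?_) (by positivity)
    calc _ ≤ (c * (2 * c - 1) ^ r / 2 * Fintype.card V) * (Fintype.card V : ℝ) ^ k := by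
          gcongr; exact le_trans (by gcongr) hW
      _ = _ := by ring
  suffices hle : _ ≤ (#{o | (IsAbsorber H o ∧ AbsorbsTuple H o t) ∧ Disjoint (univ.image o) W} +
      #bad : ℝ) by linarith [(mul_pow_le_card_absorbing hc hdeg t).trans hle]
  norm_cast
  refine (card_le_card fun o ho => ?_).trans (card_union_le _ bad)
  simp only [mem_union, mem_filter, mem_univ, true_and, forall_and, bad] at ho ⊢
  refine or_iff_not_imp_right.2 fun hgood => ?_
  obtain ⟨hinj, hoW⟩ := not_not.1 hgood
  refine ⟨⟨⟨hinj, ho.2.2⟩, fun p a hpa => hoW p ?_, ho.1, ho.2.1⟩, ?_⟩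
  · simp [W', hpa]
  · refine disjoint_left.2 fun v hv hvW => ?_
    obtain ⟨p, -, rfl⟩ := mem_image.1 hv
    exact hoW p (mem_union_left _ hvW)

end CountAbsorbers

section Selection

variable {T O V : Type*} [Fintype T] {A : T → O → Prop} [∀ t, DecidablePred (A t)]

theorem exists_mul_sum_le_sum_ite {C : Finset O} (hC : C.Nonempty) {w : T → ℝ} (hw : ∀ t, 0 ≤ w t)
    {p : ℝ} (h : ∀ t, p * #C ≤ #{o ∈ C | A t o}) :
    ∃ o ∈ C, p * ∑ t, w t ≤ ∑ t, if A t o then w t else 0 := by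
  refine exists_le_of_sum_le hC ?_
  calc ∑ _o ∈ C, p * ∑ t, w t = ∑ t, p * #C * w t := by
        rw [sum_const, nsmul_eq_mul, ← mul_sum]; ring
    _ ≤ ∑ t, #{o ∈ C | A t o} * w t := by gcongr with t; exacts [hw t, h t]
    _ = ∑ o ∈ C, ∑ t, if A t o then w t else 0 := by
        rw [sum_comm]
        simp [← sum_filter]

/- In each greedy step, averaging yields an `o` that halves the weights `(1 / 2) ^ #{o ∈ S | A t o}`
of elements `t` carrying at least the proportion `p` of the total weight. -/
theorem sum_half_pow_card_insert_le [DecidableEq O] {S : Finset O} {o : O} (ho : o ∉ S) {p : ℝ}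
    (h : p * ∑ t, (1 / 2 : ℝ) ^ #{o ∈ S | A t o} ≤
      ∑ t, if A t o then (1 / 2 : ℝ) ^ #{o ∈ S | A t o} else 0) :
    ∑ t, (1 / 2 : ℝ) ^ #{o' ∈ insert o S | A t o'} ≤
      (1 - p / 2) * ∑ t, (1 / 2 : ℝ) ^ #{o ∈ S | A t o} := by
  have hterm : ∀ t, (1 / 2 : ℝ) ^ #{o' ∈ insert o S | A t o'} = (1 / 2 : ℝ) ^ #{o ∈ S | A t o} -
      1 / 2 * if A t o then (1 / 2 : ℝ) ^ #{o ∈ S | A t o} else 0 := by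
    intro t
    rw [filter_insert]
    split_ifs with hA
    · rw [card_insert_of_notMem (by simp [ho]), pow_succ]; ring
    · ring
  simp only [hterm, sum_sub_distrib, ← mul_sum]
  linarith

theorem exists_disjoint_family [Nonempty T] [Fintype O] [Nonempty O] [DecidableEq V]
    {supp : O → Finset V} (hne : ∀ o, (supp o).Nonempty) {s : ℕ} (hs : ∀ o, #(supp o) ≤ s)
    {p : ℝ} (hp : 0 < p) (hp1 : p ≤ 1) {m : ℕ}
    (h : ∀ W, #W ≤ m * s → ∀ t, p * Fintype.card O ≤ #{o | A t o ∧ Disjoint (supp o) W}) :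
    ∃ S : Finset O, #S = m ∧ (S : Set O).PairwiseDisjoint supp ∧ (∀ o ∈ S, ∃ t, A t o) ∧
      ∑ t, (1 / 2 : ℝ) ^ #{o ∈ S | A t o} ≤ (1 - p / 2) ^ m * Fintype.card T := by
  classical
  induction m with
  | zero => exact ⟨∅, by simp⟩
  | succ m ih =>
    obtain ⟨S, hcard, hd, hS, hsum⟩ := ih fun W hW => h W (hW.trans (by gcongr; lia))
    let C : Finset O := {o | (∃ t, A t o) ∧ Disjoint (supp o) (S.biUnion supp)}
    have hC : ∀ t, p * Fintype.card O ≤ #{o ∈ C | A t o} := by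
      intro t
      refine (h (S.biUnion supp) ?_ t).trans (Nat.cast_le.2 (card_le_card fun o ho => ?_))
      · exact (card_biUnion_le_card_mul _ _ _ fun o _ => hs o).trans (by rw [hcard]; gcongr; lia)
      · simp only [C, mem_filter, mem_univ, true_and] at ho ⊢
        exact ⟨⟨⟨t, ho.1⟩, ho.2⟩, ho.1⟩
    have hCne : C.Nonempty := by
      have hpos := (show 0 < p * Fintype.card O by positivity).trans_le (hC (Classical.arbitrary T))
      exact (card_pos.1 (by exact_mod_cast hpos)).mono (filter_subset _ _)
    obtain ⟨o, ho, hstep⟩ := exists_mul_sum_le_sum_ite (A := A) hCne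
      (w := fun t => (1 / 2 : ℝ) ^ #{o ∈ S | A t o}) (fun t => by positivity)
      fun t => le_trans (by gcongr; exact card_le_univ C) (hC t)
    obtain ⟨ho, hdisj⟩ := (mem_filter.1 ho).2
    have hdo := (disjoint_biUnion_right _ _ _).1 hdisj
    have hoS : o ∉ S := fun hoS => (hne o).ne_empty (disjoint_self.1 (hdo o hoS))
    refine ⟨insert o S, by rw [card_insert_of_notMem hoS, hcard], ?_, ?_, ?_⟩
    · rw [coe_insert]
      exact hd.insert fun o' ho' _ => hdo o' ho'
    · simpa using ⟨ho, hS⟩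
    · refine (sum_half_pow_card_insert_le hoS hstep).trans ?_
      rw [pow_succ', mul_assoc]
      gcongr
      linarith

end Selection

theorem exists_mul_le_of_half_pow_le {ρ θ : ℝ} (hρ : 0 < ρ) (hρ1 : ρ < 1) (hθ : 0 < θ) (k : ℕ) :
    ∃ β : ℝ, 0 < β ∧ ∀ᶠ n : ℕ in Filter.atTop, ∀ x : ℕ,
      (1 / 2 : ℝ) ^ x ≤ ρ ^ ⌊θ * n⌋₊ * (n : ℝ) ^ k → β * n ≤ x := by
  let σ := ρ ^ (θ / 2)
  have hσ : 0 < σ := Real.rpow_pos_of_pos hρ _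
  have hσ1 : σ < 1 := Real.rpow_lt_one hρ.le hρ1 (by positivity)
  refine ⟨Real.logb (1 / 2) σ,
    Real.logb_pos_of_base_lt_one (by norm_num) (by norm_num) hσ hσ1, ?_⟩
  have hlim := tendsto_pow_const_mul_const_pow_of_abs_lt_one k
    (show |σ| < 1 by rwa [abs_of_pos hσ])
  filter_upwards [hlim.eventually_le_const hρ] with n hn x hx
  have hpow : ρ ^ ⌊θ * n⌋₊ * ρ ≤ σ ^ n * σ ^ n := by
    calc ρ ^ ⌊θ * n⌋₊ * ρ = ρ ^ ((⌊θ * n⌋₊ + 1 : ℕ) : ℝ) := by rw [Real.rpow_natCast, pow_succ]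
      _ ≤ ρ ^ (θ * n) := by
          refine Real.rpow_le_rpow_of_exponent_ge hρ hρ1.le ?_
          exact_mod_cast (Nat.lt_floor_add_one _).le
      _ = σ ^ n * σ ^ n := by
          rw [← mul_pow, ← Real.rpow_add hρ, add_halves, Real.rpow_mul hρ.le, Real.rpow_natCast]
  have hle : (1 / 2 : ℝ) ^ x ≤ σ ^ n := by
    refine le_of_mul_le_mul_right (a := ρ) ?_ hρ
    calc (1 / 2 : ℝ) ^ x * ρ ≤ ρ ^ ⌊θ * n⌋₊ * (n : ℝ) ^ k * ρ := by gcongr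
      _ = ρ ^ ⌊θ * n⌋₊ * ρ * (n : ℝ) ^ k := by ring
      _ ≤ σ ^ n * σ ^ n * (n : ℝ) ^ k := by gcongr
      _ = σ ^ n * ((n : ℝ) ^ k * σ ^ n) := by ring
      _ ≤ σ ^ n * ρ := by gcongr
  have hlog := (Real.logb_le_logb_of_base_lt_one (b := 1 / 2) (by norm_num) (by norm_num)
    (by positivity) (by positivity)).2 hle
  rwa [Real.logb_pow, Real.logb_pow, Real.logb_self_eq_one_iff.2 (by norm_num), mul_one,
    mul_comm] at hlog

theorem exists_isAbsorber_family {V : Type*} [Fintype V] [DecidableEq V] [Nonempty V] {r : ℕ}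
    (hr : 0 < r) {H : Finset (Finset V)} {c : ℝ} (hc : 1 / 2 < c) (hc1 : c ≤ 1)
    (hdeg : ∀ u, c * (Fintype.card V : ℝ) ^ r ≤ tupleDegree r H u) {m : ℕ}
    (hm : (Fintype.card (AbsorberIndex r) : ℝ) ^ 2 +
      Fintype.card (AbsorberIndex r) * (m * Fintype.card (AbsorberIndex r) + (r + 1)) ≤
        c * (2 * c - 1) ^ r / 2 * Fintype.card V) :
    ∃ S : Finset (AbsorberIndex r → V), #S = m ∧ (∀ o ∈ S, IsAbsorber H o) ∧
      (S : Set (AbsorberIndex r → V)).PairwiseDisjoint (fun o => univ.image o) ∧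
      ∀ t, (1 / 2 : ℝ) ^ #{o ∈ S | AbsorbsTuple H o t} ≤
        (1 - c * (2 * c - 1) ^ r / 4) ^ m * (Fintype.card V : ℝ) ^ (r + 1) := by
  have : Nonempty (AbsorberIndex r) := ⟨.inl ⟨0, hr⟩⟩
  have hpow : 0 < (2 * c - 1) ^ r := pow_pos (by linarith) _
  have hpow1 : (2 * c - 1) ^ r ≤ 1 := pow_le_one₀ (by linarith) (by linarith)
  obtain ⟨S, hcard, hd, hS, hsum⟩ := exists_disjoint_family (T := Option (Fin r) → V)
    (A := fun t o => IsAbsorber H o ∧ AbsorbsTuple H o t) (p := c * (2 * c - 1) ^ r / 2) (m := m)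
    (fun o : AbsorberIndex r → V => univ_nonempty.image o) (fun o => card_image_le)
    (by positivity) (by nlinarith) fun W hW t => by
      rw [card_univ] at hW
      rify at hW
      rw [Fintype.card_fun]
      push_cast
      exact mul_pow_le_card_isAbsorber hc.le hdeg (le_trans (by gcongr) hm) t
  have hSabs : ∀ o ∈ S, IsAbsorber H o := fun o ho => (hS o ho).choose_spec.1
  refine ⟨S, hcard, hSabs, hd, fun t => ?_⟩
  have hfilter : {o ∈ S | AbsorbsTuple H o t} = {o ∈ S | IsAbsorber H o ∧ AbsorbsTuple H o t} :=
    filter_congr fun o ho => (and_iff_right (hSabs o ho)).symm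
  have hle := (single_le_sum (fun t _ => by positivity) (mem_univ t)).trans hsum
  rw [hfilter]
  refine hle.trans_eq ?_
  simp only [Fintype.card_fun, Fintype.card_option, Fintype.card_fin]
  push_cast
  ring

theorem exists_absorbing_family {r : ℕ} (hr : 0 < r) {c ω : ℝ} (hc : 1 / 2 < c) (hc1 : c ≤ 1)
    (hω : 0 < ω) :
    ∃ β : ℝ, 0 < β ∧ ∃ n₀, ∀ (V : Type*) [Fintype V] [DecidableEq V], n₀ ≤ Fintype.card V →
      ∀ H : Finset (Finset V), (∀ u, c * (Fintype.card V : ℝ) ^ r ≤ tupleDegree r H u) →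
      ∃ S : Finset (AbsorberIndex r → V), (∀ o ∈ S, IsAbsorber H o) ∧
        (S : Set (AbsorberIndex r → V)).PairwiseDisjoint (fun o => univ.image o) ∧
        (#(S.biUnion fun o => univ.image o) : ℝ) ≤ ω * Fintype.card V ∧
        ∀ t, β * Fintype.card V ≤ #{o ∈ S | AbsorbsTuple H o t} := by
  let k := Fintype.card (AbsorberIndex r)
  have : Nonempty (AbsorberIndex r) := ⟨.inl ⟨0, hr⟩⟩
  have hk : (0 : ℝ) < k := by exact_mod_cast Fintype.card_pos
  let q := c * (2 * c - 1) ^ r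
  have hpow : 0 < (2 * c - 1) ^ r := pow_pos (by linarith) _
  have hpow1 : (2 * c - 1) ^ r ≤ 1 := pow_le_one₀ (by linarith) (by linarith)
  have hq : 0 < q := by positivity
  have hq1 : q ≤ 1 := mul_le_one₀ hc1 hpow.le hpow1
  let θ := min (ω / k) (q / (4 * k ^ 2))
  have hθ : 0 < θ := lt_min (by positivity) (by positivity)
  have hθω : θ * k ≤ ω := (le_div_iff₀ hk).1 (min_le_left _ _)
  have hθq : θ * (4 * k ^ 2) ≤ q := (le_div_iff₀ (by positivity)).1 (min_le_right _ _)
  obtain ⟨β, hβ, hev⟩ := exists_mul_le_of_half_pow_le (ρ := 1 - q / 4) (by linarith) (by linarith)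
    hθ (r + 1)
  obtain ⟨n₀, hn₀⟩ := Filter.eventually_atTop.1 <| hev.and <| (Filter.eventually_ge_atTop 1).and <|
    tendsto_natCast_atTop_atTop.eventually_ge_atTop ((k ^ 2 + k * (r + 1)) / (q / 4))
  refine ⟨β, hβ, n₀, fun V _ _ hV H hdeg => ?_⟩
  obtain ⟨hβn, hpos, hn⟩ := hn₀ _ hV
  have : Nonempty V := Fintype.card_pos_iff.1 hpos
  rw [div_le_iff₀ (by positivity)] at hn
  have hm : (⌊θ * Fintype.card V⌋₊ : ℝ) ≤ θ * Fintype.card V := Nat.floor_le (by positivity)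
  obtain ⟨S, hcard, hS, hd, hsum⟩ := exists_isAbsorber_family (m := ⌊θ * Fintype.card V⌋₊)
    hr hc hc1 hdeg <| by
      change (k : ℝ) ^ 2 + k * (⌊θ * Fintype.card V⌋₊ * k + (r + 1)) ≤ q / 2 * Fintype.card V
      have hmk : (⌊θ * Fintype.card V⌋₊ : ℝ) * (4 * k ^ 2) ≤ q * Fintype.card V :=
        (mul_le_mul_of_nonneg_right hm (by positivity)).trans (by rw [mul_right_comm]; gcongr)
      linarith
  refine ⟨S, hS, hd, ?_, fun t => hβn _ (hsum t)⟩
  calc (#(S.biUnion fun o => univ.image o) : ℝ) ≤ #S * k := by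
        exact_mod_cast card_biUnion_le_card_mul _ _ _ fun o _ => card_image_le
    _ ≤ θ * k * Fintype.card V := by rw [hcard, mul_right_comm]; gcongr
    _ ≤ ω * Fintype.card V := by gcongr

/-! ### Perfect matchings -/

section PerfectMatching

variable {V : Type*} [Fintype V] [DecidableEq V] {r : ℕ} {H : Finset (Finset V)}

theorem exists_isMatching_forall_card_le {V : Type*} (H : Finset (Finset V)) :
    ∃ M, IsMatching H M ∧ ∀ M', IsMatching H M' → #M' ≤ #M := by
  classical
  obtain ⟨M, hM, hmax⟩ := exists_max_image {M ∈ H.powerset | IsMatching H M} card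
    ⟨∅, mem_filter.2 ⟨empty_mem_powerset H, empty_subset H, by simp⟩⟩
  exact ⟨M, (mem_filter.1 hM).2, fun M' hM' =>
    hmax M' (mem_filter.2 ⟨mem_powerset.2 hM'.1, hM'⟩)⟩

theorem sub_mul_pow_le_tupleDegree_filter_disjoint {c ω : ℝ} {W : Finset V}
    (hW : (#W : ℝ) ≤ ω * Fintype.card V) {u : V} (hu : u ∉ W)
    (hdeg : c * (Fintype.card V : ℝ) ^ r ≤ tupleDegree r H u) :
    (c - r * ω) * (Fintype.card V : ℝ) ^ r ≤ tupleDegree r {e ∈ H | Disjoint e W} u := by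
  have hsplit : tupleDegree r H u ≤
      tupleDegree r {e ∈ H | Disjoint e W} u + #{f : Fin r → V | ∃ i, f i ∈ W} := by
    refine (card_le_card fun f => ?_).trans (card_union_le _ _)
    by_cases hf : ∃ i, f i ∈ W
    · simp [hf]
    · have hfW : Disjoint (insert u (univ.image f)) W := by simpa [disjoint_left, hu] using hf
      exact fun h => mem_union_left _ (mem_filter.2
        ⟨mem_univ f, mem_filter.2 ⟨(mem_filter.1 h).2, hfW⟩⟩)
  have hhit : (#{f : Fin r → V | ∃ i, f i ∈ W} : ℝ) ≤ r * ω * (Fintype.card V : ℝ) ^ r := by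
    have hcount := card_exists_mem_mul_le (I := Fin r) W
    rw [Fintype.card_fin] at hcount
    rify at hcount
    have hV : (0 : ℝ) < Fintype.card V := mod_cast Fintype.card_pos_iff.2 ⟨u⟩
    refine le_of_mul_le_mul_right (hcount.trans ?_) hV
    calc r * #W * (Fintype.card V : ℝ) ^ r
        ≤ r * (ω * Fintype.card V) * (Fintype.card V : ℝ) ^ r := by gcongr
      _ = _ := by ring
  rify at hsplit
  linarith

theorem matchable_univ_of_absorbing (hH : HyperUniform (r + 1) H)
    (hV : r + 1 ∣ Fintype.card V) {S : Finset (AbsorberIndex r → V)}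
    (hS : ∀ o ∈ S, IsAbsorber H o)
    (hd : (S : Set (AbsorberIndex r → V)).PairwiseDisjoint fun o => univ.image o)
    {M : Finset (Finset V)}
    (hM : IsMatching {e ∈ H | Disjoint e (S.biUnion fun o => univ.image o)} M)
    (hcard : ∀ t, #((S.biUnion fun o => univ.image o) ∪ M.biUnion id)ᶜ ≤
      #{o ∈ S | AbsorbsTuple H o t}) :
    Matchable H univ := by
  set W := S.biUnion fun o => univ.image o
  set C := M.biUnion id
  have hWC : Disjoint W C := (disjoint_biUnion_right _ _ _).2 fun e he =>
    (mem_filter.1 (hM.1 he)).2.symm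
  have hmW : Matchable H W := Matchable.biUnion (fun o ho => (hS o ho).matchable) hd
  have hmC : Matchable H C := ⟨M, ⟨hM.1.trans (filter_subset _ _), hM.2⟩, rfl⟩
  obtain ⟨q, hq⟩ : r + 1 ∣ #(W ∪ C)ᶜ := by
    rw [card_compl]
    exact Nat.dvd_sub hV ((hmW.union hmC hWC).dvd_card hH)
  have hWR : Disjoint W (W ∪ C)ᶜ := disjoint_compl_right.mono_left subset_union_left
  have hCR : Disjoint C (W ∪ C)ᶜ := disjoint_compl_right.mono_left subset_union_right
  have hmR : Matchable H (W ∪ (W ∪ C)ᶜ) :=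
    Matchable.biUnion_union_of_absorbsTuple hS hd hWR hq fun t => by
      have := hcard t
      nlinarith
  have hunion : W ∪ (W ∪ C)ᶜ ∪ C = univ := by
    rw [union_right_comm, union_compl]
  rw [← hunion]
  exact hmR.union hmC (disjoint_union_left.2 ⟨hWC, hCR.symm⟩)

theorem exists_matchable_univ {r : ℕ} (hr : 0 < r) {c₀ c : ℝ} (hF : TupleWeightBound r c₀)
    (hc₀ : 0 ≤ c₀) (hc₀c : c₀ < c) (hc : 1 / 2 < c) (hc1 : c ≤ 1) :
    ∃ n₀, ∀ (V : Type*) [Fintype V] [DecidableEq V], n₀ ≤ Fintype.card V →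
      r + 1 ∣ Fintype.card V → ∀ H : Finset (Finset V), HyperUniform (r + 1) H →
      (∀ u, c * (Fintype.card V : ℝ) ^ r ≤ tupleDegree r H u) → Matchable H univ := by
  obtain ⟨ω, hω, hc₀ω⟩ : ∃ ω : ℝ, 0 < ω ∧ c₀ < c - r * ω := by
    refine ⟨(c - c₀) / (2 * r), div_pos (by linarith) (by positivity), ?_⟩
    have : r * ((c - c₀) / (2 * r)) = (c - c₀) / 2 := by field
    linarith
  obtain ⟨β, hβ, n₁, habs⟩ := exists_absorbing_family hr hc hc1 hω
  obtain ⟨n₂, hcover⟩ := exists_card_uncovered_lt r hF hc₀ hc₀ω hβ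
  refine ⟨max n₁ n₂, fun V _ _ hn hdvd H hH hdeg => ?_⟩
  obtain ⟨S, hS, hd, hW, hSt⟩ := habs V (le_of_max_le_left hn) H hdeg
  set W := S.biUnion fun o => univ.image o
  obtain ⟨M, hM, hmax⟩ := exists_isMatching_forall_card_le {e ∈ H | Disjoint e W}
  refine matchable_univ_of_absorbing hH hdvd hS hd hM fun t => ?_
  have huncovered : (#(W ∪ M.biUnion id)ᶜ : ℝ) < β * Fintype.card V := by
    refine lt_of_le_of_lt (Nat.cast_le.2 (card_le_card fun u hu => ?_)) (hcover V
      (le_of_max_le_right hn) hdvd _ (fun e he => hH e (mem_filter.1 he).1) M hM hmax)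
    rw [compl_union, mem_inter, mem_compl, mem_compl] at hu
    exact mem_filter.2 ⟨mem_univ u, fun e he hue => hu.2 (mem_biUnion.2 ⟨e, he, hue⟩),
      sub_mul_pow_le_tupleDegree_filter_disjoint hW hu.1 (hdeg u)⟩
  exact_mod_cast huncovered.le.trans (hSt t)

end PerfectMatching

/-! ### Minimum vertex degree -/

open Nat in
theorem factorial_mul_hdeg_le_tupleDegree {V : Type*} [Fintype V] [DecidableEq V] {r : ℕ}
    {H : Finset (Finset V)} (hH : HyperUniform (r + 1) H) (u : V) :
    r ! * hdeg H u ≤ tupleDegree r H u := by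
  rw [tupleDegree, hdeg, mul_comm, ← smul_eq_mul,
    card_eq_sum_card_fiberwise (f := fun f : Fin r → V => insert u (univ.image f))
      (t := {e ∈ H | u ∈ e}) fun f hf => by simpa using hf]
  refine card_nsmul_le_sum _ _ _ fun e he => ?_
  obtain ⟨heH, hue⟩ := mem_filter.1 he
  have hcard : #(e.erase u) = r := by rw [card_erase_of_mem hue, hH e heH, Nat.add_sub_cancel]
  have hemb : Fintype.card (Fin r ↪ e.erase u) = r ! := by
    rw [Fintype.card_embedding_eq, Fintype.card_coe, hcard, Fintype.card_fin, descFactorial_self]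
  rw [← hemb, ← Finset.card_univ]
  refine card_le_card_of_injOn (fun g i => g i) (fun g _ => ?_) fun g _ g' _ h => ?_
  · have himage : univ.image (fun i => (g i : V)) = e.erase u := by
      refine eq_of_subset_of_card_le (image_subset_iff.2 fun i _ => (g i).2) ?_
      rw [card_image_of_injective (f := fun i => (g i : V)) univ
        (Subtype.val_injective.comp g.injective), hcard, Finset.card_univ, Fintype.card_fin]
    simp [himage, insert_erase hue, heH]
  · exact DFunLike.ext _ _ fun i => Subtype.ext (congrFun h i)

section Asymptotics

open Filter Topology

open Nat in
theorem tendsto_factorial_mul_choose_div_pow (r : ℕ) :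
    Tendsto (fun n : ℕ => (r ! * (n - 1).choose r : ℝ) / (n : ℝ) ^ r) atTop (𝓝 1) := by
  rw [← tendsto_add_atTop_iff_nat 1]
  have hdesc : Tendsto (fun n : ℕ => (n.descFactorial r : ℝ) / (n : ℝ) ^ r) atTop (𝓝 1) :=
    (Asymptotics.isEquivalent_iff_tendsto_one ((eventually_gt_atTop 0).mono fun n hn => by
      positivity)).1 (isEquivalent_descFactorial r)
  have := hdesc.mul ((tendsto_natCast_div_add_atTop (1 : ℝ)).pow r)
  rw [one_pow, one_mul] at this
  refine this.congr' ((eventually_gt_atTop 0).mono fun n hn => ?_)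
  beta_reduce
  rw [div_pow, div_mul_div_cancel₀ (by positivity), Nat.add_sub_cancel,
    descFactorial_eq_factorial_mul_choose]
  push_cast
  rfl

open Nat in
theorem eventually_mul_pow_le_factorial_mul {r : ℕ} (hr : 0 < r) {c₁ c : ℝ} (h : c₁ < c) :
    ∀ᶠ n : ℕ in atTop, c₁ * (n : ℝ) ^ r ≤ r ! * (c * (n - 1).choose r - 1) := by
  have hpow : Tendsto (fun n : ℕ => (r ! : ℝ) / (n : ℝ) ^ r) atTop (𝓝 0) :=
    ((tendsto_pow_atTop hr.ne').comp tendsto_natCast_atTop_atTop).const_div_atTop _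
  have hlim := ((tendsto_factorial_mul_choose_div_pow r).const_mul c).sub hpow
  rw [mul_one, sub_zero] at hlim
  filter_upwards [hlim.eventually_const_lt h, eventually_gt_atTop 0] with n hn hn0
  have hn' : (0 : ℝ) < (n : ℝ) ^ r := by positivity
  rw [← mul_div_assoc, ← sub_div, lt_div_iff₀ hn'] at hn
  linarith

theorem eventually_mThr_le {r : ℕ} (hr : 0 < r) {c₀ c : ℝ} (hF : TupleWeightBound r c₀)
    (hc₀ : 1 / 2 ≤ c₀) (hc₀1 : c₀ < 1) (hc₀c : c₀ < c) :
    ∀ᶠ n in atTop, r + 1 ∣ n → (mThr (r + 1) n : ℝ) ≤ c * (n - 1).choose r := by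
  obtain ⟨c₁, hc₀₁, hc₁⟩ := exists_between (lt_min hc₀c hc₀1)
  rw [lt_min_iff] at hc₁
  obtain ⟨n₀, hmatch⟩ :=
    exists_matchable_univ hr hF (by linarith) hc₀₁ (by linarith) hc₁.2.le
  filter_upwards [eventually_mul_pow_le_factorial_mul hr hc₁.1, eventually_ge_atTop n₀]
    with n hn hn₀ hdvd
  have hfloor := Nat.floor_le (a := c * (n - 1).choose r)
    (mul_nonneg (by linarith) (Nat.cast_nonneg _))
  refine le_trans (Nat.cast_le.2 (Nat.sInf_le fun H hH hmin => ?_)) hfloor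
  have hdeg (u : Fin n) : c₁ * (Fintype.card (Fin n) : ℝ) ^ r ≤ tupleDegree r H u := by
    have hu : c * (n - 1).choose r - 1 ≤ hdeg H u :=
      (Nat.sub_one_lt_floor _).le.trans (Nat.cast_le.2 (hmin u))
    rw [Fintype.card_fin]
    calc c₁ * (n : ℝ) ^ r ≤ r.factorial * (c * (n - 1).choose r - 1) := hn
      _ ≤ r.factorial * hdeg H u := by gcongr
      _ ≤ tupleDegree r H u := mod_cast factorial_mul_hdeg_le_tupleDegree hH u
  obtain ⟨M, ⟨hMH, hMd⟩, hM⟩ := hmatch (Fin n) (by simpa using hn₀) (by simpa using hdvd) H hH hdeg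
  exact ⟨M, hMH, fun e he f hf hef => hMd he hf hef, fun v => by
    simpa using hM.ge (mem_univ v)⟩

theorem fThr_le {r : ℕ} (hr : 0 < r) {c₀ : ℝ} (hF : TupleWeightBound r c₀) (hc₀ : 1 / 2 ≤ c₀)
    (hc₀1 : c₀ < 1) : fThr (r + 1) ≤ c₀ := by
  refine le_of_forall_gt_imp_ge_of_dense fun c hc => ?_
  have : (atTop ⊓ 𝓟 {n : ℕ | r + 1 ∣ n}).NeBot := by
    rw [← frequently_iff_neBot, frequently_atTop]
    exact fun a => ⟨(r + 1) * a, by nlinarith, dvd_mul_right _ _⟩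
  refine limsup_le_of_le (isCoboundedUnder_le_of_le _ (x := 0) fun n => by positivity) ?_
  rw [eventually_inf_principal]
  filter_upwards [eventually_mThr_le hr hF hc₀ hc₀1 hc] with n hn hdvd
  exact div_le_of_le_mul₀ (by positivity) (by linarith) (hn hdvd)

end Asymptotics

/-! ### The thresholds `gThr k r` -/

theorem isVec_two_iff {k : ℕ} {a : ℕ → ℕ} : IsVec k 2 a ↔ a 0 ≤ a 1 ∧ a 0 + a 1 = k - 1 := by
  simp only [IsVec, sum_range_succ, sum_range_zero, zero_add]
  refine and_congr_left fun _ => ⟨fun h => h 0 1 (by simp) (by simp), fun h i j hij hj => ?_⟩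
  interval_cases j <;> interval_cases i <;> simp [h]

theorem isVec_three_iff {k : ℕ} {a : ℕ → ℕ} :
    IsVec k 3 a ↔ a 0 ≤ a 1 ∧ a 1 ≤ a 2 ∧ a 0 + a 1 + a 2 = k - 1 := by
  simp only [IsVec, sum_range_succ, sum_range_zero, zero_add, ← and_assoc]
  refine and_congr_left fun _ => ⟨fun h => ⟨h 0 1 (by simp) (by simp), h 1 2 (by simp) (by simp)⟩,
    fun ⟨h, h'⟩ i j hij hj => ?_⟩
  interval_cases j <;> interval_cases i <;> simp [h, h', h.trans h']

theorem isVec_four_iff {k : ℕ} {a : ℕ → ℕ} :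
    IsVec k 4 a ↔ a 0 ≤ a 1 ∧ a 1 ≤ a 2 ∧ a 2 ≤ a 3 ∧ a 0 + a 1 + a 2 + a 3 = k - 1 := by
  simp only [IsVec, sum_range_succ, sum_range_zero, zero_add, ← and_assoc]
  refine and_congr_left fun _ => ⟨fun h => ⟨⟨h 0 1 (by simp) (by simp), h 1 2 (by simp) (by simp)⟩,
    h 2 3 (by simp) (by simp)⟩, fun ⟨⟨h, h'⟩, h''⟩ i j hij hj => ?_⟩
  interval_cases j <;> interval_cases i <;>
    simp [h, h', h'', h.trans h', h'.trans h'', (h.trans h').trans h'']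

theorem gThr_eq_gfun {k r : ℕ} {a : ℕ → ℕ} (ha : IsVec k r a)
    (hmax : ∀ b, IsVec k r b → gfun k r b ≤ gfun k r a) : gThr k r = gfun k r a :=
  IsGreatest.csSup_eq ⟨⟨a, ha, rfl⟩, by rintro _ ⟨b, hb, rfl⟩; exact hmax b hb⟩

theorem gThr_three_two : gThr 3 2 = gfun 3 2 (fun _ => 1) := by
  refine gThr_eq_gfun (by simp [isVec_two_iff]) fun b hb => ?_
  have hb' : b 0 = 0 ∧ b 1 = 2 ∨ b 0 = 1 ∧ b 1 = 1 := by grind [isVec_two_iff]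
  rcases hb' with ⟨h0, h1⟩ | ⟨h0, h1⟩ <;>
    norm_num [gfun, prod_range_succ, Nat.factorial, h0, h1]

theorem gThr_four_two : gThr 4 2 = gfun 4 2 (fun i => if i = 0 then 1 else 2) := by
  refine gThr_eq_gfun (by simp [isVec_two_iff]) fun b hb => ?_
  have hb' : b 0 = 0 ∧ b 1 = 3 ∨ b 0 = 1 ∧ b 1 = 2 := by grind [isVec_two_iff]
  rcases hb' with ⟨h0, h1⟩ | ⟨h0, h1⟩ <;>
    norm_num [gfun, prod_range_succ, Nat.factorial, h0, h1]

theorem gThr_five_two : gThr 5 2 = gfun 5 2 (fun i => if i = 0 then 0 else 4) := by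
  refine gThr_eq_gfun (by simp [isVec_two_iff]) fun b hb => ?_
  have hb' : b 0 = 0 ∧ b 1 = 4 ∨ b 0 = 1 ∧ b 1 = 3 ∨ b 0 = 2 ∧ b 1 = 2 := by
    grind [isVec_two_iff]
  rcases hb' with ⟨h0, h1⟩ | ⟨h0, h1⟩ | ⟨h0, h1⟩ <;>
    norm_num [gfun, prod_range_succ, Nat.factorial, h0, h1]

theorem gThr_three_three : gThr 3 3 = gfun 3 3 (fun i => if i < 2 then 0 else 2) := by
  refine gThr_eq_gfun (by simp [isVec_three_iff]) fun b hb => ?_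
  have hb' : b 0 = 0 ∧ (b 1 = 0 ∧ b 2 = 2 ∨ b 1 = 1 ∧ b 2 = 1) := by grind [isVec_three_iff]
  rcases hb' with ⟨h0, ⟨h1, h2⟩ | ⟨h1, h2⟩⟩ <;>
    norm_num [gfun, prod_range_succ, Nat.factorial, h0, h1, h2]

theorem gThr_four_three : gThr 4 3 = gfun 4 3 (fun i => if i < 2 then 0 else 3) := by
  refine gThr_eq_gfun (by simp [isVec_three_iff]) fun b hb => ?_
  have hb' : b 0 = 0 ∧ b 1 = 0 ∧ b 2 = 3 ∨ b 0 = 0 ∧ b 1 = 1 ∧ b 2 = 2 ∨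
      b 0 = 1 ∧ b 1 = 1 ∧ b 2 = 1 := by grind [isVec_three_iff]
  rcases hb' with ⟨h0, h1, h2⟩ | ⟨h0, h1, h2⟩ | ⟨h0, h1, h2⟩ <;>
    norm_num [gfun, prod_range_succ, sum_Ico_succ_top, Nat.factorial, h0, h1, h2]

theorem gThr_three_four : gThr 3 4 = gfun 3 4 (fun i => if i < 3 then 0 else 2) := by
  refine gThr_eq_gfun (by simp [isVec_four_iff]) fun b hb => ?_
  have hb' : b 0 = 0 ∧ b 1 = 0 ∧ (b 2 = 0 ∧ b 3 = 2 ∨ b 2 = 1 ∧ b 3 = 1) := by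
    grind [isVec_four_iff]
  rcases hb' with ⟨h0, h1, ⟨h2, h3⟩ | ⟨h2, h3⟩⟩ <;>
    norm_num [gfun, prod_range_succ, Nat.factorial, h0, h1, h2, h3]

theorem g_gt_f_cases :
    (fThr 3 < gThr 3 2 ∧ gThr 3 2 = gfun 3 2 (fun _ => 1)) ∧
    (fThr 4 < gThr 4 2 ∧ gThr 4 2 = gfun 4 2 (fun i => if i = 0 then 1 else 2)) ∧
    (fThr 5 < gThr 5 2 ∧ gThr 5 2 = gfun 5 2 (fun i => if i = 0 then 0 else 4)) ∧
    (fThr 3 < gThr 3 3 ∧ gThr 3 3 = gfun 3 3 (fun i => if i < 2 then 0 else 2)) ∧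
    (fThr 4 < gThr 4 3 ∧ gThr 4 3 = gfun 4 3 (fun i => if i < 2 then 0 else 3)) ∧
    (fThr 3 < gThr 3 4 ∧ gThr 3 4 = gfun 3 4 (fun i => if i < 3 then 0 else 2)) := by
  have h3 : fThr 3 ≤ 5 / 9 := fThr_le two_pos tupleWeightBound_two (by norm_num) (by norm_num)
  have h4 : fThr 4 ≤ 37 / 64 := fThr_le three_pos tupleWeightBound_three (by norm_num) (by norm_num)
  have h5 : fThr 5 ≤ 16 / 25 := fThr_le four_pos tupleWeightBound_four (by norm_num) (by norm_num)
  rw [gThr_three_two, gThr_four_two, gThr_five_two, gThr_three_three, gThr_four_three,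
    gThr_three_four]
  refine ⟨⟨h3.trans_lt ?_, rfl⟩, ⟨h4.trans_lt ?_, rfl⟩, ⟨h5.trans_lt ?_, rfl⟩,
    ⟨h3.trans_lt ?_, rfl⟩, ⟨h4.trans_lt ?_, rfl⟩, ⟨h3.trans_lt ?_, rfl⟩⟩ <;>
    norm_num [gfun, prod_range_succ, Nat.factorial]
end

section
/- Let n, k, r be positive integers with n ≥ 2k² and r ≥ 2, let H be an n-vertex k-graph with an r-edge-coloring c: E(H) → {C_1,…,C_r}, assume δ(H) > (1/2)·C(n−1,k−1) + ((k²+1)/2)·C(n−2,k−2), and assume H contains no good gadget of the first, second, or third kind. Then for any three distinct vertices u_1, u_2, u_3 of H: if (u_1,u_2) is type S and (u_1,u_3) is type C_iC_j (for some i ≠ j in [r]), then (u_2,u_3) is also type C_iC_j. -/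
open Finset

def nbr {V : Type*} [Fintype V] [DecidableEq V] (H : Finset (Finset V)) (u : V) :
    Finset (Finset V) :=
  (Finset.univ : Finset V).powerset.filter (fun T => u ∉ T ∧ insert u T ∈ H)

def cprof {V : Type*} {r : ℕ} (c : Finset V → Fin r) (M : Finset (Finset V)) : Fin r → ℕ :=
  fun i => (M.filter (fun e => c e = i)).card

def Gadget1 {V : Type*} [Fintype V] [DecidableEq V] {r : ℕ} (H : Finset (Finset V))
    (c : Finset V → Fin r) : Prop :=
  ∃ u v : V, u ≠ v ∧ ∃ T₁ T₂ : Finset V,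
    T₁ ∈ nbr H u ∧ T₁ ∈ nbr H v ∧ T₂ ∈ nbr H u ∧ T₂ ∈ nbr H v ∧ Disjoint T₁ T₂ ∧
    cprof c {insert u T₁, insert v T₂} ≠ cprof c {insert v T₁, insert u T₂}

def Gadget2 {V : Type*} [Fintype V] [DecidableEq V] {r : ℕ} (H : Finset (Finset V))
    (c : Finset V → Fin r) : Prop :=
  ∃ u₁ u₂ u₃ : V, u₁ ≠ u₂ ∧ u₁ ≠ u₃ ∧ u₂ ≠ u₃ ∧ ∃ T₁ T₂ T₃ : Finset V,
    T₁ ∈ nbr H u₂ ∧ T₁ ∈ nbr H u₃ ∧ T₂ ∈ nbr H u₁ ∧ T₂ ∈ nbr H u₃ ∧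
    T₃ ∈ nbr H u₁ ∧ T₃ ∈ nbr H u₂ ∧
    Disjoint T₁ T₂ ∧ Disjoint T₁ T₃ ∧ Disjoint T₂ T₃ ∧
    u₁ ∉ T₁ ∧ u₂ ∉ T₂ ∧ u₃ ∉ T₃ ∧
    cprof c {insert u₂ T₁, insert u₃ T₂, insert u₁ T₃} ≠
      cprof c {insert u₃ T₁, insert u₁ T₂, insert u₂ T₃}

def Gadget3 {V : Type*} [Fintype V] [DecidableEq V] {r : ℕ} (k : ℕ) (H : Finset (Finset V))
    (c : Finset V → Fin r) : Prop :=
  ∃ e ∈ H, ∃ f ∈ H, ∃ ℓ : ℕ, 1 ≤ ℓ ∧ ℓ ≤ k ∧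
    ∃ u v : Fin ℓ → V, ∃ T : Fin ℓ → Finset V,
      Function.Injective u ∧ Function.Injective v ∧
      Finset.image u Finset.univ = e \ f ∧ Finset.image v Finset.univ = f \ e ∧
      (∀ i, T i ∈ nbr H (u i) ∧ T i ∈ nbr H (v i)) ∧
      (∀ i j, i ≠ j → Disjoint (T i) (T j)) ∧
      (∀ i, Disjoint (T i) (e ∪ f)) ∧
      cprof c (insert f (Finset.image (fun i => insert (u i) (T i)) Finset.univ)) ≠
        cprof c (insert e (Finset.image (fun i => insert (v i) (T i)) Finset.univ))

def GadgetFree {V : Type*} [Fintype V] [DecidableEq V] {r : ℕ} (k : ℕ) (H : Finset (Finset V))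
    (c : Finset V → Fin r) : Prop :=
  ¬ Gadget1 H c ∧ ¬ Gadget2 H c ∧ ¬ Gadget3 k H c

def TypeS {V : Type*} [Fintype V] [DecidableEq V] {r : ℕ} (k : ℕ) (H : Finset (Finset V))
    (c : Finset V → Fin r) (u v : V) : Prop :=
  k ^ 2 * ((Fintype.card V - 2).choose (k - 2)) ≤
    ((nbr H u ∩ nbr H v).filter (fun T => c (insert u T) = c (insert v T))).card

def TypeCC {V : Type*} [Fintype V] [DecidableEq V] {r : ℕ} (k : ℕ) (H : Finset (Finset V))
    (c : Finset V → Fin r) (i j : Fin r) (u v : V) : Prop :=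
  k ^ 2 * ((Fintype.card V - 2).choose (k - 2)) ≤
    ((nbr H u ∩ nbr H v).filter (fun T => c (insert u T) = i ∧ c (insert v T) = j)).card

/-!
Each vertex lies in at most `C(n-2, k-2)` members of `nbr H u`, so the `k² C(n-2, k-2)` witnesses
of a type always include one avoiding any prescribed set of fewer than `k²` vertices. Let `T₁` lie
in the links of both `u₂` and `u₃`. If `u₁ ∉ T₁`, choose disjoint witnesses `T₃` of `(u₁, u₂)` being
type `S` and `T₂` of `(u₁, u₃)` being type `C_iC_j`. The two perfect matchings of the resulting
gadget of the second kind have equal profiles; the two edges through `T₃` have the same color and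
cancel, and as `C_i ≠ C_j` what remains forces `u₂T₁u₃` to be `C_iC_j`. If `u₁ ∈ T₁`, compare `T₁`
with a disjoint common link set through a gadget of the first kind. So every common link set of
`u₂` and `u₃` is a witness for `C_iC_j`, and by inclusion–exclusion the degree condition yields
enough of them.
-/

section Links

variable {V : Type*} [Fintype V] [DecidableEq V] {k : ℕ} {H : Finset (Finset V)} {u v : V}
  {T : Finset V}

lemma mem_nbr : T ∈ nbr H u ↔ u ∉ T ∧ insert u T ∈ H := by
  simp [nbr]

lemma card_add_one_of_mem_nbr (hH : HyperUniform k H) (hT : T ∈ nbr H u) : #T + 1 = k := by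
  obtain ⟨huT, huH⟩ := mem_nbr.1 hT
  rw [← card_insert_of_notMem huT, hH _ huH]

lemma card_nbr (H : Finset (Finset V)) (u : V) : #(nbr H u) = hdeg H u := by
  refine card_nbij' (insert u) (erase · u) ?_ ?_ ?_ ?_
  · exact fun T hT ↦ mem_filter.2 ⟨(mem_nbr.1 hT).2, mem_insert_self u T⟩
  · intro e he
    obtain ⟨heH, hue⟩ := mem_filter.1 he
    exact mem_nbr.2 ⟨notMem_erase u e, by rwa [insert_erase hue]⟩
  · exact fun T hT ↦ erase_insert (mem_nbr.1 hT).1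
  · exact fun e he ↦ insert_erase (mem_filter.1 he).2

lemma nbr_subset_powersetCard_erase (hH : HyperUniform k H) (u : V) :
    nbr H u ⊆ powersetCard (k - 1) (univ.erase u) := fun T hT ↦
  mem_powersetCard.2 ⟨subset_erase.2 ⟨subset_univ T, (mem_nbr.1 hT).1⟩,
    Nat.eq_sub_of_add_eq (card_add_one_of_mem_nbr hH hT)⟩

lemma card_nbr_le (hH : HyperUniform k H) (u : V) :
    #(nbr H u) ≤ (Fintype.card V - 1).choose (k - 1) := by
  simpa using card_le_card (nbr_subset_powersetCard_erase hH u)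

lemma card_filter_mem_nbr_le (hH : HyperUniform k H) (u x : V) :
    #{T ∈ nbr H u | x ∈ T} ≤ (Fintype.card V - 2).choose (k - 2) := by
  obtain rfl | hxu := eq_or_ne x u
  · rw [filter_false_of_mem fun T hT ↦ (mem_nbr.1 hT).1, card_empty]
    exact Nat.zero_le _
  calc #{T ∈ nbr H u | x ∈ T}
      ≤ #(powersetCard (k - 2) ((univ.erase u).erase x)) := by
        refine card_le_card_of_injOn (erase · x) (fun T hT ↦ ?_)
          ((erase_injOn' x).mono fun T hT ↦ (mem_filter.1 hT).2)
        obtain ⟨hTu, hxT⟩ := mem_filter.1 hT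
        obtain ⟨hTsub, hTcard⟩ := mem_powersetCard.1 (nbr_subset_powersetCard_erase hH u hTu)
        exact mem_powersetCard.2
          ⟨erase_subset_erase x hTsub, by rw [card_erase_of_mem hxT, hTcard, Nat.sub_sub]⟩
    _ = (Fintype.card V - 2).choose (k - 2) := by
        rw [card_powersetCard, card_erase_of_mem (mem_erase.2 ⟨hxu, mem_univ x⟩),
          card_erase_of_mem (mem_univ u), card_univ, Nat.sub_sub]

lemma card_nbr_union_le (hH : HyperUniform k H) (u v : V) :
    #(nbr H u ∪ nbr H v) ≤
      (Fintype.card V - 1).choose (k - 1) + (Fintype.card V - 2).choose (k - 2) := by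
  have hsub : nbr H u ∪ nbr H v ⊆
      powersetCard (k - 1) (univ.erase u) ∪ {T ∈ nbr H v | u ∈ T} := by
    intro T hT
    by_cases huT : u ∈ T
    · have hTv : T ∈ nbr H v := (mem_union.1 hT).resolve_left fun hTu ↦ (mem_nbr.1 hTu).1 huT
      exact mem_union_right _ (mem_filter.2 ⟨hTv, huT⟩)
    · have hTcard : #T + 1 = k :=
        (mem_union.1 hT).elim (card_add_one_of_mem_nbr hH) (card_add_one_of_mem_nbr hH)
      exact mem_union_left _ (mem_powersetCard.2
        ⟨subset_erase.2 ⟨subset_univ T, huT⟩, Nat.eq_sub_of_add_eq hTcard⟩)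
  calc #(nbr H u ∪ nbr H v)
      ≤ #(powersetCard (k - 1) (univ.erase u)) + #{T ∈ nbr H v | u ∈ T} :=
        (card_le_card hsub).trans (card_union_le _ _)
    _ ≤ (Fintype.card V - 1).choose (k - 1) + (Fintype.card V - 2).choose (k - 2) :=
        add_le_add (by simp) (card_filter_mem_nbr_le hH v u)

lemma lt_card_nbr_inter_of_lt_hdeg_add_hdeg (hH : HyperUniform k H) {m : ℕ}
    (hdegree : (Fintype.card V - 1).choose (k - 1) + (m + 1) * (Fintype.card V - 2).choose (k - 2) <
      hdeg H u + hdeg H v) :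
    m * (Fintype.card V - 2).choose (k - 2) < #(nbr H u ∩ nbr H v) := by
  have hunion := card_nbr_union_le hH u v
  have hsum := card_inter_add_card_union (nbr H u) (nbr H v)
  rw [card_nbr, card_nbr] at hsum
  rw [Nat.add_one_mul] at hdegree
  omega

lemma choose_pos_of_mem_nbr (hH : HyperUniform k H) (hT : T ∈ nbr H u) :
    0 < (Fintype.card V - 2).choose (k - 2) := by
  have hk : k ≤ Fintype.card V := hH _ (mem_nbr.1 hT).2 ▸ card_le_univ (insert u T)
  exact Nat.choose_pos (Nat.sub_le_sub_right hk 2)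

lemma two_le_of_sq_mul_choose_lt_card_nbr (hH : HyperUniform k H)
    (hlt : k ^ 2 * (Fintype.card V - 2).choose (k - 2) < #(nbr H u)) : 2 ≤ k := by
  obtain ⟨T, hT⟩ := card_pos.1 (Nat.zero_lt_of_lt hlt)
  have hk : 1 ≤ k := card_add_one_of_mem_nbr hH hT ▸ Nat.le_add_left 1 #T
  by_contra! hk'
  obtain rfl : k = 1 := by omega
  -- Here `k - 2` truncates to `0`, so the binomial coefficient in `hlt` is `1`.
  have hle := card_nbr_le hH u
  simp only [Nat.sub_self, Nat.reduceSubDiff, Nat.choose_zero_right] at hlt hle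
  omega

lemma exists_mem_disjoint_of_card_lt (hH : HyperUniform k H) {F : Finset (Finset V)} {m : ℕ}
    (hF : F ⊆ nbr H u) (hpos : 0 < (Fintype.card V - 2).choose (k - 2))
    (hm : m * (Fintype.card V - 2).choose (k - 2) ≤ #F) {X : Finset V} (hX : #X < m) :
    ∃ T ∈ F, Disjoint T X := by
  by_contra! hmeet
  have hcover : F ⊆ X.biUnion fun x ↦ {T ∈ nbr H u | x ∈ T} := by
    intro T hT
    obtain ⟨x, hxT, hxX⟩ := not_disjoint_iff.1 (hmeet T hT)
    exact mem_biUnion.2 ⟨x, hxX, mem_filter.2 ⟨hF hT, hxT⟩⟩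
  have hcard : #F ≤ #X * (Fintype.card V - 2).choose (k - 2) :=
    (card_le_card hcover).trans
      (card_biUnion_le_card_mul _ _ _ fun x _ ↦ card_filter_mem_nbr_le hH u x)
  exact (hm.trans hcard).not_gt (Nat.mul_lt_mul_of_pos_right hX hpos)

end Links

section ColorProfiles

variable {V : Type*} {r : ℕ} {c : Finset V → Fin r}

lemma cprof_eq_cprof_iff {M N : Finset (Finset V)} :
    cprof c M = cprof c N ↔ M.val.map c = N.val.map c := by
  simp only [funext_iff, Multiset.ext, cprof, Multiset.count_map, Finset.card, filter_val, eq_comm]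

variable [Fintype V] [DecidableEq V] {H : Finset (Finset V)}

lemma colors_eq_of_not_gadget1 (hG : ¬ Gadget1 H c) {u v : V} (huv : u ≠ v) {T₁ T₂ : Finset V}
    (hT₁ : T₁ ∈ nbr H u ∩ nbr H v) (hT₂ : T₂ ∈ nbr H u ∩ nbr H v) (hdisj : Disjoint T₁ T₂) :
    ({c (insert u T₁), c (insert v T₂)} : Multiset (Fin r)) =
      {c (insert v T₁), c (insert u T₂)} := by
  obtain ⟨hT₁u, hT₁v⟩ := mem_inter.1 hT₁
  obtain ⟨hT₂u, hT₂v⟩ := mem_inter.1 hT₂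
  have hprof : cprof c {insert u T₁, insert v T₂} = cprof c {insert v T₁, insert u T₂} := by
    by_contra hne
    exact hG ⟨u, v, huv, T₁, T₂, hT₁u, hT₁v, hT₂u, hT₂v, hdisj, hne⟩
  have hne : insert u T₁ ≠ insert v T₂ :=
    ne_of_mem_of_not_mem' (mem_insert_self u T₁) (by simp [huv, (mem_nbr.1 hT₂u).1])
  have hne' : insert v T₁ ≠ insert u T₂ :=
    ne_of_mem_of_not_mem' (mem_insert_self v T₁) (by simp [huv.symm, (mem_nbr.1 hT₂v).1])
  simpa [cprof_eq_cprof_iff, insert_val_of_notMem, hne, hne'] using hprof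

lemma colors_eq_of_not_gadget2 (hG : ¬ Gadget2 H c) {u₁ u₂ u₃ : V} (h12 : u₁ ≠ u₂)
    (h13 : u₁ ≠ u₃) (h23 : u₂ ≠ u₃) {T₁ T₂ T₃ : Finset V}
    (hT₁ : T₁ ∈ nbr H u₂ ∩ nbr H u₃) (hT₂ : T₂ ∈ nbr H u₁ ∩ nbr H u₃)
    (hT₃ : T₃ ∈ nbr H u₁ ∩ nbr H u₂)
    (hT₁₂ : Disjoint T₁ T₂) (hT₁₃ : Disjoint T₁ T₃) (hT₂₃ : Disjoint T₂ T₃)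
    (hu₁ : u₁ ∉ T₁) (hu₂ : u₂ ∉ T₂) (hu₃ : u₃ ∉ T₃) :
    ({c (insert u₂ T₁), c (insert u₃ T₂), c (insert u₁ T₃)} : Multiset (Fin r)) =
      {c (insert u₃ T₁), c (insert u₁ T₂), c (insert u₂ T₃)} := by
  obtain ⟨hT₁u₂, hT₁u₃⟩ := mem_inter.1 hT₁
  obtain ⟨hT₂u₁, hT₂u₃⟩ := mem_inter.1 hT₂
  obtain ⟨hT₃u₁, hT₃u₂⟩ := mem_inter.1 hT₃
  have hprof : cprof c {insert u₂ T₁, insert u₃ T₂, insert u₁ T₃} =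
      cprof c {insert u₃ T₁, insert u₁ T₂, insert u₂ T₃} := by
    by_contra hne
    exact hG ⟨u₁, u₂, u₃, h12, h13, h23, T₁, T₂, T₃, hT₁u₂, hT₁u₃, hT₂u₁, hT₂u₃, hT₃u₁, hT₃u₂,
      hT₁₂, hT₁₃, hT₂₃, hu₁, hu₂, hu₃, hne⟩
  have hne {x y : V} {S T : Finset V} (hxy : x ≠ y) (hxT : x ∉ T) : insert x S ≠ insert y T :=
    ne_of_mem_of_not_mem' (mem_insert_self x S) (by simp [hxy, hxT])
  simpa [cprof_eq_cprof_iff, insert_val_of_notMem, hne h23 hu₂, hne h12.symm (mem_nbr.1 hT₃u₂).1,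
    hne h13.symm hu₃, hne h13.symm (mem_nbr.1 hT₂u₃).1, hne h23.symm hu₃,
    hne h12 (mem_nbr.1 hT₃u₁).1] using hprof

end ColorProfiles

lemma eq_and_eq_of_pair_eq_pair {α : Type*} {a b i j : α} (hij : i ≠ j)
    (h : ({a, j} : Multiset α) = {b, i}) : a = i ∧ b = j := by
  have hi : i ∈ ({a, j} : Multiset α) := h ▸ by simp
  have hj : j ∈ ({b, i} : Multiset α) := h ▸ by simp
  simp only [Multiset.insert_eq_cons, Multiset.mem_cons, Multiset.mem_singleton] at hi hj
  exact ⟨(hi.resolve_right hij).symm, (hj.resolve_right hij.symm).symm⟩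

section Propagation

variable {V : Type*} [Fintype V] [DecidableEq V] {k r : ℕ} {H : Finset (Finset V)}
  {c : Finset V → Fin r} {u₁ u₂ u₃ : V} {i j : Fin r}

lemma colors_eq_of_typeS_of_typeCC (hH : HyperUniform k H) (hk : 2 ≤ k) (hG : ¬ Gadget2 H c)
    (h12 : u₁ ≠ u₂) (h13 : u₁ ≠ u₃) (h23 : u₂ ≠ u₃) (hij : i ≠ j)
    (hS : TypeS k H c u₁ u₂) (hCC : TypeCC k H c i j u₁ u₃) {T₁ : Finset V}
    (hT₁ : T₁ ∈ nbr H u₂ ∩ nbr H u₃) (hu₁ : u₁ ∉ T₁) :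
    c (insert u₂ T₁) = i ∧ c (insert u₃ T₁) = j := by
  have hT₁u₂ := (mem_inter.1 hT₁).1
  have hpos := choose_pos_of_mem_nbr hH hT₁u₂
  have hT₁card := card_add_one_of_mem_nbr hH hT₁u₂
  have hcard₁ : #(insert u₃ T₁) < k ^ 2 :=
    calc #(insert u₃ T₁) ≤ k := hT₁card ▸ card_insert_le u₃ T₁
      _ < k ^ 2 := lt_self_pow₀ hk one_lt_two
  obtain ⟨T₃, hT₃mem, hT₃disj⟩ := exists_mem_disjoint_of_card_lt hH
    ((filter_subset _ _).trans inter_subset_left) hpos hS hcard₁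
  obtain ⟨hT₃, hcT₃⟩ := mem_filter.1 hT₃mem
  have hT₃card := card_add_one_of_mem_nbr hH (mem_inter.1 hT₃).1
  have hcard₁₃ : #(insert u₂ (T₁ ∪ T₃)) < k ^ 2 :=
    calc #(insert u₂ (T₁ ∪ T₃)) ≤ #T₁ + #T₃ + 1 :=
          (card_insert_le _ _).trans (Nat.add_le_add_right (card_union_le _ _) 1)
      _ < 2 * k := by omega
      _ ≤ k ^ 2 := by rw [sq]; exact Nat.mul_le_mul_right k hk
  obtain ⟨T₂, hT₂mem, hT₂disj⟩ := exists_mem_disjoint_of_card_lt hH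
    ((filter_subset _ _).trans inter_subset_left) hpos hCC hcard₁₃
  obtain ⟨hT₂, hci, hcj⟩ := mem_filter.1 hT₂mem
  obtain ⟨hu₃, hT₃₁⟩ := disjoint_insert_right.1 hT₃disj
  obtain ⟨hu₂, hT₂₁₃⟩ := disjoint_insert_right.1 hT₂disj
  obtain ⟨hT₂₁, hT₂₃⟩ := disjoint_union_right.1 hT₂₁₃
  have hcolors := colors_eq_of_not_gadget2 hG h12 h13 h23 hT₁ hT₂ hT₃ hT₂₁.symm hT₃₁.symm hT₂₃
    hu₁ hu₂ hu₃
  rw [hci, hcj, hcT₃] at hcolors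
  exact eq_and_eq_of_pair_eq_pair hij
    (add_right_cancel (b := ({c (insert u₂ T₃)} : Multiset (Fin r))) hcolors)

lemma colors_eq_of_forall_notMem (hH : HyperUniform k H) (hG : ¬ Gadget1 H c) {x u v : V}
    (huv : u ≠ v) (hij : i ≠ j)
    (hlarge : k * (Fintype.card V - 2).choose (k - 2) ≤ #(nbr H u ∩ nbr H v))
    (hx : ∀ T ∈ nbr H u ∩ nbr H v, x ∉ T → c (insert u T) = i ∧ c (insert v T) = j)
    {T : Finset V} (hT : T ∈ nbr H u ∩ nbr H v) :
    c (insert u T) = i ∧ c (insert v T) = j := by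
  by_cases hxT : x ∈ T
  · have hTu := (mem_inter.1 hT).1
    have hTcard : #T < k := (card_add_one_of_mem_nbr hH hTu).le
    obtain ⟨T', hT', hdisj⟩ := exists_mem_disjoint_of_card_lt hH inter_subset_left
      (choose_pos_of_mem_nbr hH hTu) hlarge hTcard
    obtain ⟨hci, hcj⟩ := hx T' hT' (disjoint_right.1 hdisj hxT)
    have hcolors := colors_eq_of_not_gadget1 hG huv hT hT' hdisj.symm
    rw [hci, hcj] at hcolors
    exact eq_and_eq_of_pair_eq_pair hij hcolors
  · exact hx T hT hxT

theorem typeS_typeCC_propagate_general (hH : HyperUniform k H) (hG₁ : ¬ Gadget1 H c)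
    (hG₂ : ¬ Gadget2 H c) (h12 : u₁ ≠ u₂) (h13 : u₁ ≠ u₃) (h23 : u₂ ≠ u₃)
    (hdegree : (Fintype.card V - 1).choose (k - 1) +
      (k ^ 2 + 1) * (Fintype.card V - 2).choose (k - 2) < hdeg H u₂ + hdeg H u₃)
    (hij : i ≠ j) (hS : TypeS k H c u₁ u₂) (hCC : TypeCC k H c i j u₁ u₃) :
    TypeCC k H c i j u₂ u₃ := by
  have hlarge := lt_card_nbr_inter_of_lt_hdeg_add_hdeg hH hdegree
  have hlarge' : k * (Fintype.card V - 2).choose (k - 2) ≤ #(nbr H u₂ ∩ nbr H u₃) :=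
    (Nat.mul_le_mul_right _ (Nat.le_self_pow two_ne_zero k)).trans hlarge.le
  have hk : 2 ≤ k := two_le_of_sq_mul_choose_lt_card_nbr hH
    (hlarge.trans_le (card_le_card inter_subset_left))
  have hcolors : ∀ T ∈ nbr H u₂ ∩ nbr H u₃, c (insert u₂ T) = i ∧ c (insert u₃ T) = j :=
    fun _ hT ↦ colors_eq_of_forall_notMem hH hG₁ h23 hij hlarge'
      (fun _ ↦ colors_eq_of_typeS_of_typeCC hH hk hG₂ h12 h13 h23 hij hS hCC) hT
  rw [TypeCC, filter_true_of_mem hcolors]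
  exact hlarge.le

end Propagation

theorem typeS_typeCC_propagate (n k r : ℕ) (hn : 2 * k ^ 2 ≤ n) (hk : 1 ≤ k) (hr : 2 ≤ r)
    (H : Finset (Finset (Fin n))) (hH : HyperUniform k H) (c : Finset (Fin n) → Fin r)
    (hdegree : ∀ v : Fin n,
      (1 / 2 : ℝ) * (((n - 1).choose (k - 1) : ℕ) : ℝ) +
        (((k ^ 2 + 1 : ℕ) : ℝ) / 2) * (((n - 2).choose (k - 2) : ℕ) : ℝ) < (hdeg H v : ℝ))
    (hfree : GadgetFree k H c)
    (u₁ u₂ u₃ : Fin n) (h12 : u₁ ≠ u₂) (h13 : u₁ ≠ u₃) (h23 : u₂ ≠ u₃)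
    (i j : Fin r) (hij : i ≠ j)
    (hS : TypeS k H c u₁ u₂) (hCC : TypeCC k H c i j u₁ u₃) :
    TypeCC k H c i j u₂ u₃ := by
  have hsum : (n - 1).choose (k - 1) + (k ^ 2 + 1) * (n - 2).choose (k - 2) <
      hdeg H u₂ + hdeg H u₃ := by
    rify
    have h := add_lt_add (hdegree u₂) (hdegree u₃)
    push_cast at h
    linarith
  exact typeS_typeCC_propagate_general hH hfree.1 hfree.2.1 h12 h13 h23
    (by rwa [Fintype.card_fin]) hij hS hCC
end

section
/- Let k ≥ 3 and r ≥ 2 be integers and let a = (a_1,…,a_r) ∈ ℕ^r_{k−1}. Then the limit, as n → ∞ over multiples of rk, of δ(H(n,a))/C(n−1,k−1) exists and equals g_r(a). Consequently, g_r(k) = max_{a ∈ ℕ^r_{k−1}} g_r(a). -/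
open Finset

def HVa {W : Type*} [Fintype W] [DecidableEq W] (r : ℕ) (P : ℕ → Finset W) (a : ℕ → ℕ) :
    Finset (Finset W) :=
  (Finset.univ : Finset W).powerset.filter (fun e =>
    ∃ i ∈ Finset.range r, (e ∩ P i).card = a i + 1 ∧
      ∀ j ∈ Finset.range r, j ≠ i → (e ∩ P j).card = a j)

noncomputable def minDeg {W : Type*} [Fintype W] [DecidableEq W] (H : Finset (Finset W)) : ℕ :=
  sInf (Set.range fun v : W => hdeg H v)

def partHna (k r n : ℕ) (a : ℕ → ℕ) (i : ℕ) : Finset (Fin n) :=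
  Finset.univ.filter (fun x : Fin n =>
    (∑ j ∈ Finset.range i, (r * a j + 1) * n / (r * k)) ≤ x.val ∧
      x.val < ∑ j ∈ Finset.range (i + 1), (r * a j + 1) * n / (r * k))

open Filter Topology Asymptotics

/-!
A vertex of `V_l` lies in `(1/|V_l|) · ∑ᵢ bᵢ(l) · ∏ⱼ C(|V_j|, bᵢ(j))` edges, where
`bᵢ(j) = |e ∩ V_j|` for the edges `e` with an extra vertex in `V_i`. If `|V_j| ~ c_j n`, this degree
divided by `n^(k-1)` tends to
`D_l = ∏ⱼ (c_j^{a_j} / a_j!) · (1 + (a_l / c_l) · ∑_{i ≠ l} c_i / (a_i + 1))`,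
so the normalized minimum degree tends to `min_l D_l`.

For `c_j` proportional to `r a_j + 1` put `y_j = (r a_j + 1) / (a_j + 1)` and `S = ∑ y_j`.
Then `D_l - D_0` is a nonnegative multiple of `(a_l - a_0)(S - y_0 y_l)`. As `y` increases with `a`
and is at most `r`, minimality of `a_0` gives `y_0 y_l ≤ r y_0 ≤ S`. Hence the minimum is `D_0`,
which is `g_r(a) / (k-1)!`.
-/

section SetSystems

variable {ι W : Type*} [DecidableEq W] {s : Finset ι} {P : ι → Finset W}

theorem inter_biUnion_attach_eq (hP : (s : Set ι).PairwiseDisjoint P) {f : ∀ i ∈ s, Finset W}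
    (hf : ∀ i hi, f i hi ⊆ P i) {i : ι} (hi : i ∈ s) :
    (s.attach.biUnion fun j => f j j.2) ∩ P i = f i hi := by
  ext w
  simp only [mem_inter, mem_biUnion, mem_attach, true_and, Subtype.exists]
  refine ⟨?_, fun hw => ⟨⟨i, hi, hw⟩, hf i hi hw⟩⟩
  rintro ⟨⟨j, hj, hwj⟩, hwi⟩
  obtain rfl := hP.elim_finset hj hi w (hf j hj hwj) hwi
  exact hwj

theorem card_filter_forall_inter_mem (hP : (s : Set ι).PairwiseDisjoint P)
    {Q : ι → Finset (Finset W)} (hQ : ∀ i ∈ s, ∀ t ∈ Q i, t ⊆ P i) :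
    #{e ∈ (s.biUnion P).powerset | ∀ i ∈ s, e ∩ P i ∈ Q i} = ∏ i ∈ s, #(Q i) := by
  classical
  rw [← card_pi]
  have hsub {f : ∀ i ∈ s, Finset W} (hf : f ∈ s.pi Q) (i : ι) (hi : i ∈ s) : f i hi ⊆ P i :=
    hQ i hi _ (mem_pi.mp hf i hi)
  refine card_bij' (fun e _ i _ => e ∩ P i) (fun f _ => s.attach.biUnion fun i => f i i.2)
    ?_ ?_ ?_ ?_
  · intro e he
    exact mem_pi.mpr (mem_filter.mp he).2
  · intro f hf
    refine mem_filter.mpr ⟨mem_powerset.mpr (biUnion_subset.mpr fun i _ => ?_), fun i hi => ?_⟩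
    · exact (hsub hf i i.2).trans (subset_biUnion_of_mem P i.2)
    · rw [inter_biUnion_attach_eq hP (hsub hf) hi]
      exact mem_pi.mp hf i hi
  · intro e he
    have hsubset : e ⊆ s.biUnion P := mem_powerset.mp (mem_filter.mp he).1
    ext w
    have := @hsubset w
    simp only [mem_biUnion, mem_attach, true_and, Subtype.exists, mem_inter] at this ⊢
    grind
  · intro f hf
    funext i hi
    exact inter_biUnion_attach_eq hP (hsub hf) hi

theorem card_mul_card_powersetCard_filter_mem {S : Finset W} {v : W} (hv : v ∈ S) (b : ℕ) :
    #S * #{e ∈ S.powersetCard b | v ∈ e} = b * (#S).choose b := by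
  rcases b with _ | b
  · simp
  · obtain ⟨p, hp⟩ : ∃ p, #S = p + 1 := Nat.exists_eq_add_one.mpr (card_pos.mpr ⟨v, hv⟩)
    have hstar := card_filter_powersetCard_subset {v} S (b + 1) (by simpa) (by simp)
    simp only [singleton_subset_iff, card_singleton, hp, Nat.add_sub_cancel] at hstar
    rw [hstar, hp, Nat.add_one_mul_choose_eq, mul_comm]

theorem card_mul_card_filter_mem_and_forall_card_inter (hP : (s : Set ι).PairwiseDisjoint P)
    (b : ι → ℕ) {l : ι} (hl : l ∈ s) {v : W} (hv : v ∈ P l) :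
    #(P l) * #{e ∈ (s.biUnion P).powerset | v ∈ e ∧ ∀ i ∈ s, #(e ∩ P i) = b i} =
      b l * ∏ i ∈ s, (#(P i)).choose (b i) := by
  classical
  set Q : ι → Finset (Finset W) := fun i => {t ∈ (P i).powersetCard (b i) | i = l → v ∈ t} with hQ
  have hfilter : {e ∈ (s.biUnion P).powerset | v ∈ e ∧ ∀ i ∈ s, #(e ∩ P i) = b i} =
      {e ∈ (s.biUnion P).powerset | ∀ i ∈ s, e ∩ P i ∈ Q i} := by
    refine filter_congr fun e _ => ?_
    simp only [hQ, mem_filter, mem_powersetCard, inter_subset_right, true_and, mem_inter]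
    grind
  have hQl : #(P l) * #(Q l) = b l * (#(P l)).choose (b l) := by
    rw [← card_mul_card_powersetCard_filter_mem hv]
    simp [hQ]
  have hQne (i : ι) (hi : i ∈ s.erase l) : #(Q i) = (#(P i)).choose (b i) := by
    simp [hQ, ne_of_mem_erase hi]
  rw [hfilter, card_filter_forall_inter_mem hP fun i _ t ht =>
      (mem_powersetCard.mp (mem_filter.mp ht).1).1,
    ← mul_prod_erase s _ hl, ← mul_prod_erase s (fun i => (#(P i)).choose (b i)) hl,
    prod_congr rfl hQne, ← mul_assoc, ← mul_assoc, hQl]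

end SetSystems

section EdgeProfile

variable {ι : Type*} [DecidableEq ι] {s : Finset ι}

/-- The intersection sizes with the parts `V_j` of an edge of `H(n, a)` having its extra vertex in
`V_i`. -/
def edgeProfile (a : ι → ℕ) (i : ι) : ι → ℕ := Function.update a i (a i + 1)

@[simp]
theorem edgeProfile_self (a : ι → ℕ) (i : ι) : edgeProfile a i i = a i + 1 := by
  simp [edgeProfile]

theorem edgeProfile_of_ne (a : ι → ℕ) {i j : ι} (h : j ≠ i) : edgeProfile a i j = a j := by
  simp [edgeProfile, h]

theorem sum_edgeProfile (a : ι → ℕ) {i : ι} (hi : i ∈ s) :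
    ∑ j ∈ s, edgeProfile a i j = ∑ j ∈ s, a j + 1 := by
  rw [edgeProfile, sum_update_of_mem hi, sdiff_singleton_eq_erase, ← add_sum_erase s a hi]
  ring

theorem prod_pow_div_factorial_edgeProfile (a : ι → ℕ) (c : ι → ℝ) {i : ι} (hi : i ∈ s) :
    ∏ j ∈ s, c j ^ edgeProfile a i j / (edgeProfile a i j).factorial =
      (∏ j ∈ s, c j ^ a j / (a j).factorial) * (c i / (a i + 1)) := by
  have hne : ∀ j ∈ s.erase i, c j ^ edgeProfile a i j / ((edgeProfile a i j).factorial : ℝ) =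
      c j ^ a j / (a j).factorial := fun j hj => by
    rw [edgeProfile_of_ne a (ne_of_mem_erase hj)]
  rw [← mul_prod_erase s _ hi, ← mul_prod_erase s (fun j => c j ^ a j / ((a j).factorial : ℝ)) hi,
    prod_congr rfl hne, edgeProfile_self, Nat.factorial_succ, pow_succ]
  push_cast
  field_simp

/-- The degree of a vertex of `V_l` in `H(n, a)`, when `|V_j| = m j` for every `j ∈ s`. -/
noncomputable def partDegree (s : Finset ι) (a m : ι → ℕ) (l : ι) : ℝ :=
  (∑ i ∈ s, (edgeProfile a i l : ℝ) * ∏ j ∈ s, ((m j).choose (edgeProfile a i j) : ℝ)) / m l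

/-- The limit of `partDegree s a m l / n ^ (∑ j ∈ s, a j)` when every `m j` is asymptotic to
`c j * n`. -/
noncomputable def degreeDensity (s : Finset ι) (a : ι → ℕ) (c : ι → ℝ) (l : ι) : ℝ :=
  (∏ j ∈ s, c j ^ a j / (a j).factorial) *
    (1 + a l / c l * ∑ i ∈ s.erase l, c i / (a i + 1))

theorem sum_edgeProfile_mul_prod (a : ι → ℕ) {c : ι → ℝ} {l : ι} (hl : l ∈ s) (hc : c l ≠ 0) :
    (∑ i ∈ s, (edgeProfile a i l : ℝ) *
      ∏ j ∈ s, c j ^ edgeProfile a i j / (edgeProfile a i j).factorial) / c l =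
      degreeDensity s a c l := by
  set p := ∏ j ∈ s, c j ^ a j / ((a j).factorial : ℝ) with hp
  have hsame : (edgeProfile a l l : ℝ) * (p * (c l / (a l + 1))) = p * c l := by
    rw [edgeProfile_self]
    push_cast
    field_simp
  have hother : ∀ i ∈ s.erase l, (edgeProfile a i l : ℝ) * (p * (c i / (a i + 1))) =
      p * a l * (c i / (a i + 1)) := fun i hi => by
    rw [edgeProfile_of_ne a (ne_of_mem_erase hi).symm]
    ring
  rw [sum_congr rfl fun i hi => by rw [prod_pow_div_factorial_edgeProfile a c hi],
    ← add_sum_erase s _ hl, hsame, sum_congr rfl hother, ← mul_sum, degreeDensity,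
    ← hp]
  field_simp

end EdgeProfile

section VertexDegree

variable {W : Type*} [Fintype W] [DecidableEq W] {r : ℕ} {P : ℕ → Finset W} {a : ℕ → ℕ}

theorem mem_HVa_iff {e : Finset W} :
    e ∈ HVa r P a ↔ ∃ i ∈ range r, ∀ j ∈ range r, #(e ∩ P j) = edgeProfile a i j := by
  simp only [HVa, mem_filter, mem_powerset, subset_univ, true_and]
  refine exists_congr fun i => and_congr_right fun hi => ⟨fun ⟨hii, hij⟩ j hj => ?_, fun h => ?_⟩
  · rcases eq_or_ne j i with rfl | hji
    · rw [hii, edgeProfile_self]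
    · rw [hij j hj hji, edgeProfile_of_ne a hji]
  · exact ⟨by rw [h i hi, edgeProfile_self],
      fun j hj hji => by rw [h j hj, edgeProfile_of_ne a hji]⟩

theorem hdeg_HVa_eq_sum (v : W) :
    hdeg (HVa r P a) v =
      ∑ i ∈ range r, #{e | v ∈ e ∧ ∀ j ∈ range r, #(e ∩ P j) = edgeProfile a i j} := by
  rw [hdeg, ← card_biUnion]
  · congr 1
    ext e
    simp only [mem_filter, mem_HVa_iff, mem_biUnion, mem_univ, true_and]
    tauto
  · intro i hi i' _ hne
    refine disjoint_left.mpr fun e he he' => ?_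
    have h := ((mem_filter.mp he).2.2 i hi).symm.trans ((mem_filter.mp he').2.2 i hi)
    rw [edgeProfile_self, edgeProfile_of_ne a hne] at h
    omega

theorem hdeg_HVa (hdisj : (range r : Set ℕ).PairwiseDisjoint P)
    (hcover : (range r).biUnion P = univ) {l : ℕ} (hl : l ∈ range r) {v : W} (hv : v ∈ P l) :
    (hdeg (HVa r P a) v : ℝ) = partDegree (range r) a (fun j => #(P j)) l := by
  have hcard : (#(P l) : ℝ) ≠ 0 := Nat.cast_ne_zero.mpr (card_ne_zero_of_mem hv)
  rw [partDegree, eq_div_iff hcard, hdeg_HVa_eq_sum, mul_comm]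
  norm_cast
  rw [mul_sum]
  refine sum_congr rfl fun i _ => ?_
  rw [← card_mul_card_filter_mem_and_forall_card_inter hdisj (edgeProfile a i) hl hv, hcover,
    powerset_univ]

theorem minDeg_le_hdeg (H : Finset (Finset W)) (v : W) : minDeg H ≤ hdeg H v :=
  Nat.sInf_le (Set.mem_range_self v)

theorem exists_hdeg_eq_minDeg [Nonempty W] (H : Finset (Finset W)) : ∃ v, hdeg H v = minDeg H :=
  Nat.sInf_mem (Set.range_nonempty _)

theorem minDeg_HVa (hdisj : (range r : Set ℕ).PairwiseDisjoint P)
    (hcover : (range r).biUnion P = univ) (hne : ∀ l ∈ range r, (P l).Nonempty)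
    (hr : (range r).Nonempty) :
    (minDeg (HVa r P a) : ℝ) =
      (range r).inf' hr (partDegree (range r) a fun j => #(P j)) := by
  refine le_antisymm (le_inf' _ _ fun l hl => ?_) ?_
  · obtain ⟨v, hv⟩ := hne l hl
    rw [← hdeg_HVa hdisj hcover hl hv]
    exact_mod_cast minDeg_le_hdeg _ v
  · have : Nonempty W := hr.elim fun l hl => (hne l hl).to_type
    obtain ⟨v, hv⟩ := exists_hdeg_eq_minDeg (HVa r P a)
    obtain ⟨l, hl, hvl⟩ := mem_biUnion.mp (hcover ▸ mem_univ v)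
    rw [← hv, hdeg_HVa hdisj hcover hl hvl]
    exact inf'_le _ hl

end VertexDegree

section Asymptotics

variable {α : Type*} {F : Filter α} {x : α → ℝ}

theorem tendsto_choose_div_pow {m : α → ℕ} {c : ℝ} (hm : Tendsto m F atTop)
    (hc : Tendsto (fun n => m n / x n) F (𝓝 c)) (b : ℕ) :
    Tendsto (fun n => ((m n).choose b : ℝ) / x n ^ b) F (𝓝 (c ^ b / b.factorial)) := by
  have hequiv : (fun n => ((m n).choose b : ℝ) / x n ^ b) ~[F]
      fun n => (m n : ℝ) ^ b / b.factorial / x n ^ b :=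
    ((isEquivalent_choose b).comp_tendsto hm).div IsEquivalent.refl
  refine hequiv.tendsto_nhds_iff.mpr (((hc.pow b).div_const _).congr fun n => ?_)
  rw [div_pow, div_right_comm]

theorem tendsto_choose_pred_div_pow (b : ℕ) :
    Tendsto (fun n : ℕ => ((n - 1).choose b : ℝ) / (n : ℝ) ^ b) atTop
      (𝓝 (1 / b.factorial)) := by
  have hratio : Tendsto (fun n : ℕ => ((n - 1 : ℕ) : ℝ) / n) atTop (𝓝 1) := by
    refine (tendsto_add_atTop_iff_nat 1).mp ?_
    simpa using tendsto_natCast_div_add_atTop (1 : ℝ)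
  simpa using tendsto_choose_div_pow (tendsto_sub_atTop_nat 1) hratio b

theorem tendsto_partDegree_div_pow {ι : Type*} [DecidableEq ι] {s : Finset ι} (a : ι → ℕ)
    {m : α → ι → ℕ} {c : ι → ℝ} (hm : ∀ j ∈ s, Tendsto (m · j) F atTop)
    (hc : ∀ j ∈ s, Tendsto (fun n => m n j / x n) F (𝓝 (c j))) {l : ι} (hl : l ∈ s)
    (hcl : c l ≠ 0) :
    Tendsto (fun n => partDegree s a (m n) l / x n ^ ∑ j ∈ s, a j) F
      (𝓝 (degreeDensity s a c l)) := by
  have hlim : Tendsto (fun n => (∑ i ∈ s, (edgeProfile a i l : ℝ) *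
      ∏ j ∈ s, ((m n j).choose (edgeProfile a i j) : ℝ) / x n ^ edgeProfile a i j) /
        (m n l / x n)) F (𝓝 (degreeDensity s a c l)) := by
    rw [← sum_edgeProfile_mul_prod a hl hcl]
    refine (tendsto_finsetSum s fun i _ => ?_).div (hc l hl) hcl
    exact tendsto_const_nhds.mul
      (tendsto_finsetProd s fun j hj => tendsto_choose_div_pow (hm j hj) (hc j hj) _)
  refine hlim.congr' ?_
  filter_upwards [(hc l hl).eventually_ne hcl] with n hn
  have hx : x n ≠ 0 := (div_ne_zero_iff.mp hn).2
  have hnormalize : ∀ i ∈ s, (edgeProfile a i l : ℝ) *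
      ∏ j ∈ s, ((m n j).choose (edgeProfile a i j) : ℝ) / x n ^ edgeProfile a i j =
      (edgeProfile a i l * ∏ j ∈ s, ((m n j).choose (edgeProfile a i j) : ℝ)) /
        x n ^ (∑ j ∈ s, a j + 1) := fun i hi => by
    rw [prod_div_distrib, prod_pow_eq_pow_sum, sum_edgeProfile a hi, mul_div_assoc]
  rw [sum_congr rfl hnormalize, ← sum_div, partDegree, pow_succ]
  field_simp

end Asymptotics

section SmallestPart

variable {ι : Type*} {s : Finset ι} {t : ℝ}

theorem mul_le_sum_of_minimal {a : ι → ℕ} {l₀ : ι} (hmin : ∀ j ∈ s, a l₀ ≤ a j) {l : ι}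
    (hl : l ∈ s) :
    ((#s * a l₀ + 1) / (a l₀ + 1) * ((#s * a l + 1) / (a l + 1)) : ℝ) ≤
      ∑ i ∈ s, ((#s * a i + 1) / (a i + 1) : ℝ) := by
  have hs : (1 : ℝ) ≤ #s := by exact_mod_cast card_pos.mpr ⟨l, hl⟩
  have hle_card : ((#s * a l + 1) / (a l + 1) : ℝ) ≤ #s := by
    rw [div_le_iff₀ (by positivity)]
    linarith
  have hmono (j : ι) (hj : j ∈ s) :
      ((#s * a l₀ + 1) / (a l₀ + 1) : ℝ) ≤ (#s * a j + 1) / (a j + 1) := by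
    have : (a l₀ : ℝ) ≤ a j := by exact_mod_cast hmin j hj
    rw [div_le_div_iff₀ (by positivity) (by positivity)]
    nlinarith
  calc ((#s * a l₀ + 1) / (a l₀ + 1) * ((#s * a l + 1) / (a l + 1)) : ℝ)
      ≤ (#s * a l₀ + 1) / (a l₀ + 1) * #s := by gcongr
    _ = #s • ((#s * a l₀ + 1) / (a l₀ + 1) : ℝ) := by rw [nsmul_eq_mul, mul_comm]
    _ ≤ ∑ i ∈ s, ((#s * a i + 1) / (a i + 1) : ℝ) := card_nsmul_le_sum s _ _ hmono

variable [DecidableEq ι]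

theorem degreeDensity_of_proportional (ht : t ≠ 0) (a : ι → ℕ) {l : ι} (hl : l ∈ s) :
    degreeDensity s a (fun j => (#s * a j + 1) / t) l =
      (∏ j ∈ s, ((#s * a j + 1) / t) ^ a j / ((a j).factorial : ℝ)) *
        (1 + a l / (#s * a l + 1) * (∑ i ∈ s, ((#s * a i + 1) / (a i + 1) : ℝ)) -
          a l / (a l + 1)) := by
  have hterm (i : ι) : ((#s * a i + 1) / t / (a i + 1) : ℝ) = (#s * a i + 1) / (a i + 1) / t :=
    div_right_comm _ _ _
  simp only [degreeDensity, hterm, ← sum_div]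
  rw [← add_sum_erase s _ hl]
  congr 1
  field_simp
  ring

theorem degreeDensity_le_of_minimal (ht : 0 < t) {a : ι → ℕ} {l₀ : ι} (hl₀ : l₀ ∈ s)
    (hmin : ∀ j ∈ s, a l₀ ≤ a j) {l : ι} (hl : l ∈ s) :
    degreeDensity s a (fun j => (#s * a j + 1) / t) l₀ ≤
      degreeDensity s a (fun j => (#s * a j + 1) / t) l := by
  rw [degreeDensity_of_proportional ht.ne' a hl₀, degreeDensity_of_proportional ht.ne' a hl]
  refine mul_le_mul_of_nonneg_left (sub_nonneg.mp ?_) (prod_nonneg fun j _ => by positivity)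
  set S := ∑ i ∈ s, ((#s * a i + 1) / (a i + 1) : ℝ)
  have hdiff : (1 + a l / (#s * a l + 1) * S - a l / (a l + 1) -
      (1 + a l₀ / (#s * a l₀ + 1) * S - a l₀ / (a l₀ + 1)) : ℝ) =
      (a l - a l₀) / ((#s * a l + 1) * (#s * a l₀ + 1)) *
        (S - (#s * a l₀ + 1) / (a l₀ + 1) * ((#s * a l + 1) / (a l + 1))) := by
    field_simp
    ring
  have hle : (a l₀ : ℝ) ≤ a l := by exact_mod_cast hmin l hl
  rw [hdiff]
  exact mul_nonneg (div_nonneg (sub_nonneg.mpr hle) (by positivity))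
    (sub_nonneg.mpr (mul_le_sum_of_minimal hmin hl))

end SmallestPart

section Parts

variable {k r n : ℕ} {a : ℕ → ℕ}

/-- The number `(r * a j + 1) * n / (r * k)` of vertices in the part `V_j` of `H(n, a)`. -/
def partSize (k r n : ℕ) (a : ℕ → ℕ) (j : ℕ) : ℕ := (r * a j + 1) * n / (r * k)

/-- The proportion of the vertices of `H(n, a)` that lie in the part `V_j`. -/
noncomputable def partDensity (k r : ℕ) (a : ℕ → ℕ) (j : ℕ) : ℝ := (r * a j + 1) / (r * k)

theorem mem_partHna_iff {i : ℕ} {x : Fin n} :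
    x ∈ partHna k r n a i ↔ x.val ∈
      Set.Ico (∑ j ∈ range i, partSize k r n a j) (∑ j ∈ range (i + 1), partSize k r n a j) := by
  simp [partHna, partSize]

theorem pairwise_disjoint_partHna : Pairwise (Function.onFun Disjoint (partHna k r n a)) := by
  have hmono : Monotone fun i => ∑ j ∈ range i, partSize k r n a j :=
    fun _ _ h => sum_le_sum_of_subset (range_mono h)
  intro i j hij
  refine disjoint_left.mpr fun x hxi hxj => ?_
  exact Set.disjoint_left.mp (hmono.pairwise_disjoint_on_Ico_succ hij)
    (mem_partHna_iff.mp hxi) (mem_partHna_iff.mp hxj)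

theorem biUnion_partHna (hsize : ∑ j ∈ range r, partSize k r n a j = n) :
    (range r).biUnion (partHna k r n a) = univ := by
  refine eq_univ_of_forall fun x => ?_
  have hx := Ico_subset_biUnion_Ico r (fun i => ∑ j ∈ range i, partSize k r n a j)
    (show x.val ∈ _ by simp [hsize])
  simpa [mem_partHna_iff, and_left_comm] using hx

theorem card_partHna {i : ℕ} (hi : i ∈ range r) (hsize : ∑ j ∈ range r, partSize k r n a j = n) :
    #(partHna k r n a i) = partSize k r n a i := by
  have hle : ∑ j ∈ range (i + 1), partSize k r n a j ≤ n :=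
    (sum_le_sum_of_subset (range_mono (mem_range.mp hi))).trans_eq hsize
  have himage : (partHna k r n a i).map Fin.valEmbedding =
      Ico (∑ j ∈ range i, partSize k r n a j) (∑ j ∈ range (i + 1), partSize k r n a j) := by
    ext x
    simp only [Finset.mem_map, mem_partHna_iff, Fin.valEmbedding_apply, mem_Ico, Set.mem_Ico]
    exact ⟨fun ⟨_, hy, hyx⟩ => hyx ▸ hy, fun hx => ⟨⟨x, hx.2.trans_le hle⟩, hx, rfl⟩⟩
  rw [← card_map Fin.valEmbedding, himage, Nat.card_Ico, sum_range_succ, Nat.add_sub_cancel_left]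

theorem sum_partSize (hk : 0 < k) (hr : 0 < r) (hsum : ∑ i ∈ range r, a i = k - 1)
    (hn : r * k ∣ n) : ∑ j ∈ range r, partSize k r n a j = n := by
  obtain ⟨q, rfl⟩ := hn
  have hsize (j : ℕ) : partSize k r (r * k * q) a j = (r * a j + 1) * q := by
    rw [partSize, mul_left_comm, Nat.mul_div_cancel_left _ (by positivity)]
  simp only [hsize, ← sum_mul, sum_add_distrib, ← mul_sum, hsum, sum_const, card_range,
    smul_eq_mul, mul_one]
  rw [← Nat.mul_add_one, Nat.sub_add_cancel hk]

theorem partSize_pos (hk : 0 < k) (hr : 0 < r) (hn : 0 < n) (hdvd : r * k ∣ n) (j : ℕ) :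
    0 < partSize k r n a j :=
  Nat.div_pos ((Nat.le_of_dvd hn hdvd).trans (Nat.le_mul_of_pos_left _ (Nat.succ_pos _)))
    (by positivity)

theorem tendsto_partSize_atTop (hk : 0 < k) (hr : 0 < r) (j : ℕ) :
    Tendsto (fun n => partSize k r n a j) atTop atTop :=
  tendsto_atTop_mono (fun _ => Nat.div_le_div_right (Nat.le_mul_of_pos_left _ (Nat.succ_pos _)))
    (Nat.tendsto_div_const_atTop (by positivity : r * k ≠ 0))

theorem eventually_pos_and_dvd (d : ℕ) : ∀ᶠ n in atTop ⊓ 𝓟 {n | d ∣ n}, 0 < n ∧ d ∣ n :=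
  eventually_inf_principal.mpr ((eventually_gt_atTop 0).mono fun _ hn hdvd => ⟨hn, hdvd⟩)

theorem tendsto_partSize_div (hk : 0 < k) (hr : 0 < r) (j : ℕ) :
    Tendsto (fun n => (partSize k r n a j : ℝ) / n) (atTop ⊓ 𝓟 {n | r * k ∣ n})
      (𝓝 (partDensity k r a j)) := by
  refine tendsto_const_nhds.congr' ?_
  filter_upwards [eventually_pos_and_dvd (r * k)] with n ⟨hn, hdvd⟩
  rw [partSize, Nat.cast_div (hdvd.mul_left _) (by positivity), partDensity]
  push_cast
  field_simp

end Parts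

section MinimumDegree

variable {k r : ℕ} {a : ℕ → ℕ}

theorem minDeg_HVa_partHna {n : ℕ} (hk : 0 < k) (hr : 0 < r)
    (hsum : ∑ i ∈ range r, a i = k - 1) (hn : 0 < n) (hdvd : r * k ∣ n) :
    (minDeg (HVa r (partHna k r n a) a) : ℝ) =
      (range r).inf' (nonempty_range_iff.mpr hr.ne')
        (partDegree (range r) a (partSize k r n a)) := by
  have hsize := sum_partSize hk hr hsum hdvd
  have hne (l : ℕ) (hl : l ∈ range r) : (partHna k r n a l).Nonempty := by
    rw [← card_pos, card_partHna hl hsize]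
    exact partSize_pos hk hr hn hdvd l
  rw [minDeg_HVa (pairwise_disjoint_partHna.set_pairwise _) (biUnion_partHna hsize) hne
    (nonempty_range_iff.mpr hr.ne')]
  refine inf'_congr _ rfl fun l hl => ?_
  rw [partDegree, partDegree, card_partHna hl hsize]
  congr 1
  refine sum_congr rfl fun i _ => congrArg _ (prod_congr rfl fun j hj => ?_)
  rw [card_partHna hj hsize]

theorem inf'_degreeDensity_partDensity (hk : 0 < k) (hr : 0 < r)
    (hmin : ∀ i < r, a 0 ≤ a i) :
    (range r).inf' (nonempty_range_iff.mpr hr.ne')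
      (degreeDensity (range r) a (partDensity k r a)) =
      degreeDensity (range r) a (partDensity k r a) 0 := by
  refine le_antisymm (inf'_le _ (mem_range.mpr hr)) (le_inf' _ _ fun l hl => ?_)
  have h := degreeDensity_le_of_minimal (t := (r : ℝ) * k) (by positivity) (mem_range.mpr hr)
    (fun j hj => hmin j (mem_range.mp hj)) hl
  rwa [card_range] at h

theorem tendsto_minDeg_div_pow (hk : 0 < k) (hr : 0 < r) (hmin : ∀ i < r, a 0 ≤ a i)
    (hsum : ∑ i ∈ range r, a i = k - 1) :
    Tendsto (fun n => (minDeg (HVa r (partHna k r n a) a) : ℝ) / (n : ℝ) ^ (k - 1))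
      (atTop ⊓ 𝓟 {n | r * k ∣ n}) (𝓝 (degreeDensity (range r) a (partDensity k r a) 0)) := by
  have hdensity (l : ℕ) : partDensity k r a l ≠ 0 := by
    unfold partDensity
    positivity
  have hparts (l : ℕ) (hl : l ∈ range r) :
      Tendsto (fun n => partDegree (range r) a (partSize k r n a) l / (n : ℝ) ^ (k - 1))
        (atTop ⊓ 𝓟 {n | r * k ∣ n}) (𝓝 (degreeDensity (range r) a (partDensity k r a) l)) := by
    rw [← hsum]
    exact tendsto_partDegree_div_pow a
      (fun j _ => (tendsto_partSize_atTop hk hr j).mono_left inf_le_left)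
      (fun j _ => tendsto_partSize_div hk hr j) hl (hdensity l)
  rw [← inf'_degreeDensity_partDensity hk hr hmin]
  refine (Tendsto.finset_inf'_nhds_apply _ hparts).congr' ?_
  filter_upwards [eventually_pos_and_dvd (r * k)] with n ⟨hn, hdvd⟩
  rw [minDeg_HVa_partHna hk hr hsum hn hdvd]
  exact (map_finset_inf' (OrderIso.divRight₀ ((n : ℝ) ^ (k - 1)) (by positivity)) _ _).symm

theorem degreeDensity_div_eq_gfun (hk : 0 < k) (hr : 0 < r) :
    degreeDensity (range r) a (partDensity k r a) 0 / (1 / (k - 1).factorial) = gfun k r a := by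
  have herase : (range r).erase 0 = Ico 1 r := by grind
  have hterm (i : ℕ) : partDensity k r a i / ((a i : ℝ) + 1) =
      ((r * a i + 1 : ℕ) : ℝ) / ((a i + 1 : ℕ) : ℝ) / (r * k) := by
    rw [partDensity]
    push_cast
    rw [div_right_comm]
  simp only [degreeDensity, gfun, herase, hterm, ← sum_div, prod_div_distrib]
  simp only [partDensity]
  push_cast
  field_simp

end MinimumDegree

section Maximum

theorem gfun_congr {k r : ℕ} (hr : 0 < r) {a b : ℕ → ℕ} (h : ∀ i < r, a i = b i) :
    gfun k r a = gfun k r b := by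
  have hIco : ∀ i ∈ Ico 1 r, a i = b i := fun i hi => h i (mem_Ico.mp hi).2
  have hrange : ∀ i ∈ range r, a i = b i := fun i hi => h i (mem_range.mp hi)
  simp +contextual only [gfun, h 0 hr, hIco, hrange]

theorem finite_setOf_gfun (k : ℕ) {r : ℕ} (hr : 0 < r) :
    {x : ℝ | ∃ b : ℕ → ℕ, IsVec k r b ∧ x = gfun k r b}.Finite := by
  refine ((piAntidiag (range r) (k - 1)).finite_toSet.image (gfun k r)).subset ?_
  rintro _ ⟨b, hb, rfl⟩
  refine ⟨(range r).piecewise b 0, ?_, gfun_congr hr fun i hi => by simp [hi]⟩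
  rw [mem_coe, mem_piAntidiag, ← hb.2]
  refine ⟨sum_congr rfl fun i hi => piecewise_eq_of_mem _ _ _ hi, fun i hi => ?_⟩
  by_contra hmem
  exact hi (piecewise_eq_of_notMem _ _ _ hmem)

theorem exists_isVec (k : ℕ) {r : ℕ} (hr : 0 < r) : ∃ b, IsVec k r b := by
  refine ⟨Pi.single (r - 1) (k - 1), fun i j hij hj => ?_, ?_⟩
  · rcases eq_or_ne i (r - 1) with rfl | hi
    · rw [show j = r - 1 by omega]
    · simp [hi]
  · rw [sum_pi_single', if_pos (mem_range.mpr (by omega))]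

theorem isGreatest_gThr (k : ℕ) {r : ℕ} (hr : 0 < r) :
    IsGreatest {x : ℝ | ∃ b : ℕ → ℕ, IsVec k r b ∧ x = gfun k r b} (gThr k r) := by
  have hfinite := finite_setOf_gfun k hr
  obtain ⟨b, hb⟩ := exists_isVec k hr
  exact ⟨Set.Nonempty.csSup_mem ⟨_, b, hb, rfl⟩ hfinite, fun _ hx => le_csSup hfinite.bddAbove hx⟩

end Maximum

theorem min_degree_limit_general (k r : ℕ) (hk : 0 < k) (hr : 0 < r) (a : ℕ → ℕ)
    (hmin : ∀ i < r, a 0 ≤ a i) (hsum : ∑ i ∈ range r, a i = k - 1) :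
    Tendsto
      (fun n : ℕ => (minDeg (HVa r (partHna k r n a) a) : ℝ) / (((n - 1).choose (k - 1) : ℕ) : ℝ))
      (atTop ⊓ 𝓟 {n : ℕ | r * k ∣ n}) (𝓝 (gfun k r a)) ∧
    IsGreatest {x : ℝ | ∃ b : ℕ → ℕ, IsVec k r b ∧ x = gfun k r b} (gThr k r) := by
  refine ⟨?_, isGreatest_gThr k hr⟩
  rw [← degreeDensity_div_eq_gfun hk hr]
  refine ((tendsto_minDeg_div_pow hk hr hmin hsum).div
    ((tendsto_choose_pred_div_pow (k - 1)).mono_left inf_le_left) (by positivity)).congr' ?_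
  filter_upwards [eventually_pos_and_dvd (r * k)] with n ⟨hn, _⟩
  exact div_div_div_cancel_right₀ (by positivity) _ _

theorem min_degree_limit (k r : ℕ) (hk : 3 ≤ k) (hr : 2 ≤ r) (a : ℕ → ℕ) (ha : IsVec k r a) :
    Filter.Tendsto
      (fun n : ℕ => (minDeg (HVa r (partHna k r n a) a) : ℝ) / (((n - 1).choose (k - 1) : ℕ) : ℝ))
      (Filter.atTop ⊓ Filter.principal {n : ℕ | r * k ∣ n}) (nhds (gfun k r a)) ∧
    IsGreatest {x : ℝ | ∃ b : ℕ → ℕ, IsVec k r b ∧ x = gfun k r b} (gThr k r) := by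
  exact min_degree_limit_general k r (by omega) (by omega) a
    (fun i hi => ha.1 0 i (Nat.zero_le i) hi) ha.2
end
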